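/- arXiv:1612.04472 — 5 statements merged into one kernel-verified Lean document; each statement's English description precedes it below -/
import Mathlib

section
/- Let n ≥ 1, let A be a symmetric (n+1)×(n+1) real matrix with A_ii = 0 for all i, and let a = (a_1,…,a_{n+1}) with a_i > 0. For x in the interior Δ_n° of the simplex set x_{n+1} := 1 − Σ_{i=1}^n x_i, g^{ij}(x) := −A_{ij} x_i x_j + δ_{ij} x_i Σ_{k=1}^{n+1} A_{ik} x_k, and b^i(x) := −x_i Σ_{j=1}^{n+1} A_{ij} a_j + a_i Σ_{j=1}^{n+1} A_{ij} x_j, and define the second-order differential operator L f(x) := Σ_{i,j=1}^n g^{ij}(x) ∂_i∂_j f(x) + Σ_{i=1}^n b^i(x) ∂_i f(x). Let μ_a be the measure on Δ_n° with density x_1^{a_1−1}⋯x_n^{a_n−1}(1 − Σ_{i=1}^n x_i)^{a_{n+1}−1} with respect to Lebesgue measure. Then L is symmetric with respect to μ_a: for all smooth functions f, g compactly supported in Δ_n°, ∫ f (L g) dμ_a = ∫ g (L f) dμ_a. -/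
open Finset MeasureTheory

/-- Partial derivative `∂_i f` on `ℝ^n`. -/
noncomputable def pderiv2 {n : ℕ} (i : Fin n) (f : (Fin n → ℝ) → ℝ) (x : Fin n → ℝ) : ℝ :=
  fderiv ℝ f x (Pi.single i 1)

/-- The extended coordinate `x_{n+1} = 1 - Σ x_i` appended to `x`. -/
noncomputable def xext2 {n : ℕ} (x : Fin n → ℝ) : Fin (n + 1) → ℝ :=
  Fin.snoc x (1 - ∑ m : Fin n, x m)

/-- The co-metric coefficients `g^{ij}` of the Dirichlet model on the simplex. -/
noncomputable def gcoef2 {n : ℕ} (A : Fin (n + 1) → Fin (n + 1) → ℝ)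
    (x : Fin n → ℝ) (i j : Fin n) : ℝ :=
  -(A i.castSucc j.castSucc) * x i * x j
    + (if i = j then x i * ∑ k : Fin (n + 1), A i.castSucc k * xext2 x k else 0)

/-- The drift coefficients `b^i` of the Dirichlet model on the simplex. -/
noncomputable def bcoef2 {n : ℕ} (A : Fin (n + 1) → Fin (n + 1) → ℝ)
    (a : Fin (n + 1) → ℝ) (x : Fin n → ℝ) (i : Fin n) : ℝ :=
  -(x i) * (∑ j : Fin (n + 1), A i.castSucc j * a j)
    + a i.castSucc * ∑ j : Fin (n + 1), A i.castSucc j * xext2 x j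

/-- The diffusion operator `L_{A,a}` on the simplex. -/
noncomputable def Lop2 {n : ℕ} (A : Fin (n + 1) → Fin (n + 1) → ℝ)
    (a : Fin (n + 1) → ℝ) (f : (Fin n → ℝ) → ℝ) (x : Fin n → ℝ) : ℝ :=
  (∑ i : Fin n, ∑ j : Fin n, gcoef2 A x i j * pderiv2 i (pderiv2 j f) x)
    + ∑ i : Fin n, bcoef2 A a x i * pderiv2 i f x

/-- The open simplex `Δ_n°`. -/
def simplexInterior2 (n : ℕ) : Set (Fin n → ℝ) :=
  {x | (∀ i, 0 < x i) ∧ ∑ i, x i < 1}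

/-- The Dirichlet measure `μ_a` (unnormalized) on the open simplex. -/
noncomputable def dirichletMeas2 {n : ℕ} (a : Fin (n + 1) → ℝ) : Measure (Fin n → ℝ) :=
  (volume.restrict (simplexInterior2 n)).withDensity fun x =>
    ENNReal.ofReal ((∏ i : Fin n, x i ^ (a i.castSucc - 1))
      * (1 - ∑ i, x i) ^ (a (Fin.last n) - 1))
theorem pderiv2_mul {n : ℕ} (i : Fin n) {u v : (Fin n → ℝ) → ℝ} {x : Fin n → ℝ}
    (hu : DifferentiableAt ℝ u x) (hv : DifferentiableAt ℝ v x) :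
    pderiv2 i (fun y => u y * v y) x = u x * pderiv2 i v x + pderiv2 i u x * v x := by
  simp [pderiv2, fderiv_fun_mul hu hv, mul_comm]

theorem pderiv2_sum {n : ℕ} (i : Fin n) {ι : Type*} (s : Finset ι)
    {u : ι → (Fin n → ℝ) → ℝ} {x : Fin n → ℝ} (hu : ∀ k ∈ s, DifferentiableAt ℝ (u k) x) :
    pderiv2 i (fun y => ∑ k ∈ s, u k y) x = ∑ k ∈ s, pderiv2 i (u k) x := by
  simp [pderiv2, fderiv_fun_sum hu]

theorem pderiv2_add {n : ℕ} (i : Fin n) {u v : (Fin n → ℝ) → ℝ} {x : Fin n → ℝ}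
    (hu : DifferentiableAt ℝ u x) (hv : DifferentiableAt ℝ v x) :
    pderiv2 i (fun y => u y + v y) x = pderiv2 i u x + pderiv2 i v x := by
  simp [pderiv2, fderiv_fun_add hu hv]

theorem pderiv2_sub {n : ℕ} (i : Fin n) {u v : (Fin n → ℝ) → ℝ} {x : Fin n → ℝ}
    (hu : DifferentiableAt ℝ u x) (hv : DifferentiableAt ℝ v x) :
    pderiv2 i (fun y => u y - v y) x = pderiv2 i u x - pderiv2 i v x := by
  simp [pderiv2, fderiv_fun_sub hu hv]

theorem pderiv2_const {n : ℕ} (i : Fin n) (c : ℝ) (x : Fin n → ℝ) :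
    pderiv2 i (fun _ => c) x = 0 := by
  simp [pderiv2]

theorem pderiv2_coord {n : ℕ} (i j : Fin n) (x : Fin n → ℝ) :
    pderiv2 i (fun y => y j) x = if j = i then 1 else 0 := by
  have h : HasFDerivAt (fun y : Fin n → ℝ => y j)
      (ContinuousLinearMap.proj (R := ℝ) (φ := fun _ : Fin n => ℝ) j) x :=
    hasFDerivAt_apply j x
  simp [pderiv2, h.fderiv, Pi.single_apply]

theorem contDiff_pderiv2 {n : ℕ} (i : Fin n) {f : (Fin n → ℝ) → ℝ}
    (hf : ContDiff ℝ (⊤ : ℕ∞) f) : ContDiff ℝ (⊤ : ℕ∞) (pderiv2 i f) := by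
  unfold pderiv2
  exact (hf.fderiv_right (m := ((⊤ : ℕ∞) : WithTop ℕ∞)) (by simp)).clm_apply contDiff_const

theorem xext2_castSucc {n : ℕ} (x : Fin n → ℝ) (i : Fin n) : xext2 x i.castSucc = x i := by
  simp [xext2]

theorem xext2_last {n : ℕ} (x : Fin n → ℝ) : xext2 x (Fin.last n) = 1 - ∑ m, x m := by
  simp [xext2]

theorem contDiff_xext2 {n : ℕ} (k : Fin (n + 1)) :
    ContDiff ℝ (⊤ : ℕ∞) (fun x : Fin n → ℝ => xext2 x k) := by
  induction k using Fin.lastCases with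
  | last => simp only [xext2_last]; fun_prop
  | cast i => simp only [xext2_castSucc]; fun_prop

theorem pderiv2_xext2 {n : ℕ} (i : Fin n) (k : Fin (n + 1)) (x : Fin n → ℝ) :
    pderiv2 i (fun y => xext2 y k) x
      = (if k = i.castSucc then 1 else 0) - (if k = Fin.last n then 1 else 0) := by
  induction k using Fin.lastCases with
  | last =>
    simp only [xext2_last]
    rw [pderiv2_sub i (by fun_prop) (by fun_prop), pderiv2_const,
      pderiv2_sum i _ (by intros; fun_prop)]
    simp [pderiv2_coord, (Fin.castSucc_lt_last i).ne']
  | cast j =>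
    simp only [xext2_castSucc]
    simp [pderiv2_coord, (Fin.castSucc_lt_last j).ne]

theorem xext2_pos {n : ℕ} {x : Fin n → ℝ} (hx : x ∈ simplexInterior2 n) (k : Fin (n + 1)) :
    0 < xext2 x k := by
  induction k using Fin.lastCases with
  | last => rw [xext2_last]; linarith [hx.2]
  | cast i => rw [xext2_castSucc]; exact hx.1 i

theorem isOpen_simplexInterior2 (n : ℕ) : IsOpen (simplexInterior2 n) := by
  have h : simplexInterior2 n = (⋂ i, {x | 0 < x i}) ∩ {x | ∑ i, x i < 1} := by
    ext x; simp [simplexInterior2]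
  rw [h]
  exact (isOpen_iInter_of_finite fun i => isOpen_lt continuous_const (continuous_apply i)).inter
    (isOpen_lt (by fun_prop) continuous_const)

/-- The Dirichlet density `∏ x_k^{a_k - 1}`, the product running over all extended coordinates. -/
noncomputable def dirichletDensity {n : ℕ} (a : Fin (n + 1) → ℝ) (x : Fin n → ℝ) : ℝ :=
  ∏ k, xext2 x k ^ (a k - 1)

theorem contDiffAt_dirichletDensity {n : ℕ} (a : Fin (n + 1) → ℝ) {x : Fin n → ℝ}
    (hx : x ∈ simplexInterior2 n) : ContDiffAt ℝ (⊤ : ℕ∞) (dirichletDensity a) x := by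
  unfold dirichletDensity
  exact contDiffAt_prod fun k _ =>
    (contDiff_xext2 k).contDiffAt.rpow_const_of_ne (xext2_pos hx k).ne'

theorem pderiv2_dirichletDensity {n : ℕ} (a : Fin (n + 1) → ℝ) {x : Fin n → ℝ}
    (hx : x ∈ simplexInterior2 n) (i : Fin n) :
    pderiv2 i (dirichletDensity a) x = dirichletDensity a x *
      ((a i.castSucc - 1) / x i - (a (Fin.last n) - 1) / xext2 x (Fin.last n)) := by
  have hd : ∀ k, HasFDerivAt (fun y : Fin n → ℝ => xext2 y k)
      (fderiv ℝ (fun y : Fin n → ℝ => xext2 y k) x) x := fun k =>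
    ((contDiff_xext2 k).differentiable (by simp) x).hasFDerivAt
  have hlog := HasFDerivAt.fun_sum (u := univ) (x := x) fun k _ =>
    ((hd k).log (xext2_pos hx k).ne').const_mul (a k - 1)
  have heq : dirichletDensity a =ᶠ[nhds x]
      fun y => Real.exp (∑ k, (a k - 1) * Real.log (xext2 y k)) := by
    filter_upwards [(isOpen_simplexInterior2 n).mem_nhds hx] with y hy
    rw [Real.exp_sum]
    refine prod_congr rfl fun k _ => ?_
    rw [Real.rpow_def_of_pos (xext2_pos hy k), mul_comm]
  have hp : ∀ k, fderiv ℝ (fun y : Fin n → ℝ => xext2 y k) x (Pi.single i 1)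
      = (if k = i.castSucc then 1 else 0) - (if k = Fin.last n then 1 else 0) :=
    fun k => pderiv2_xext2 i k x
  rw [pderiv2, heq.fderiv_eq, hlog.exp.fderiv, heq.eq_of_nhds]
  simp only [_root_.smul_apply, _root_.sum_apply, hp, smul_eq_mul,
    mul_sub, mul_ite, mul_one, mul_zero, sum_sub_distrib, sum_ite_eq', mem_univ, if_true,
    xext2_castSucc]
  ring

theorem contDiff_gcoef2 {n : ℕ} (A : Fin (n + 1) → Fin (n + 1) → ℝ) (i j : Fin n) :
    ContDiff ℝ (⊤ : ℕ∞) (fun x => gcoef2 A x i j) := by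
  have := contDiff_xext2 (n := n)
  unfold gcoef2
  split_ifs <;> fun_prop

theorem contDiff_bcoef2 {n : ℕ} (A : Fin (n + 1) → Fin (n + 1) → ℝ) (a : Fin (n + 1) → ℝ)
    (i : Fin n) : ContDiff ℝ (⊤ : ℕ∞) (fun x => bcoef2 A a x i) := by
  have := contDiff_xext2 (n := n)
  unfold bcoef2
  fun_prop

theorem contDiff_Lop2 {n : ℕ} (A : Fin (n + 1) → Fin (n + 1) → ℝ) (a : Fin (n + 1) → ℝ)
    {f : (Fin n → ℝ) → ℝ} (hf : ContDiff ℝ (⊤ : ℕ∞) f) :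
    ContDiff ℝ (⊤ : ℕ∞) (Lop2 A a f) := by
  unfold Lop2
  exact (ContDiff.sum fun i _ => ContDiff.sum fun j _ =>
    (contDiff_gcoef2 A i j).mul (contDiff_pderiv2 i (contDiff_pderiv2 j hf))).add
    (ContDiff.sum fun i _ => (contDiff_bcoef2 A a i).mul (contDiff_pderiv2 i hf))

theorem gcoef2_comm {n : ℕ} {A : Fin (n + 1) → Fin (n + 1) → ℝ} (hsymm : ∀ i j, A i j = A j i)
    (x : Fin n → ℝ) (i j : Fin n) : gcoef2 A x i j = gcoef2 A x j i := by
  by_cases h : i = j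
  · rw [h]
  · simp only [gcoef2, h, Ne.symm h, if_false, hsymm i.castSucc]
    ring

theorem pderiv2_gcoef2 {n : ℕ} {A : Fin (n + 1) → Fin (n + 1) → ℝ} (hdiag : ∀ i, A i i = 0)
    (x : Fin n → ℝ) (i j : Fin n) :
    pderiv2 i (fun y => gcoef2 A y i j) x = -(A i.castSucc j.castSucc) * x j
      + if i = j then (∑ k, A i.castSucc k * xext2 x k) - x i * A i.castSucc (Fin.last n)
        else 0 := by
  have hx : ∀ k, DifferentiableAt ℝ (fun y : Fin n → ℝ => xext2 y k) x := fun k =>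
    (contDiff_xext2 k).differentiable (by simp) x
  have hquad : pderiv2 i (fun y => -(A i.castSucc j.castSucc) * y i * y j) x
      = -(A i.castSucc j.castSucc) * x j := by
    rw [pderiv2_mul i (by fun_prop) (by fun_prop), pderiv2_mul i (by fun_prop) (by fun_prop),
      pderiv2_const, pderiv2_coord, pderiv2_coord]
    by_cases h : j = i
    · subst h; simp [hdiag]
    · simp [h]
  by_cases h : i = j
  · subst h
    simp only [gcoef2, if_true]
    rw [pderiv2_add i (by fun_prop) (by fun_prop), hquad,
      pderiv2_mul i (by fun_prop) (by fun_prop), pderiv2_coord,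
      pderiv2_sum i _ (by intros; fun_prop)]
    have hk : ∀ k, pderiv2 i (fun y => A i.castSucc k * xext2 y k) x
        = A i.castSucc k *
          ((if k = i.castSucc then 1 else 0) - (if k = Fin.last n then 1 else 0)) := fun k => by
      rw [pderiv2_mul i (by fun_prop) (hx k), pderiv2_const, pderiv2_xext2]; ring
    simp only [hk, mul_sub, mul_ite, mul_one, mul_zero, sum_sub_distrib, sum_ite_eq', mem_univ,
      if_true, hdiag]
    ring
  · simp only [gcoef2, h, if_false, add_zero, hquad]

/-- The drift is the divergence of the co-metric weighted by the Dirichlet density. -/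
theorem sum_pderiv2_dirichletDensity_mul_gcoef2 {n : ℕ} {A : Fin (n + 1) → Fin (n + 1) → ℝ}
    (hsymm : ∀ i j, A i j = A j i) (hdiag : ∀ i, A i i = 0) (a : Fin (n + 1) → ℝ)
    {x : Fin n → ℝ} (hx : x ∈ simplexInterior2 n) (j : Fin n) :
    ∑ i, pderiv2 i (fun y => dirichletDensity a y * gcoef2 A y i j) x
      = dirichletDensity a x * bcoef2 A a x j := by
  have hl := (xext2_pos hx (Fin.last n)).ne'
  have hterm : ∀ i, pderiv2 i (fun y => dirichletDensity a y * gcoef2 A y i j) x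
      = dirichletDensity a x * (-(x j) * (A j.castSucc i.castSucc * a i.castSucc)
        + (a (Fin.last n) - 1) / xext2 x (Fin.last n) * x j *
            (A j.castSucc i.castSucc * x i)
        + if i = j then (∑ k, A j.castSucc k * xext2 x k) * a j.castSucc
            - x j * A j.castSucc (Fin.last n)
            - (a (Fin.last n) - 1) / xext2 x (Fin.last n) * x j *
              (∑ k, A j.castSucc k * xext2 x k) else 0) := by
    intro i
    have hi := (hx.1 i).ne'
    rw [pderiv2_mul i ((contDiffAt_dirichletDensity a hx).differentiableAt (by simp))
      ((contDiff_gcoef2 A i j).differentiable (by simp) x), pderiv2_gcoef2 hdiag,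
      pderiv2_dirichletDensity a hx, hsymm j.castSucc i.castSucc]
    by_cases h : i = j
    · subst h
      simp only [gcoef2, if_true, hdiag]
      field_simp
      ring
    · simp only [gcoef2, h, if_false]
      field_simp
      ring
  simp only [hterm, ← mul_sum, sum_add_distrib, sum_ite_eq', mem_univ, if_true, bcoef2]
  simp only [Fin.sum_univ_castSucc (n := n), xext2_castSucc]
  field_simp
  ring

theorem integral_pderiv2_eq_zero {n : ℕ} (i : Fin n) {F : (Fin n → ℝ) → ℝ}
    (hF : ContDiff ℝ (⊤ : ℕ∞) F) (hc : HasCompactSupport F) : ∫ x, pderiv2 i F x = 0 := by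
  have hint : Integrable (pderiv2 i F) :=
    (contDiff_pderiv2 i hF).continuous.integrable_of_hasCompactSupport (hc.fderiv_apply ℝ _)
  have := integral_mul_fderiv_eq_neg_fderiv_mul_of_integrable (μ := volume)
    (f := fun _ : Fin n → ℝ => (1 : ℝ)) (g := F) (v := Pi.single i 1) (by simp)
    (by simp only [one_mul]; exact hint) (by simpa using hF.continuous.integrable_of_hasCompactSupport hc)
    (by simp) (fun x _ => hF.differentiable (by simp) x)
  simpa [pderiv2] using this

theorem contDiff_dirichletDensity_mul {n : ℕ} (a : Fin (n + 1) → ℝ) {F : (Fin n → ℝ) → ℝ}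
    (hF : ContDiff ℝ (⊤ : ℕ∞) F) (hs : tsupport F ⊆ simplexInterior2 n) :
    ContDiff ℝ (⊤ : ℕ∞) (fun x => dirichletDensity a x * F x) := by
  refine contDiff_iff_contDiffAt.mpr fun x => ?_
  by_cases hx : x ∈ tsupport F
  · exact (contDiffAt_dirichletDensity a (hs hx)).mul hF.contDiffAt
  · refine (contDiffAt_const (c := (0 : ℝ))).congr_of_eventuallyEq ?_
    filter_upwards [notMem_tsupport_iff_eventuallyEq.mp hx] with y hy
    simp [hy]

theorem integral_dirichletMeas2 {n : ℕ} (a : Fin (n + 1) → ℝ) {F : (Fin n → ℝ) → ℝ}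
    (hs : tsupport F ⊆ simplexInterior2 n) :
    ∫ x, F x ∂(dirichletMeas2 a) = ∫ x, dirichletDensity a x * F x := by
  have hm := (isOpen_simplexInterior2 n).measurableSet
  rw [dirichletMeas2, integral_withDensity_eq_integral_toReal_smul (by fun_prop)
    (by simp), ← setIntegral_eq_integral_of_forall_compl_eq_zero (s := simplexInterior2 n)
    (f := fun x => dirichletDensity a x * F x)]
  · refine setIntegral_congr_fun hm fun x hx => ?_
    have hd : (∏ i : Fin n, x i ^ (a i.castSucc - 1)) * (1 - ∑ i, x i) ^ (a (Fin.last n) - 1)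
        = dirichletDensity a x := by
      simp [dirichletDensity, Fin.prod_univ_castSucc, xext2_castSucc, xext2_last]
    have hpos : 0 ≤ dirichletDensity a x :=
      prod_nonneg fun k _ => Real.rpow_nonneg (xext2_pos hx k).le _
    simp only [hd, ENNReal.toReal_ofReal hpos, smul_eq_mul]
  · intro x hx
    rw [image_eq_zero_of_notMem_tsupport fun h => hx (hs h), mul_zero]

/-- Green's identity for `Lop2`: the antisymmetric part is a divergence. -/
theorem dirichletDensity_mul_Lop2_sub {n : ℕ} {A : Fin (n + 1) → Fin (n + 1) → ℝ}
    (hsymm : ∀ i j, A i j = A j i) (hdiag : ∀ i, A i i = 0) (a : Fin (n + 1) → ℝ)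
    {f g : (Fin n → ℝ) → ℝ} (hf : ContDiff ℝ (⊤ : ℕ∞) f) (hg : ContDiff ℝ (⊤ : ℕ∞) g)
    {x : Fin n → ℝ} (hx : x ∈ simplexInterior2 n) :
    dirichletDensity a x * (f x * Lop2 A a g x) - dirichletDensity a x * (g x * Lop2 A a f x)
      = ∑ i, ∑ j, pderiv2 i (fun y => dirichletDensity a y * gcoef2 A y i j *
          (f y * pderiv2 j g y - g y * pderiv2 j f y)) x := by
  have hfd := hf.differentiable (by simp) x
  have hgd := hg.differentiable (by simp) x
  have hfd' : ∀ j, DifferentiableAt ℝ (pderiv2 j f) x := fun j =>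
    (contDiff_pderiv2 j hf).differentiable (by simp) x
  have hgd' : ∀ j, DifferentiableAt ℝ (pderiv2 j g) x := fun j =>
    (contDiff_pderiv2 j hg).differentiable (by simp) x
  have hw : ∀ i j, DifferentiableAt ℝ (fun y => dirichletDensity a y * gcoef2 A y i j) x :=
    fun i j => ((contDiffAt_dirichletDensity a hx).differentiableAt (by simp)).mul
      ((contDiff_gcoef2 A i j).differentiable (by simp) x)
  have hterm : ∀ i j, pderiv2 i (fun y => dirichletDensity a y * gcoef2 A y i j *
          (f y * pderiv2 j g y - g y * pderiv2 j f y)) x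
      = pderiv2 i (fun y => dirichletDensity a y * gcoef2 A y i j) x *
          (f x * pderiv2 j g x - g x * pderiv2 j f x)
        + (dirichletDensity a x * f x * (gcoef2 A x i j * pderiv2 i (pderiv2 j g) x)
          - dirichletDensity a x * g x * (gcoef2 A x i j * pderiv2 i (pderiv2 j f) x))
        + dirichletDensity a x * (gcoef2 A x i j * (pderiv2 i f x * pderiv2 j g x)
          - gcoef2 A x i j * (pderiv2 j f x * pderiv2 i g x)) := by
    intro i j
    rw [pderiv2_mul i (hw i j) ((hfd.fun_mul (hgd' j)).fun_sub (hgd.fun_mul (hfd' j))),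
      pderiv2_sub i (hfd.fun_mul (hgd' j)) (hgd.fun_mul (hfd' j)), pderiv2_mul i hfd (hgd' j),
      pderiv2_mul i hgd (hfd' j)]
    ring
  have hcross : ∑ i, ∑ j, gcoef2 A x i j * (pderiv2 j f x * pderiv2 i g x)
      = ∑ i, ∑ j, gcoef2 A x i j * (pderiv2 i f x * pderiv2 j g x) := by
    rw [sum_comm]
    refine sum_congr rfl fun i _ => sum_congr rfl fun j _ => ?_
    rw [gcoef2_comm hsymm x]
  have hdrift : ∑ i, ∑ j, pderiv2 i (fun y => dirichletDensity a y * gcoef2 A y i j) x *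
        (f x * pderiv2 j g x - g x * pderiv2 j f x)
      = dirichletDensity a x * f x * (∑ j, bcoef2 A a x j * pderiv2 j g x)
        - dirichletDensity a x * g x * ∑ j, bcoef2 A a x j * pderiv2 j f x := by
    rw [sum_comm, mul_sum, mul_sum, ← sum_sub_distrib]
    refine sum_congr rfl fun j _ => ?_
    rw [← sum_mul, sum_pderiv2_dirichletDensity_mul_gcoef2 hsymm hdiag a hx]
    ring
  simp only [hterm, sum_add_distrib, hdrift, ← mul_sum, sum_sub_distrib, hcross, Lop2]
  ring

/-- The Dirichlet operator `L_{A,a}` is symmetric with respect to the Dirichlet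
measure `μ_a` on the open simplex. -/
theorem stmt_2 (n : ℕ) (hn : 1 ≤ n)
    (A : Fin (n + 1) → Fin (n + 1) → ℝ)
    (hsymm : ∀ i j, A i j = A j i)
    (hdiag : ∀ i, A i i = 0)
    (a : Fin (n + 1) → ℝ) (ha : ∀ i, 0 < a i)
    (f g : (Fin n → ℝ) → ℝ)
    (hf : ContDiff ℝ (⊤ : ℕ∞) f) (hg : ContDiff ℝ (⊤ : ℕ∞) g)
    (hfc : HasCompactSupport f) (hgc : HasCompactSupport g)
    (hfs : tsupport f ⊆ simplexInterior2 n)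
    (hgs : tsupport g ⊆ simplexInterior2 n) :
    ∫ x, f x * Lop2 A a g x ∂(dirichletMeas2 a)
      = ∫ x, g x * Lop2 A a f x ∂(dirichletMeas2 a) := by
  have hsub : ∀ {u v : (Fin n → ℝ) → ℝ},
      tsupport (fun x => u x * v x) ⊆ tsupport u := fun {u v} => tsupport_mul_subset_left
  have hint : ∀ {u v : (Fin n → ℝ) → ℝ}, ContDiff ℝ (⊤ : ℕ∞) u → ContDiff ℝ (⊤ : ℕ∞) v →
      HasCompactSupport u → tsupport u ⊆ simplexInterior2 n →
      Integrable (fun x => dirichletDensity a x * (u x * Lop2 A a v x)) :=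
    fun hu hv huc hus =>
      (contDiff_dirichletDensity_mul a (hu.mul (contDiff_Lop2 A a hv))
        (hsub.trans hus)).continuous.integrable_of_hasCompactSupport huc.mul_right.mul_left
  rw [integral_dirichletMeas2 a (hsub.trans hfs), integral_dirichletMeas2 a (hsub.trans hgs),
    ← sub_eq_zero, ← integral_sub (hint hf hg hfc hfs) (hint hg hf hgc hgs)]
  set V : Fin n → Fin n → (Fin n → ℝ) → ℝ := fun i j y =>
    dirichletDensity a y * gcoef2 A y i j * (f y * pderiv2 j g y - g y * pderiv2 j f y) with hV
  have hVeq : ∀ i j, V i j = fun y =>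
      dirichletDensity a y * (f y * (gcoef2 A y i j * pderiv2 j g y))
        - dirichletDensity a y * (g y * (gcoef2 A y i j * pderiv2 j f y)) := by
    intro i j; funext y; simp only [hV]; ring
  have hVd : ∀ i j, ContDiff ℝ (⊤ : ℕ∞) (V i j) := by
    intro i j
    rw [hVeq]
    exact (contDiff_dirichletDensity_mul a
        (hf.mul ((contDiff_gcoef2 A i j).mul (contDiff_pderiv2 j hg))) (hsub.trans hfs)).sub
      (contDiff_dirichletDensity_mul a
        (hg.mul ((contDiff_gcoef2 A i j).mul (contDiff_pderiv2 j hf))) (hsub.trans hgs))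
  have hVc : ∀ i j, HasCompactSupport (V i j) := by
    intro i j
    rw [hVeq]
    exact (hfc.mul_right.mul_left).sub (hgc.mul_right.mul_left)
  have hVz : ∀ i j x, x ∉ simplexInterior2 n → pderiv2 i (V i j) x = 0 := by
    intro i j x hx
    have hz : V i j =ᶠ[nhds x] fun _ => 0 := by
      filter_upwards [notMem_tsupport_iff_eventuallyEq.mp fun h => hx (hfs h),
        notMem_tsupport_iff_eventuallyEq.mp fun h => hx (hgs h)] with y hfy hgy
      simp [hV, hfy, hgy]
    rw [pderiv2, hz.fderiv_eq]
    simp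
  have hgreen : ∀ x, dirichletDensity a x * (f x * Lop2 A a g x)
      - dirichletDensity a x * (g x * Lop2 A a f x) = ∑ i, ∑ j, pderiv2 i (V i j) x := by
    intro x
    by_cases hx : x ∈ simplexInterior2 n
    · exact dirichletDensity_mul_Lop2_sub hsymm hdiag a hf hg hx
    · simp [hVz _ _ x hx, image_eq_zero_of_notMem_tsupport fun h => hx (hfs h),
        image_eq_zero_of_notMem_tsupport fun h => hx (hgs h)]
  have hVi : ∀ i j, Integrable (pderiv2 i (V i j)) := fun i j =>
    (contDiff_pderiv2 i (hVd i j)).continuous.integrable_of_hasCompactSupport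
      ((hVc i j).fderiv_apply ℝ _)
  simp only [hgreen]
  rw [integral_finsetSum _ fun i _ => integrable_finsetSum _ fun j _ => hVi i j]
  refine sum_eq_zero fun i _ => ?_
  rw [integral_finsetSum _ fun j _ => hVi i j]
  exact sum_eq_zero fun j _ => integral_pderiv2_eq_zero i (hVd i j) (hVc i j)
end

section
/- Let n ≥ 1 and a_1, …, a_{n+1} > 0. Then ∫_{Δ_n} x_1^{a_1−1}⋯x_n^{a_n−1}(1 − x_1 − ⋯ − x_n)^{a_{n+1}−1} dx_1⋯dx_n = Γ(a_1)⋯Γ(a_{n+1}) / Γ(a_1 + ⋯ + a_{n+1}), where the integral is with respect to Lebesgue measure on the simplex Δ_n ⊂ ℝ^n. -/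
open Finset MeasureTheory

/-- The beta integral over `[0, t]`, as an interval integral of real functions. -/
theorem intervalIntegral_rpow_mul_sub_rpow {u v t : ℝ} (hu : 0 < u) (hv : 0 < v) (ht : 0 < t) :
    ∫ x in 0..t, x ^ (u - 1) * (t - x) ^ (v - 1) =
      Real.Gamma u * Real.Gamma v / Real.Gamma (u + v) * t ^ (u + v - 1) := by
  have hscaled := Complex.betaIntegral_scaled (u : ℂ) (v : ℂ) ht
  rw [Complex.betaIntegral_eq_Gamma_mul_div _ _ (by simpa) (by simpa)] at hscaled
  have hcast : ∫ x in 0..t, (x : ℂ) ^ ((u : ℂ) - 1) * ((t : ℂ) - x) ^ ((v : ℂ) - 1) =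
      ∫ x in 0..t, ((x ^ (u - 1) * (t - x) ^ (v - 1) : ℝ) : ℂ) := by
    refine intervalIntegral.integral_congr fun x hx => ?_
    rw [Set.uIcc_of_le ht.le] at hx
    simp [Complex.ofReal_cpow hx.1, Complex.ofReal_cpow (sub_nonneg.2 hx.2)]
  rw [hcast, intervalIntegral.integral_ofReal, ← Complex.ofReal_add, Complex.Gamma_ofReal,
    Complex.Gamma_ofReal, Complex.Gamma_ofReal, ← Complex.ofReal_one, ← Complex.ofReal_sub,
    ← Complex.ofReal_cpow ht.le] at hscaled
  rw [mul_comm]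
  exact_mod_cast hscaled

/-- The beta integral over `(0, t)`, as a Lebesgue integral. -/
theorem setLIntegral_Ioo_rpow_mul_sub_rpow {u v t : ℝ} (hu : 0 < u) (hv : 0 < v) (ht : 0 < t) :
    ∫⁻ x in Set.Ioo 0 t, ENNReal.ofReal (x ^ (u - 1) * (t - x) ^ (v - 1)) =
      ENNReal.ofReal
        (Real.Gamma u * Real.Gamma v / Real.Gamma (u + v) * t ^ (u + v - 1)) := by
  have hint := intervalIntegral_rpow_mul_sub_rpow hu hv ht
  rw [intervalIntegral.integral_of_le ht.le, integral_Ioc_eq_integral_Ioo] at hint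
  have hpos : 0 < Real.Gamma u * Real.Gamma v / Real.Gamma (u + v) * t ^ (u + v - 1) := by
    have := Real.Gamma_pos_of_pos hu
    have := Real.Gamma_pos_of_pos hv
    have := Real.Gamma_pos_of_pos (add_pos hu hv)
    positivity
  rw [← hint, ofReal_integral_eq_lintegral_ofReal]
  · by_contra h
    exact hpos.ne' (hint ▸ integral_undef h)
  · refine ae_restrict_of_forall_mem measurableSet_Ioo fun x hx => ?_
    have := hx.1
    have := sub_pos.2 hx.2
    simp only [Pi.zero_apply]
    positivity

theorem measurableSet_scaled_simplex (n : ℕ) (t : ℝ) :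
    MeasurableSet {x : Fin n → ℝ | (∀ i, 0 ≤ x i) ∧ ∑ i, x i ≤ t} := by
  simp only [Set.ofPred_and, Set.ofPred_forall]
  exact ((isClosed_iInter fun i => isClosed_le (by fun_prop) (by fun_prop)).inter
    (isClosed_le (by fun_prop) (by fun_prop))).measurableSet

/-- Slicing a Dirichlet-type integral over a scaled simplex along the first coordinate. -/
theorem setLIntegral_simplex_succ (n : ℕ) (a : Fin (n + 1) → ℝ) (b t : ℝ) :
    ∫⁻ x in {x : Fin (n + 1) → ℝ | (∀ i, 0 ≤ x i) ∧ ∑ i, x i ≤ t},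
        ENNReal.ofReal ((∏ i, x i ^ (a i - 1)) * (t - ∑ i, x i) ^ (b - 1)) =
      ∫⁻ s in Set.Ioo 0 t, ENNReal.ofReal (s ^ (a 0 - 1)) *
        ∫⁻ y in {y : Fin n → ℝ | (∀ i, 0 ≤ y i) ∧ ∑ i, y i ≤ t - s},
          ENNReal.ofReal ((∏ i, y i ^ (a i.succ - 1)) * (t - s - ∑ i, y i) ^ (b - 1)) := by
  have hmeas := measurableSet_scaled_simplex (n + 1) t
  rw [← lintegral_indicator hmeas,
    ← (volume_preserving_piFinSuccAbove (fun _ : Fin (n + 1) => ℝ) 0).symm.lintegral_comp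
      (Measurable.indicator (by fun_prop) hmeas),
    Measure.volume_eq_prod, lintegral_prod, setLIntegral_congr Ioo_ae_eq_Icc,
    ← lintegral_indicator measurableSet_Icc]
  swap
  · exact ((Measurable.indicator (by fun_prop) hmeas).comp
      (MeasurableEquiv.measurable _)).aemeasurable
  refine lintegral_congr fun s => ?_
  by_cases hs : s ∈ Set.Icc 0 t
  · rw [Set.indicator_of_mem hs, ← lintegral_indicator (measurableSet_scaled_simplex n _),
      ← lintegral_const_mul _ (Measurable.indicator (by fun_prop)
        (measurableSet_scaled_simplex n _))]
    refine lintegral_congr fun y => ?_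
    have hmem : (MeasurableEquiv.piFinSuccAbove (fun _ : Fin (n + 1) => ℝ) 0).symm (s, y) ∈
        {x : Fin (n + 1) → ℝ | (∀ i, 0 ≤ x i) ∧ ∑ i, x i ≤ t} ↔
        y ∈ {y : Fin n → ℝ | (∀ i, 0 ≤ y i) ∧ ∑ i, y i ≤ t - s} := by
      simp [MeasurableEquiv.piFinSuccAbove, Fin.forall_fin_succ, Fin.sum_univ_succ, hs.1,
        le_sub_iff_add_le']
    by_cases hy : y ∈ {y : Fin n → ℝ | (∀ i, 0 ≤ y i) ∧ ∑ i, y i ≤ t - s}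
    · rw [Set.indicator_of_mem (hmem.2 hy), Set.indicator_of_mem hy,
        ← ENNReal.ofReal_mul (Real.rpow_nonneg hs.1 _)]
      simp [MeasurableEquiv.piFinSuccAbove, Fin.sum_univ_succ, Fin.prod_univ_succ, mul_assoc,
        sub_sub]
    · rw [Set.indicator_of_notMem (mt hmem.1 hy), Set.indicator_of_notMem hy, mul_zero]
  · rw [Set.indicator_of_notMem hs]
    refine (lintegral_congr fun y => Set.indicator_of_notMem ?_ _).trans lintegral_zero
    rintro ⟨hnonneg, hsum⟩
    simp only [Fin.forall_fin_succ] at hnonneg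
    rw [Fin.sum_univ_succ] at hsum
    have hzero : (MeasurableEquiv.piFinSuccAbove (fun _ : Fin (n + 1) => ℝ) 0).symm (s, y) 0 = s :=
      rfl
    rw [hzero] at hnonneg hsum
    have := Finset.sum_nonneg fun i (_ : i ∈ univ) => hnonneg.2 i
    exact hs ⟨hnonneg.1, by linarith⟩

/-- The Dirichlet integral over the simplex scaled by `t`, as a Lebesgue integral. -/
theorem setLIntegral_simplex_rpow (n : ℕ) (a : Fin n → ℝ) (ha : ∀ i, 0 < a i) {b t : ℝ}
    (hb : 0 < b) (ht : 0 < t) :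
    ∫⁻ x in {x : Fin n → ℝ | (∀ i, 0 ≤ x i) ∧ ∑ i, x i ≤ t},
        ENNReal.ofReal ((∏ i, x i ^ (a i - 1)) * (t - ∑ i, x i) ^ (b - 1)) =
      ENNReal.ofReal ((∏ i, Real.Gamma (a i)) * Real.Gamma b / Real.Gamma (∑ i, a i + b) *
        t ^ (∑ i, a i + b - 1)) := by
  induction n generalizing t with
  | zero =>
    have hG := (Real.Gamma_pos_of_pos hb).ne'
    simp [ht.le, hG, volume_pi]
  | succ n ih =>
    set c : ℝ := ∑ i : Fin n, a i.succ + b with hc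
    have hcpos : 0 < c :=
      add_pos_of_nonneg_of_pos (Finset.sum_nonneg fun i _ => (ha i.succ).le) hb
    have hGc := Real.Gamma_pos_of_pos hcpos
    set K : ℝ := (∏ i : Fin n, Real.Gamma (a i.succ)) * Real.Gamma b / Real.Gamma c with hK
    have hKnonneg : 0 ≤ K := by
      have := Finset.prod_nonneg fun (i : Fin n) (_ : i ∈ univ) =>
        (Real.Gamma_pos_of_pos (ha i.succ)).le
      have := Real.Gamma_pos_of_pos hb
      positivity
    rw [setLIntegral_simplex_succ]
    calc
      _ = ∫⁻ s in Set.Ioo 0 t,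
          ENNReal.ofReal K * ENNReal.ofReal (s ^ (a 0 - 1) * (t - s) ^ (c - 1)) := by
        refine setLIntegral_congr_fun measurableSet_Ioo fun s hs => ?_
        rw [ih (fun i => a i.succ) (fun i => ha i.succ) (sub_pos.2 hs.2),
          ← ENNReal.ofReal_mul (Real.rpow_nonneg hs.1.le _), ← ENNReal.ofReal_mul hKnonneg]
        congr 1
        ring
      _ = _ := by
        rw [lintegral_const_mul _ (by fun_prop),
          setLIntegral_Ioo_rpow_mul_sub_rpow (ha 0) hcpos ht, ← ENNReal.ofReal_mul hKnonneg,
          Fin.prod_univ_succ, Fin.sum_univ_succ, add_assoc, ← hc, hK]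
        congr 1
        field_simp

/-- The normalizing constant of the Dirichlet distribution:
`∫_{Δ_n} Π x_i^{a_i-1} (1-Σx_i)^{a_{n+1}-1} dx = Π Γ(a_i) / Γ(Σ a_i)`. -/
theorem stmt_6 (n : ℕ) (hn : 1 ≤ n) (a : Fin (n + 1) → ℝ) (ha : ∀ i, 0 < a i) :
    ∫ x in {x : Fin n → ℝ | (∀ i, 0 ≤ x i) ∧ ∑ i, x i ≤ 1},
        (∏ i : Fin n, x i ^ (a i.castSucc - 1)) * (1 - ∑ i, x i) ^ (a (Fin.last n) - 1)
      = (∏ k, Real.Gamma (a k)) / Real.Gamma (∑ k, a k) := by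
  rw [integral_eq_lintegral_of_nonneg_ae,
    setLIntegral_simplex_rpow n (fun i => a i.castSucc) (fun i => ha i.castSucc)
      (ha (Fin.last n)) one_pos,
    ← Fin.prod_univ_castSucc (fun k => Real.Gamma (a k)), ← Fin.sum_univ_castSucc,
    Real.one_rpow, mul_one, ENNReal.toReal_ofReal]
  · exact div_nonneg (Finset.prod_nonneg fun k _ => (Real.Gamma_pos_of_pos (ha k)).le)
      (Real.Gamma_nonneg_of_nonneg (Finset.sum_nonneg fun k _ => (ha k).le))
  · refine ae_restrict_of_forall_mem (measurableSet_scaled_simplex n 1) fun x hx => ?_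
    exact mul_nonneg (Finset.prod_nonneg fun i _ => Real.rpow_nonneg (hx.1 i) _)
      (Real.rpow_nonneg (sub_nonneg.2 hx.2) _)
  · exact Measurable.aestronglyMeasurable (by fun_prop)
end

section
/- Let N ≥ 1 and let I_1, …, I_{n+1} be a partition of {1,…,N} into disjoint nonempty sets with |I_i| = p_i. Let σ be the uniform (rotation-invariant) probability measure on the unit sphere S^{N−1} ⊂ ℝ^N, and let T : S^{N−1} → ℝ^n be the map T(y) = (x_1(y), …, x_n(y)) with x_k(y) := Σ_{r ∈ I_k} y_r^2. Then the pushforward measure T_*σ equals the Dirichlet distribution D_{(p_1/2, …, p_{n+1}/2)} on the simplex Δ_n. -/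
open Finset MeasureTheory

/-- The Dirichlet distribution `D_a` on the simplex `Δ_n ⊆ ℝ^n`, as a measure on `ℝ^n` given
by its density with respect to Lebesgue measure. -/
noncomputable def dirichletMeasure7 (n : ℕ) (a : Fin (n + 1) → ℝ) : Measure (Fin n → ℝ) :=
  volume.withDensity fun x =>
    ENNReal.ofReal
      (if (∀ i, 0 ≤ x i) ∧ ∑ i, x i ≤ 1 then
        (Real.Gamma (∑ k, a k) / ∏ k, Real.Gamma (a k))
          * (∏ i : Fin n, x i ^ (a i.castSucc - 1))
          * (1 - ∑ i, x i) ^ (a (Fin.last n) - 1)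
      else 0)

open ProbabilityTheory Measure
open scoped ENNReal RealInnerProductSpace

/-- The density of `dirichletMeasure7`. -/
noncomputable def dirichletPDF (n : ℕ) (a : Fin (n + 1) → ℝ) (x : Fin n → ℝ) : ℝ≥0∞ :=
  ENNReal.ofReal
    (if (∀ i, 0 ≤ x i) ∧ ∑ i, x i ≤ 1 then
      (Real.Gamma (∑ k, a k) / ∏ k, Real.Gamma (a k))
        * (∏ i : Fin n, x i ^ (a i.castSucc - 1))
        * (1 - ∑ i, x i) ^ (a (Fin.last n) - 1)
    else 0)

@[fun_prop]
theorem measurable_dirichletPDF (n : ℕ) (a : Fin (n + 1) → ℝ) :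
    Measurable (dirichletPDF n a) := by
  refine ENNReal.measurable_ofReal.comp (Measurable.ite ?_ (by fun_prop) measurable_const)
  have h (i : Fin n) : MeasurableSet {x : Fin n → ℝ | 0 ≤ x i} :=
    measurableSet_le measurable_const (measurable_pi_apply i)
  rw [Set.ofPred_and, Set.ofPred_forall]
  exact (MeasurableSet.iInter h).inter (measurableSet_le (by fun_prop) measurable_const)

@[fun_prop]
theorem measurable_gammaPDF (a r : ℝ) : Measurable (gammaPDF a r) :=
  (measurable_gammaPDFReal a r).ennreal_ofReal

theorem lintegral_fin_prod_eq_prod {n : ℕ} {g : Fin n → ℝ → ℝ≥0∞} (hg : ∀ i, Measurable (g i)) :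
    ∫⁻ x : Fin n → ℝ, ∏ i, g i (x i) = ∏ i, ∫⁻ u, g i u := by
  induction n with
  | zero => simp [volume_pi]
  | succ n ih =>
    have hprod : Measurable fun x : Fin n → ℝ ↦ ∏ i, g i.succ (x i) :=
      Finset.measurable_prod _ fun i _ ↦ (hg i.succ).comp (measurable_pi_apply i)
    rw [← ((volume_preserving_piFinSuccAbove (fun _ : Fin (n + 1) ↦ ℝ) 0).symm).lintegral_comp
      (by fun_prop), Fin.prod_univ_succ, ← ih (fun i ↦ hg i.succ), volume_eq_prod,
      ← lintegral_prod_mul (hg 0).aemeasurable hprod.aemeasurable]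
    simp [MeasurableEquiv.piFinSuccAbove_symm_apply, Fin.prod_univ_succ]

theorem pi_withDensity_fin {n : ℕ} {g : Fin n → ℝ → ℝ≥0∞} (hg : ∀ i, Measurable (g i))
    [∀ i, SigmaFinite ((volume : Measure ℝ).withDensity (g i))] :
    Measure.pi (fun i ↦ (volume : Measure ℝ).withDensity (g i))
      = (volume : Measure (Fin n → ℝ)).withDensity (fun x ↦ ∏ i, g i (x i)) := by
  refine pi_eq fun s hs ↦ ?_
  rw [withDensity_apply _ (MeasurableSet.univ_pi hs),
    ← lintegral_indicator (MeasurableSet.univ_pi hs)]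
  simp_rw [withDensity_apply _ (hs _), ← lintegral_indicator (hs _)]
  rw [← lintegral_fin_prod_eq_prod fun i ↦ (hg i).indicator (hs i)]
  refine lintegral_congr fun x ↦ ?_
  by_cases hx : x ∈ Set.univ.pi s
  · rw [Set.indicator_of_mem hx]
    exact prod_congr rfl fun i _ ↦ (Set.indicator_of_mem (hx i trivial) _).symm
  · rw [Set.indicator_of_notMem hx]
    simp only [Set.mem_pi, Set.mem_univ, true_imp_iff, not_forall] at hx
    obtain ⟨i, hi⟩ := hx
    exact (prod_eq_zero (mem_univ i) (Set.indicator_of_notMem hi _)).symm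

theorem gammaPDF_mul_prod_gammaPDF_smul {n : ℕ} {a : Fin (n + 1) → ℝ} (ha : ∀ k, 0 < a k) {r : ℝ}
    (hr : 0 < r) {s : ℝ} (hs : 0 < s) (z : Fin n → ℝ) :
    ENNReal.ofReal (s ^ n) * (gammaPDF (a (Fin.last n)) r (s - ∑ i, s * z i)
        * ∏ i : Fin n, gammaPDF (a i.castSucc) r (s * z i))
      = dirichletPDF n a z * gammaPDF (∑ k, a k) r s := by
  by_cases hz : (∀ i, 0 ≤ z i) ∧ ∑ i, z i ≤ 1
  · obtain ⟨hz0, hz1⟩ := hz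
    have h1 : 0 ≤ 1 - ∑ i, z i := by linarith
    have hsub : s - ∑ i, s * z i = s * (1 - ∑ i, z i) := by rw [← mul_sum]; ring
    have hG (k) : 0 < Real.Gamma (a k) := Real.Gamma_pos_of_pos (ha k)
    have hA : 0 < Real.Gamma (∑ k, a k) :=
      Real.Gamma_pos_of_pos (sum_pos (fun k _ ↦ ha k) univ_nonempty)
    have hP : 0 ≤ ∏ i : Fin n, z i ^ (a i.castSucc - 1) :=
      prod_nonneg fun i _ ↦ Real.rpow_nonneg (hz0 i) _
    rw [hsub, gammaPDF_of_nonneg (mul_nonneg hs.le h1), gammaPDF_of_nonneg hs.le,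
      prod_congr rfl fun i _ ↦ gammaPDF_of_nonneg (mul_nonneg hs.le (hz0 i)), dirichletPDF,
      if_pos ⟨hz0, hz1⟩,
      ← ENNReal.ofReal_prod_of_nonneg fun i _ ↦ ?_, ← ENNReal.ofReal_mul ?_,
      ← ENNReal.ofReal_mul (by positivity), ← ENNReal.ofReal_mul ?_]
    · congr 1
      simp_rw [Real.mul_rpow hs.le (hz0 _), Real.mul_rpow hs.le h1, prod_mul_distrib,
        prod_div_distrib]
      have exp_prod : ∏ i : Fin n, Real.exp (-(r * (s * z i)))
          = Real.exp (-(r * (s * ∑ i, z i))) := by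
        rw [← Real.exp_sum, sum_neg_distrib, mul_sum, mul_sum]
      have exp_mul : Real.exp (-(r * (s * (1 - ∑ i, z i)))) * Real.exp (-(r * (s * ∑ i, z i)))
          = Real.exp (-(r * s)) := by
        rw [← Real.exp_add]; ring_nf
      have rate_prod : ∏ i : Fin n, r ^ a i.castSucc = r ^ ∑ i : Fin n, a i.castSucc :=
        (Real.rpow_sum_of_pos hr _ _).symm
      have scale_prod : ∏ i : Fin n, s ^ (a i.castSucc - 1) = s ^ ∑ i : Fin n, (a i.castSucc - 1) :=
        (Real.rpow_sum_of_pos hs _ _).symm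
      have scale_mul : s ^ n * s ^ (a (Fin.last n) - 1) * s ^ (∑ i : Fin n, (a i.castSucc - 1))
          = s ^ (∑ k, a k - 1) := by
        rw [← Real.rpow_natCast, ← Real.rpow_add hs, ← Real.rpow_add hs, Fin.sum_univ_castSucc]
        congr 1
        simp
        ring
      have rate_add : r ^ (∑ k, a k) = r ^ (∑ i : Fin n, a i.castSucc) * r ^ a (Fin.last n) := by
        rw [← Real.rpow_add hr, Fin.sum_univ_castSucc]
      rw [exp_prod, rate_prod, scale_prod, rate_add, ← scale_mul, ← exp_mul,
        Fin.prod_univ_castSucc (fun k ↦ Real.Gamma (a k))]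
      have hΓ : ∏ i : Fin n, Real.Gamma (a i.castSucc) ≠ 0 :=
        prod_ne_zero_iff.2 fun i _ ↦ (hG _).ne'
      have := (hG (Fin.last n)).ne'
      field_simp
    · have : 0 ≤ ∏ k, Real.Gamma (a k) := prod_nonneg fun k _ ↦ (hG k).le
      positivity
    · have := hG (Fin.last n)
      positivity
    · have := hG i.castSucc
      have := hz0 i
      positivity
  · rw [dirichletPDF, if_neg hz, ENNReal.ofReal_zero, zero_mul]
    simp only [mul_eq_zero]
    right
    by_cases hz0 : ∀ i, 0 ≤ z i
    · left
      apply gammaPDF_of_neg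
      rw [← mul_sum]
      have : 1 < ∑ i, z i := not_le.1 fun h ↦ hz ⟨hz0, h⟩
      nlinarith
    · right
      push Not at hz0
      obtain ⟨i, hi⟩ := hz0
      exact prod_eq_zero (mem_univ i) (gammaPDF_of_neg (mul_neg_of_pos_of_neg hs hi))

theorem lintegral_eq_ofReal_pow_mul_lintegral_smul {n : ℕ} {s : ℝ} (hs : 0 < s)
    {h : (Fin n → ℝ) → ℝ≥0∞} (hh : Measurable h) :
    ∫⁻ x, h x = ENNReal.ofReal (s ^ n) * ∫⁻ z, h (s • z) := by
  rw [← lintegral_map hh (measurable_const_smul s), map_addHaar_smul _ hs.ne',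
    lintegral_smul_measure, smul_eq_mul, ← mul_assoc, ← ENNReal.ofReal_mul (by positivity),
    Module.finrank_fin_fun, abs_of_pos (by positivity), mul_inv_cancel₀ (by positivity),
    ENNReal.ofReal_one, one_mul]

/-- Independent Gamma variables with a common rate: the vector of proportions is Dirichlet
distributed and independent of the sum, which is again Gamma distributed. -/
theorem pi_gammaMeasure_map_div_sum_prodMk_sum {n : ℕ} {a : Fin (n + 1) → ℝ} (ha : ∀ k, 0 < a k)
    {r : ℝ} (hr : 0 < r) :
    (Measure.pi fun k ↦ gammaMeasure (a k) r).map
        (fun s ↦ (fun i : Fin n ↦ s i.castSucc / ∑ k, s k, ∑ k, s k))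
      = (dirichletMeasure7 n a).prod (gammaMeasure (∑ k, a k) r) := by
  have hk (k : Fin (n + 1)) : IsProbabilityMeasure (gammaMeasure (a k) r) :=
    isProbabilityMeasure_gammaMeasure (ha k) hr
  have hA : 0 < ∑ k, a k := sum_pos (fun k _ ↦ ha k) univ_nonempty
  have : IsProbabilityMeasure (gammaMeasure (∑ k, a k) r) :=
    isProbabilityMeasure_gammaMeasure hA hr
  unfold gammaMeasure at *
  change _ = (volume.withDensity (dirichletPDF n a)).prod _
  refine ext_of_lintegral _ fun f hf ↦ ?_
  rw [lintegral_map hf (by fun_prop), pi_withDensity_fin (fun k ↦ measurable_gammaPDF _ _),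
    lintegral_withDensity_eq_lintegral_mul _ (by fun_prop) (by fun_prop),
    prod_withDensity (by fun_prop) (by fun_prop),
    lintegral_withDensity_eq_lintegral_mul _ (by fun_prop) hf,
    lintegral_prod_symm' _ (by fun_prop),
    ← ((volume_preserving_piFinSuccAbove (fun _ : Fin (n + 1) ↦ ℝ)
      (Fin.last n)).symm).lintegral_comp (by fun_prop), volume_eq_prod,
    lintegral_prod_symm' _ (by fun_prop)]
  simp only [Pi.mul_apply, MeasurableEquiv.piFinSuccAbove_symm_apply, Fin.prod_univ_castSucc,
    Fin.sum_univ_castSucc (n := n), Fin.insertNthEquiv_last, Fin.snocEquiv, Equiv.coe_fn_mk,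
    Fin.snoc_castSucc, Fin.snoc_last]
  let G (x : Fin n → ℝ) (s : ℝ) : ℝ≥0∞ := (∏ i, gammaPDF (a i.castSucc) r (x i)) *
    gammaPDF (a (Fin.last n)) r (s - ∑ i, x i) * f (fun i ↦ x i / s, s)
  have hG : Measurable (Function.uncurry G) := by fun_prop
  calc
    _ = ∫⁻ x, ∫⁻ s, G x s := by
      refine lintegral_congr fun x ↦ ?_
      rw [← lintegral_sub_right_eq_self _ (∑ i, x i)]
      simp [G]
    _ = ∫⁻ s, ∫⁻ x, G x s := lintegral_lintegral_swap hG.aemeasurable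
    _ = _ := by
      refine lintegral_congr_ae ?_
      filter_upwards [compl_mem_ae_iff.2 (measure_singleton (0 : ℝ))] with s hs0
      rcases lt_or_gt_of_ne hs0 with hs | hs
      · simp only [← Fin.sum_univ_castSucc, gammaPDF_of_neg hs, mul_zero, zero_mul]
        refine lintegral_congr fun x ↦ ?_
        by_cases hx : ∀ i, 0 ≤ x i
        · have : 0 ≤ ∑ i, x i := sum_nonneg fun i _ ↦ hx i
          simp only [G, gammaPDF_of_neg (show s - ∑ i, x i < 0 by linarith), mul_zero, zero_mul]
        · push Not at hx
          obtain ⟨i, hi⟩ := hx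
          have hprod : ∏ i, gammaPDF (a i.castSucc) r (x i) = 0 :=
            prod_eq_zero (mem_univ i) (gammaPDF_of_neg hi)
          simp only [G, hprod, zero_mul]
      · rw [lintegral_eq_ofReal_pow_mul_lintegral_smul hs (by fun_prop),
          ← lintegral_const_mul _ (by fun_prop)]
        refine lintegral_congr fun z ↦ ?_
        have := gammaPDF_mul_prod_gammaPDF_smul ha hr hs z
        rw [← Fin.sum_univ_castSucc, ← this]
        simp only [G, Pi.smul_apply, smul_eq_mul, mul_div_cancel_left₀ _ hs.ne']
        ring

theorem isProbabilityMeasure_dirichletMeasure7 {n : ℕ} {a : Fin (n + 1) → ℝ}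
    (ha : ∀ k, 0 < a k) : IsProbabilityMeasure (dirichletMeasure7 n a) := by
  have (k : Fin (n + 1)) : IsProbabilityMeasure (gammaMeasure (a k) 1) :=
    isProbabilityMeasure_gammaMeasure (ha k) one_pos
  have : IsProbabilityMeasure (gammaMeasure (∑ k, a k) 1) :=
    isProbabilityMeasure_gammaMeasure (sum_pos (fun k _ ↦ ha k) univ_nonempty) one_pos
  have h := congrArg (fun μ ↦ μ Set.univ) (pi_gammaMeasure_map_div_sum_prodMk_sum ha one_pos)
  simp only [← Set.univ_prod_univ, prod_prod] at h
  rw [Set.univ_prod_univ, map_apply (by fun_prop) .univ] at h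
  exact ⟨by simpa using h.symm⟩

theorem pi_gammaMeasure_map_div_sum {n : ℕ} {a : Fin (n + 1) → ℝ} (ha : ∀ k, 0 < a k)
    {r : ℝ} (hr : 0 < r) :
    (Measure.pi fun k ↦ gammaMeasure (a k) r).map
        (fun s (i : Fin n) ↦ s i.castSucc / ∑ k, s k) = dirichletMeasure7 n a := by
  have : IsProbabilityMeasure (gammaMeasure (∑ k, a k) r) :=
    isProbabilityMeasure_gammaMeasure (sum_pos (fun k _ ↦ ha k) univ_nonempty) hr
  have h := congrArg (Measure.map Prod.fst) (pi_gammaMeasure_map_div_sum_prodMk_sum ha hr)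
  rwa [Measure.map_map (by fun_prop) (by fun_prop), map_fst_prod, measure_univ, one_smul] at h

theorem pi_gammaMeasure_map_sum {n : ℕ} {a : Fin (n + 1) → ℝ} (ha : ∀ k, 0 < a k)
    {r : ℝ} (hr : 0 < r) :
    (Measure.pi fun k ↦ gammaMeasure (a k) r).map (fun s ↦ ∑ k, s k)
      = gammaMeasure (∑ k, a k) r := by
  have := isProbabilityMeasure_dirichletMeasure7 ha
  have : IsProbabilityMeasure (gammaMeasure (∑ k, a k) r) :=
    isProbabilityMeasure_gammaMeasure (sum_pos (fun k _ ↦ ha k) univ_nonempty) hr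
  have h := congrArg (Measure.map Prod.snd) (pi_gammaMeasure_map_div_sum_prodMk_sum ha hr)
  rwa [Measure.map_map (by fun_prop) (by fun_prop), map_snd_prod, measure_univ, one_smul] at h

theorem gaussianReal_map_sq :
    (gaussianReal 0 1).map (fun x ↦ x ^ 2) = gammaMeasure (1 / 2) (1 / 2) := by
  refine ext_of_lintegral _ fun f hf ↦ ?_
  rw [lintegral_map hf (by fun_prop), gaussianReal_of_var_ne_zero _ one_ne_zero,
    lintegral_withDensity_eq_lintegral_mul _ (by fun_prop) (by fun_prop), gammaMeasure,
    lintegral_withDensity_eq_lintegral_mul _ (by fun_prop) hf]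
  simp only [Pi.mul_apply]
  have key (s : Set ℝ) (hs : MeasurableSet s) (h0 : ∀ x ∈ s, x ≠ 0)
      (hinj : Set.InjOn (fun x : ℝ ↦ x ^ 2) s)
      (himg : Set.image (fun x : ℝ ↦ x ^ 2) s = Set.Ioi 0) :
      ∫⁻ x in s, gaussianPDF 0 1 x * f (x ^ 2)
        = ∫⁻ u in Set.Ioi 0, 2⁻¹ * (gammaPDF (1 / 2) (1 / 2) u * f u) := by
    rw [← himg, lintegral_image_eq_lintegral_abs_deriv_mul hs
      (fun x _ ↦ (hasDerivAt_pow 2 x).hasDerivWithinAt) hinj]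
    refine setLIntegral_congr_fun hs fun x hx ↦ ?_
    have hx0 : 0 < |x| := abs_pos.2 (h0 x hx)
    have h2 : (2⁻¹ : ℝ≥0∞) = ENNReal.ofReal (1 / 2) := by
      rw [ENNReal.ofReal_div_of_pos (by norm_num)]; simp
    simp only [← mul_assoc]
    congr 1
    rw [gammaPDF_of_nonneg (sq_nonneg x), h2, ← ENNReal.ofReal_mul (by positivity),
      ← ENNReal.ofReal_mul (by positivity), gaussianPDF, gaussianPDFReal]
    congr 1
    have h3 : ((x ^ 2 : ℝ)) ^ ((1 / 2 : ℝ) - 1) = |x|⁻¹ := by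
      rw [← sq_abs, ← Real.rpow_natCast, ← Real.rpow_mul hx0.le, ← Real.rpow_neg_one]
      norm_num
    rw [h3, Real.Gamma_one_half_eq, ← Real.sqrt_eq_rpow, Real.sqrt_div zero_le_one,
      NNReal.coe_one, Real.sqrt_mul (by positivity), Real.sqrt_mul (by positivity)]
    simp only [abs_mul, Nat.cast_ofNat, Nat.abs_ofNat, Nat.reduceSub, pow_one, Real.sqrt_one]
    have : Real.exp (-(x - 0) ^ 2 / (2 * 1)) = Real.exp (-(1 / 2 * x ^ 2)) := by
      congr 1; ring
    rw [this]
    field_simp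
  have hsplit (K : ℝ → ℝ≥0∞) :
      ∫⁻ x, K x = (∫⁻ x in Set.Ioi 0, K x) + ∫⁻ x in Set.Iio 0, K x := by
    rw [← lintegral_add_compl K (measurableSet_Ioi (a := (0 : ℝ))), Set.compl_Ioi,
      setLIntegral_congr Iio_ae_eq_Iic]
  rw [hsplit, hsplit (fun x ↦ gammaPDF _ _ x * f x), key _ measurableSet_Ioi,
    key _ measurableSet_Iio]
  · have : ∫⁻ x in Set.Iio 0, gammaPDF (1 / 2) (1 / 2) x * f x = 0 := by
      rw [setLIntegral_congr_fun (g := fun _ ↦ 0) measurableSet_Iio, lintegral_zero]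
      intro x hx
      simp only [gammaPDF_of_neg hx, zero_mul]
    rw [this, lintegral_const_mul _ (by fun_prop), ← add_mul,
      ENNReal.inv_two_add_inv_two, one_mul, add_zero]
  · exact fun x hx ↦ ne_of_lt hx
  · intro x hx y hy h
    simp only [Set.mem_Iio] at hx hy
    simp only at h
    nlinarith
  · ext u
    simp only [Set.mem_image, Set.mem_Iio, Set.mem_Ioi]
    constructor
    · rintro ⟨x, hx, rfl⟩; nlinarith
    · intro hu
      exact ⟨-√u, by simpa using hu, by simp [Real.sq_sqrt hu.le]⟩
  · exact fun x hx ↦ ne_of_gt hx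
  · intro x hx y hy h
    simp only [Set.mem_Ioi] at hx hy
    simp only at h
    nlinarith
  · ext u
    simp only [Set.mem_image, Set.mem_Ioi]
    constructor
    · rintro ⟨x, hx, rfl⟩; positivity
    · intro hu
      exact ⟨√u, by simpa using hu, by simp [Real.sq_sqrt hu.le]⟩

/-- The chi-squared distribution with `p` degrees of freedom is a Gamma distribution. -/
theorem pi_gaussianReal_map_sum_sq {p : ℕ} (hp : 0 < p) :
    (Measure.pi fun _ : Fin p ↦ gaussianReal 0 1).map (fun y ↦ ∑ j, y j ^ 2)
      = gammaMeasure (p / 2) (1 / 2) := by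
  obtain ⟨m, rfl⟩ := Nat.exists_eq_succ_of_ne_zero hp.ne'
  have : IsProbabilityMeasure (gammaMeasure (1 / 2) (1 / 2)) :=
    isProbabilityMeasure_gammaMeasure (by norm_num) (by norm_num)
  have h := pi_gammaMeasure_map_sum (a := fun _ : Fin (m + 1) ↦ 1 / 2) (by norm_num)
    (r := 1 / 2) (by norm_num)
  simp_rw [← gaussianReal_map_sq] at h this
  rw [← pi_map_pi (fun _ ↦ by fun_prop), Measure.map_map (by fun_prop) (by fun_prop)] at h
  simpa [Function.comp_def, div_eq_mul_inv] using h

theorem pi_gaussianReal_map_block_sum_sq {N n : ℕ} {I : Fin (n + 1) → Finset (Fin N)}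
    {p : Fin (n + 1) → ℕ} (hdisj : ∀ i j, i ≠ j → Disjoint (I i) (I j))
    (hne : ∀ i, (I i).Nonempty) (hcard : ∀ i, (I i).card = p i) :
    (Measure.pi fun _ : Fin N ↦ gaussianReal 0 1).map (fun y k ↦ ∑ r ∈ I k, y r ^ 2)
      = Measure.pi fun k ↦ gammaMeasure ((p k : ℝ) / 2) (1 / 2) := by
  have hp (k) : 0 < p k := hcard k ▸ (hne k).card_pos
  let e (q : (k : Fin (n + 1)) × Fin (p k)) : Fin N := (I q.1).orderEmbOfFin (hcard q.1) q.2
  have he : Function.Injective e := by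
    rintro ⟨k, j⟩ ⟨l, m⟩ h
    obtain rfl : k = l := by
      by_contra hk
      have hj : e ⟨k, j⟩ ∈ I k := orderEmbOfFin_mem _ (hcard k) j
      have hm : e ⟨l, m⟩ ∈ I l := orderEmbOfFin_mem _ (hcard l) m
      exact Finset.disjoint_left.1 (hdisj k l hk) hj (h ▸ hm)
    simpa [e] using h
  have hsum (k : Fin (n + 1)) (y : Fin N → ℝ) :
      ∑ r ∈ I k, y r ^ 2 = ∑ j, y (e ⟨k, j⟩) ^ 2 := by
    conv_lhs => rw [← image_orderEmbOfFin_univ (I k) (hcard k)]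
    rw [sum_image fun _ _ _ _ h ↦ (orderEmbOfFin _ _).injective h]
  have h1 := map_infinitePi_infinitePi_of_inj (P := fun _ : Fin N ↦ gaussianReal 0 1) he
  have h2 := infinitePi_map_piCurry
    (fun (k : Fin (n + 1)) (_ : Fin (p k)) ↦ gaussianReal 0 1)
  simp only [infinitePi_eq_pi] at h1 h2
  simp_rw [← pi_gaussianReal_map_sum_sq (hp _)]
  have hmeas (k : Fin (n + 1)) : Measurable fun y : Fin (p k) → ℝ ↦ ∑ j, y j ^ 2 := by fun_prop
  have (k : Fin (n + 1)) : IsProbabilityMeasure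
      ((Measure.pi fun _ : Fin (p k) ↦ gaussianReal 0 1).map fun y ↦ ∑ j, y j ^ 2) :=
    isProbabilityMeasure_map (hmeas k).aemeasurable
  rw [← pi_map_pi (fun k ↦ (hmeas k).aemeasurable), ← h2, ← h1,
    Measure.map_map (by fun_prop) (by fun_prop), Measure.map_map (by fun_prop) (by fun_prop)]
  simp_rw [hsum]
  rfl

section Sphere

variable {E : Type*} [NormedAddCommGroup E] [InnerProductSpace ℝ E] [MeasurableSpace E]
  [BorelSpace E]

theorem charFun_eq_of_norm_eq {σ : Measure E} (hσ : ∀ e : E ≃ₗᵢ[ℝ] E, σ.map e = σ) {s t : E}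
    (h : ‖s‖ = ‖t‖) : charFun σ s = charFun σ t := by
  set e := Submodule.reflection (ℝ ∙ (s - t))ᗮ
  have he : e s = t := Submodule.reflection_sub h
  conv_rhs => rw [← hσ e]
  rw [charFun_apply, charFun_apply, integral_map e.continuous.measurable.aemeasurable
    (Continuous.aestronglyMeasurable (by fun_prop))]
  simp_rw [← he, LinearIsometryEquiv.inner_map_map]

theorem eq_of_map_linearIsometryEquiv_eq [SecondCountableTopology E] [CompleteSpace E]
    {σ τ : Measure E} [IsProbabilityMeasure σ] [IsProbabilityMeasure τ]
    (hσ : ∀ e : E ≃ₗᵢ[ℝ] E, σ.map e = σ) (hτ : ∀ e : E ≃ₗᵢ[ℝ] E, τ.map e = τ)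
    (hσ1 : ∀ᵐ x ∂σ, ‖x‖ = 1) (hτ1 : ∀ᵐ x ∂τ, ‖x‖ = 1) : σ = τ := by
  refine ext_of_charFun (funext fun t ↦ ?_)
  have avg {μ ν : Measure E} [IsProbabilityMeasure ν] (hμ : ∀ e : E ≃ₗᵢ[ℝ] E, μ.map e = μ)
      (hν1 : ∀ᵐ x ∂ν, ‖x‖ = 1) : charFun μ t = ∫ y, charFun μ (‖t‖ • y) ∂ν := by
    rw [integral_congr_ae (g := fun _ ↦ charFun μ t)]
    · simp
    · filter_upwards [hν1] with y hy
      exact charFun_eq_of_norm_eq hμ (by simp [norm_smul, hy])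
  rw [avg hσ hτ1, avg hτ hσ1]
  simp_rw [charFun_apply]
  rw [integral_integral_swap]
  · simp_rw [inner_smul_right, real_inner_comm]
  · refine Integrable.of_bound (C := 1) (Continuous.aestronglyMeasurable (by fun_prop)) ?_
    refine ae_of_all _ fun z ↦ ?_
    simp only [Function.uncurry]
    rw [Complex.norm_exp_ofReal_mul_I]

end Sphere

/-- The rotation-invariant probability measure on the unit sphere is the law of a normalized
standard Gaussian vector. -/
theorem eq_stdGaussian_map_normalize {N : ℕ} (hN : 1 ≤ N)
    {σ : Measure (EuclideanSpace ℝ (Fin N))} [IsProbabilityMeasure σ]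
    (hsupp : ∀ᵐ y ∂σ, ‖y‖ = 1)
    (hinv : ∀ e : EuclideanSpace ℝ (Fin N) ≃ₗᵢ[ℝ] EuclideanSpace ℝ (Fin N), σ.map e = σ) :
    σ = (stdGaussian (EuclideanSpace ℝ (Fin N))).map fun y ↦ ‖y‖⁻¹ • y := by
  have hmeas : Measurable fun y : EuclideanSpace ℝ (Fin N) ↦ ‖y‖⁻¹ • y := by fun_prop
  have := isProbabilityMeasure_map (μ := stdGaussian (EuclideanSpace ℝ (Fin N)))
    hmeas.aemeasurable
  refine eq_of_map_linearIsometryEquiv_eq hinv (fun e ↦ ?_) hsupp ?_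
  · conv_rhs => rw [← stdGaussian_map e]
    rw [Measure.map_map (by fun_prop) hmeas, map_map hmeas (by fun_prop)]
    congr 1
    ext1 y
    simp
  · rw [ae_map_iff hmeas.aemeasurable (measurableSet_eq_fun (by fun_prop) (by fun_prop)),
      ← map_pi_eq_stdGaussian, ae_map_iff (by fun_prop)
      (measurableSet_eq_fun (by fun_prop) (by fun_prop))]
    have : NullSingletonClass (gaussianReal 0 1) := nullSingletonClass_gaussianReal one_ne_zero
    have h0 := (quasiMeasurePreserving_eval (fun _ : Fin N ↦ gaussianReal 0 1) ⟨0, hN⟩).ae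
      (compl_mem_ae_iff.2 (measure_singleton (0 : ℝ)))
    filter_upwards [h0] with x hx
    refine norm_smul_inv_norm (𝕜 := ℝ) fun h ↦ hx ?_
    exact congrArg (fun y : EuclideanSpace ℝ (Fin N) ↦ y ⟨0, hN⟩) h

/-- The pushforward of the uniform (rotation-invariant) probability measure on
the unit sphere `S^{N-1}` under `y ↦ (Σ_{r∈I_k} y_r²)_{k≤n}` is the Dirichlet distribution
with parameters `p_i/2`. -/
theorem stmt_7 (N n : ℕ) (hN : 1 ≤ N)
    (I : Fin (n + 1) → Finset (Fin N)) (p : Fin (n + 1) → ℕ)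
    (hdisj : ∀ i j, i ≠ j → Disjoint (I i) (I j))
    (hcover : ∀ r, ∃ i, r ∈ I i)
    (hne : ∀ i, (I i).Nonempty)
    (hcard : ∀ i, (I i).card = p i)
    (σ : Measure (EuclideanSpace ℝ (Fin N))) [IsProbabilityMeasure σ]
    (hsupp : σ {y | ‖y‖ ≠ 1} = 0)
    (hinv : ∀ e : EuclideanSpace ℝ (Fin N) ≃ₗᵢ[ℝ] EuclideanSpace ℝ (Fin N),
      Measure.map e σ = σ) :
    Measure.map (fun y (k : Fin n) => ∑ r ∈ I k.castSucc, y r ^ 2) σ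
      = dirichletMeasure7 n (fun i => (p i : ℝ) / 2) := by
  have hp (k) : 0 < (p k : ℝ) / 2 := by
    have : 0 < p k := hcard k ▸ (hne k).card_pos
    positivity
  have hnorm (x : Fin N → ℝ) : ‖WithLp.toLp 2 x‖ ^ 2 = ∑ k, ∑ r ∈ I k, x r ^ 2 := by
    rw [EuclideanSpace.real_norm_sq_eq, ← sum_biUnion fun i _ j _ h ↦ hdisj i j h]
    congr 1
    ext r
    simpa using hcover r
  rw [eq_stdGaussian_map_normalize hN hsupp hinv, ← map_pi_eq_stdGaussian,
    ← pi_gammaMeasure_map_div_sum hp (r := 1 / 2) (by norm_num),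
    ← pi_gaussianReal_map_block_sum_sq hdisj hne hcard,
    Measure.map_map (by fun_prop) (by fun_prop), Measure.map_map (by fun_prop) (by fun_prop),
    Measure.map_map (by fun_prop) (by fun_prop)]
  congr 1
  ext x k
  simp only [Function.comp_apply, ← hnorm, PiLp.smul_apply, smul_eq_mul, mul_pow, ← mul_sum]
  rw [inv_pow, inv_mul_eq_div]
end

section
/- Let d ≥ 1, let d_1, …, d_{n+1} ≥ d be integers, set N := d_1 + ⋯ + d_{n+1}, and let I_1, …, I_{n+1} be the corresponding partition of {1,…,N} into consecutive blocks with |I_i| = d_i. Let μ be the normalized Haar probability measure on the special unitary group SU(N). For u ∈ SU(N) and 1 ≤ i ≤ n, let W^(i)(u) be the d×d_i submatrix of u formed by its first d rows and the columns in I_i, and let Z^(i)(u) := W^(i)(u) W^(i)(u)*. Let c be the coordinate map sending an n-tuple (Z^(1),…,Z^(n)) of d×d Hermitian matrices to the vector in ℝ^{n d²} consisting, for each k, of the real diagonal entries Z^(k)_{pp} (1 ≤ p ≤ d) and the real and imaginary parts of the above-diagonal entries Z^(k)_{pq} (p < q). Then there exists a constant C > 0 such that the pushforward of μ under u ↦ c(Z^(1)(u),…,Z^(n)(u))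 has density f with respect to Lebesgue measure on ℝ^{n d²}, where f(x) = C · Π_{i=1}^n det(Z^(i))^{d_i − d} · det(Id − Σ_{i=1}^n Z^(i))^{d_{n+1} − d} if the tuple (Z^(1),…,Z^(n)) with coordinates x lies in the complex matrix simplex Δ_{n,d}, and f(x) = 0 otherwise. -/
open Finset Matrix MeasureTheory ComplexOrder
open scoped Classical

/-- Matrices over `ℂ` carry the product measurable structure of their entries. -/
noncomputable instance matrixMeasurableSpace15 {N : ℕ} :
    MeasurableSpace (Matrix (Fin N) (Fin N) ℂ) :=
  MeasurableSpace.pi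

/-- The index type for the real coordinates of an `n`-tuple of `d×d` Hermitian matrices:
for each `k`, the `d` (real) diagonal entries and the real and imaginary parts of the
above-diagonal entries; it has cardinality `n·d²`. -/
def herdIdx15 (n d : ℕ) : Type :=
  Fin n × (Fin d ⊕ ({pq : Fin d × Fin d // pq.1 < pq.2} × Bool))

instance (n d : ℕ) : Fintype (herdIdx15 n d) := by unfold herdIdx15; infer_instance
instance (n d : ℕ) : MeasurableSpace (herdIdx15 n d → ℝ) := MeasurableSpace.pi

/-- The coordinate map sending an `n`-tuple of matrices to its `n·d²` real coordinates. -/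
noncomputable def coordMap15 {n d : ℕ} (Z : Fin n → Matrix (Fin d) (Fin d) ℂ) :
    herdIdx15 n d → ℝ :=
  fun idx => match idx with
  | (k, Sum.inl p) => (Z k p p).re
  | (k, Sum.inr (⟨(p, q), _⟩, false)) => (Z k p q).re
  | (k, Sum.inr (⟨(p, q), _⟩, true)) => (Z k p q).im

/-- Reconstruction of the `k`-th Hermitian matrix from the real coordinates. -/
noncomputable def recon15 {n d : ℕ} (x : herdIdx15 n d → ℝ) (k : Fin n) :
    Matrix (Fin d) (Fin d) ℂ :=
  Matrix.of fun p q =>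
    if h : p < q then ⟨x (k, Sum.inr (⟨(p, q), h⟩, false)), x (k, Sum.inr (⟨(p, q), h⟩, true))⟩
    else if h' : q < p then
      ⟨x (k, Sum.inr (⟨(q, p), h'⟩, false)), -(x (k, Sum.inr (⟨(q, p), h'⟩, true)))⟩
    else (x (k, Sum.inl p) : ℂ)

/-- The extracted matrix `Z^(I)(u) = W W*`, where `W` is the submatrix of `u` formed by its
first `d` rows and the columns in `I`. -/
noncomputable def extractZ15 {N : ℕ} (d : ℕ) (hdN : d ≤ N) (I : Finset (Fin N))
    (u : Matrix (Fin N) (Fin N) ℂ) : Matrix (Fin d) (Fin d) ℂ :=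
  Matrix.of fun a b => ∑ r ∈ I, u (Fin.castLE hdN a) r * star (u (Fin.castLE hdN b) r)

namespace MatrixDirichlet

section

/-- Index type of the real coordinates of one `d × d` Hermitian matrix. -/
abbrev HermIdx (d : ℕ) : Type := Fin d ⊕ ({pq : Fin d × Fin d // pq.1 < pq.2} × Bool)

/-- Real coordinates of a `d × d` Hermitian matrix. -/
abbrev HermCoord (d : ℕ) : Type := HermIdx d → ℝ

variable {d : ℕ}

/-- The Hermitian matrix with given real coordinates. -/
noncomputable def toMat : HermCoord d →ₗ[ℝ] Matrix (Fin d) (Fin d) ℂ where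
  toFun x := Matrix.of fun p q =>
    if h : p < q then ⟨x (Sum.inr (⟨(p, q), h⟩, false)), x (Sum.inr (⟨(p, q), h⟩, true))⟩
    else if h' : q < p then
      ⟨x (Sum.inr (⟨(q, p), h'⟩, false)), -(x (Sum.inr (⟨(q, p), h'⟩, true)))⟩
    else (x (Sum.inl p) : ℂ)
  map_add' x y := by
    ext p q
    simp only [Matrix.of_apply, Matrix.add_apply]
    split_ifs <;> apply Complex.ext <;> simp [add_comm]
  map_smul' c x := by
    ext p q
    simp only [Matrix.of_apply, Matrix.smul_apply]
    split_ifs <;> apply Complex.ext <;> simp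

/-- The real coordinates of a matrix: the real diagonal parts, and the real and imaginary parts
of the entries above the diagonal. -/
noncomputable def ofMat : Matrix (Fin d) (Fin d) ℂ →ₗ[ℝ] HermCoord d where
  toFun A idx := match idx with
    | Sum.inl p => (A p p).re
    | Sum.inr (⟨(p, q), _⟩, false) => (A p q).re
    | Sum.inr (⟨(p, q), _⟩, true) => (A p q).im
  map_add' A B := by
    funext idx
    rcases idx with p | ⟨⟨⟨p, q⟩, h⟩, _ | _⟩ <;> simp
  map_smul' c A := by
    funext idx
    rcases idx with p | ⟨⟨⟨p, q⟩, h⟩, _ | _⟩ <;> simp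

theorem toMat_apply (x : HermCoord d) (p q : Fin d) : toMat x p q =
    if h : p < q then ⟨x (Sum.inr (⟨(p, q), h⟩, false)), x (Sum.inr (⟨(p, q), h⟩, true))⟩
    else if h' : q < p then
      ⟨x (Sum.inr (⟨(q, p), h'⟩, false)), -(x (Sum.inr (⟨(q, p), h'⟩, true)))⟩
    else (x (Sum.inl p) : ℂ) := rfl

theorem ofMat_toMat (x : HermCoord d) : ofMat (toMat x) = x := by
  funext idx
  rcases idx with p | ⟨⟨⟨p, q⟩, h⟩, _ | _⟩
  · simp [ofMat, toMat_apply]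
  · have h' : p < q := h
    simp [ofMat, toMat_apply, h']
  · have h' : p < q := h
    simp [ofMat, toMat_apply, h']

theorem isHermitian_toMat (x : HermCoord d) : (toMat x).IsHermitian := by
  ext p q
  rw [Matrix.conjTranspose_apply, toMat_apply, toMat_apply]
  rcases lt_trichotomy p q with h | h | h
  · simp only [h, h.not_gt, dif_pos, dif_neg, not_false_eq_true]
    apply Complex.ext <;> simp
  · subst h
    simp
  · simp only [h, h.not_gt, dif_pos, dif_neg, not_false_eq_true]
    apply Complex.ext <;> simp

theorem toMat_ofMat {A : Matrix (Fin d) (Fin d) ℂ} (hA : A.IsHermitian) :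
    toMat (ofMat A) = A := by
  ext p q
  rw [toMat_apply]
  rcases lt_trichotomy p q with h | h | h
  · simp only [h, dif_pos]
    apply Complex.ext <;> simp [ofMat]
  · subst h
    have := hA.coe_re_apply_self p
    simpa [ofMat] using this
  · have := hA.apply p q
    simp only [h, h.not_gt, dif_pos, dif_neg, not_false_eq_true]
    rw [← this]
    apply Complex.ext <;> simp [ofMat]

theorem toMat_injective : Function.Injective (toMat : HermCoord d → _) :=
  Function.LeftInverse.injective ofMat_toMat

theorem continuous_toMat : Continuous (toMat : HermCoord d → Matrix (Fin d) (Fin d) ℂ) :=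
  toMat.continuous_of_finiteDimensional

theorem continuous_ofMat : Continuous (ofMat : Matrix (Fin d) (Fin d) ℂ → HermCoord d) :=
  ofMat.continuous_of_finiteDimensional

/-- `X ↦ g X gᴴ` in coordinates. -/
noncomputable def conj (g : Matrix (Fin d) (Fin d) ℂ) : HermCoord d →ₗ[ℝ] HermCoord d :=
  ofMat ∘ₗ LinearMap.mulRight ℝ gᴴ ∘ₗ LinearMap.mulLeft ℝ g ∘ₗ toMat

theorem toMat_conj (g : Matrix (Fin d) (Fin d) ℂ) (x : HermCoord d) :
    toMat (conj g x) = g * toMat x * gᴴ := by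
  have : conj g x = ofMat (g * toMat x * gᴴ) := by simp [conj]
  rw [this, toMat_ofMat]
  exact isHermitian_mul_mul_conjTranspose g (isHermitian_toMat x)

/-- Decomposition of a matrix into its Hermitian and skew-Hermitian parts. -/
noncomputable def hermDecomp :
    (HermCoord d × HermCoord d) ≃ₗ[ℝ] Matrix (Fin d) (Fin d) ℂ where
  toFun p := toMat p.1 + Complex.I • toMat p.2
  map_add' p q := by
    simp only [Prod.fst_add, Prod.snd_add, map_add, smul_add]
    abel
  map_smul' c p := by
    simp only [Prod.smul_fst, Prod.smul_snd, map_smul, smul_add, RingHom.id_apply,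
      smul_comm c Complex.I]
  invFun X := (ofMat ((2⁻¹ : ℂ) • (X + Xᴴ)), ofMat ((-Complex.I * 2⁻¹ : ℂ) • (X - Xᴴ)))
  left_inv p := by
    have h1 := (isHermitian_toMat p.1).eq
    have h2 := (isHermitian_toMat p.2).eq
    ext1
    · simp only
      convert ofMat_toMat p.1 using 2
      rw [conjTranspose_add, conjTranspose_smul, h1, h2]
      ext i j
      simp
      ring
    · simp only
      convert ofMat_toMat p.2 using 2
      rw [conjTranspose_add, conjTranspose_smul, h1, h2]
      ext i j
      simp
      linear_combination (-(toMat p.2 i j)) * Complex.I_sq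
  right_inv X := by
    simp only
    rw [toMat_ofMat, toMat_ofMat]
    · ext i j
      simp
      linear_combination (-(2⁻¹ * (X i j - (starRingEnd ℂ) (X j i)))) * Complex.I_sq
    · ext i j
      simp
      ring
    · ext i j
      simp
      ring

theorem hermDecomp_apply (p : HermCoord d × HermCoord d) :
    hermDecomp p = toMat p.1 + Complex.I • toMat p.2 := rfl

theorem det_mulRight_matrix (h : Matrix (Fin d) (Fin d) ℂ) :
    LinearMap.det (LinearMap.mulRight ℂ h) = h.det ^ d := by
  have : (LinearMap.mulRight ℂ h : Matrix (Fin d) (Fin d) ℂ →ₗ[ℂ] _) =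
      LinearMap.pi (fun i : Fin d => (Matrix.toLin' hᵀ) ∘ₗ LinearMap.proj i) := by
    refine LinearMap.ext fun X => ?_
    funext i j
    change (X * h) i j = (hᵀ *ᵥ (X i)) j
    simp [Matrix.mul_apply, Matrix.mulVec, dotProduct, mul_comm]
  rw [this]
  refine (LinearMap.det_pi (fun _ : Fin d => Matrix.toLin' hᵀ)).trans ?_
  simp

theorem det_mulLeft_matrix (g : Matrix (Fin d) (Fin d) ℂ) :
    LinearMap.det (LinearMap.mulLeft ℂ g) = g.det ^ d := by
  have : (LinearMap.mulLeft ℂ g : Matrix (Fin d) (Fin d) ℂ →ₗ[ℂ] _) =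
      (Matrix.transposeLinearEquiv (Fin d) (Fin d) ℂ ℂ).toLinearMap ∘ₗ LinearMap.mulRight ℂ gᵀ ∘ₗ
        (Matrix.transposeLinearEquiv (Fin d) (Fin d) ℂ ℂ).symm.toLinearMap := by
    refine LinearMap.ext fun X => ?_
    simp
  rw [this, LinearMap.det_conj, det_mulRight_matrix, det_transpose]

theorem abs_det_conj (g : Matrix (Fin d) (Fin d) ℂ) :
    |LinearMap.det (conj g)| = ‖g.det‖ ^ (2 * d) := by
  have hconj : hermDecomp.toLinearMap ∘ₗ (LinearMap.prodMap (conj g) (conj g)) ∘ₗ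
      hermDecomp.symm.toLinearMap =
      (LinearMap.mulRight ℂ gᴴ ∘ₗ LinearMap.mulLeft ℂ g).restrictScalars ℝ := by
    refine LinearMap.ext fun X => ?_
    obtain ⟨p, rfl⟩ := hermDecomp.surjective X
    simp only [LinearMap.comp_apply, LinearEquiv.coe_coe, LinearEquiv.symm_apply_apply]
    simp [hermDecomp_apply, toMat_conj, Matrix.mul_add, Matrix.add_mul]
  have hdet := congrArg LinearMap.det hconj
  rw [LinearMap.det_conj, LinearMap.det_prodMap, LinearMap.det_restrictScalars,
    LinearMap.det_comp, det_mulRight_matrix, det_mulLeft_matrix, Algebra.norm_complex_apply,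
    Complex.normSq_eq_norm_sq, det_conjTranspose, norm_mul, norm_pow, norm_pow, norm_star] at hdet
  have h2 : |LinearMap.det (conj g)| ^ 2 = (‖g.det‖ ^ (2 * d)) ^ 2 := by
    rw [sq_abs, sq, hdet]
    ring
  exact (pow_left_inj₀ (abs_nonneg _) (by positivity) two_ne_zero).1 h2

variable {κ : Type*} [Fintype κ]

/-- The matrix `W Wᴴ` of a matrix `W` given by its columns. -/
noncomputable def gramMat (W : κ → Fin d → ℂ) : Matrix (Fin d) (Fin d) ℂ :=
  Matrix.of fun a b => ∑ r, W r a * star (W r b)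

theorem gramMat_eq (W : κ → Fin d → ℂ) :
    gramMat W = (Matrix.of W)ᵀ * ((Matrix.of W)ᵀ)ᴴ := by
  ext a b
  simp [gramMat, Matrix.mul_apply]

theorem posSemidef_gramMat (W : κ → Fin d → ℂ) : (gramMat W).PosSemidef := by
  rw [gramMat_eq]
  exact posSemidef_self_mul_conjTranspose _

/-- Hermitian coordinates of `W Wᴴ`. -/
noncomputable def gram (W : κ → Fin d → ℂ) : HermCoord d := ofMat (gramMat W)

theorem toMat_gram (W : κ → Fin d → ℂ) : toMat (gram W) = gramMat W :=
  toMat_ofMat (posSemidef_gramMat W).isHermitian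

theorem continuous_gram : Continuous (gram : (κ → Fin d → ℂ) → HermCoord d) := by
  refine continuous_ofMat.comp (continuous_matrix fun a b => ?_)
  simp only [gramMat, Matrix.of_apply]
  fun_prop

/-- Left multiplication `W ↦ g W` of a matrix given by its columns. -/
noncomputable def lmul (κ : Type*) [Fintype κ] (g : Matrix (Fin d) (Fin d) ℂ) :
    (κ → Fin d → ℂ) →ₗ[ℝ] (κ → Fin d → ℂ) :=
  LinearMap.pi fun i : κ => ((Matrix.toLin' g).restrictScalars ℝ) ∘ₗ LinearMap.proj i

theorem lmul_apply (g : Matrix (Fin d) (Fin d) ℂ) (W : κ → Fin d → ℂ) (r : κ) :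
    lmul κ g W r = g *ᵥ W r := by simp [lmul]

theorem det_lmul (g : Matrix (Fin d) (Fin d) ℂ) :
    LinearMap.det (lmul κ g) = ‖g.det‖ ^ (2 * Fintype.card κ) := by
  rw [lmul, LinearMap.det_pi, LinearMap.det_restrictScalars, LinearMap.det_toLin',
    Algebra.norm_complex_apply, Complex.normSq_eq_norm_sq]
  simp [pow_mul]

theorem gramMat_lmul (g : Matrix (Fin d) (Fin d) ℂ) (W : κ → Fin d → ℂ) :
    gramMat (lmul κ g W) = g * gramMat W * gᴴ := by
  have : (Matrix.of (lmul κ g W))ᵀ = g * (Matrix.of W)ᵀ := by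
    ext a r
    simp [lmul_apply, Matrix.mulVec, dotProduct, Matrix.mul_apply]
  rw [gramMat_eq, gramMat_eq, this, conjTranspose_mul]
  simp only [Matrix.mul_assoc]

theorem gram_lmul (g : Matrix (Fin d) (Fin d) ℂ) (W : κ → Fin d → ℂ) :
    gram (lmul κ g W) = conj g (gram W) := by
  apply toMat_injective
  rw [toMat_conj, toMat_gram, toMat_gram, gramMat_lmul]

end

section

variable {d : ℕ}

instance isAddHaarMeasure_volume_pi {κ E : Type*} [Fintype κ] [NormedAddCommGroup E]
    [MeasureSpace E] [BorelSpace E] [SecondCountableTopology E]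
    [SigmaFinite (volume : Measure E)] [(volume : Measure E).IsAddHaarMeasure] :
    (volume : Measure (κ → E)).IsAddHaarMeasure :=
  Measure.pi.isAddHaarMeasure _

theorem lintegral_comp_linearMap {E : Type*} [NormedAddCommGroup E] [NormedSpace ℝ E]
    [MeasurableSpace E] [BorelSpace E] [FiniteDimensional ℝ E] (μ : Measure E)
    [μ.IsAddHaarMeasure] {L : E →ₗ[ℝ] E} (hL : LinearMap.det L ≠ 0) {f : E → ENNReal}
    (hf : Measurable f) :
    ∫⁻ x, f (L x) ∂μ = ENNReal.ofReal |LinearMap.det L|⁻¹ * ∫⁻ x, f x ∂μ := by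
  have hLm : Measurable L := L.continuous_of_finiteDimensional.measurable
  rw [← lintegral_map hf hLm, Measure.map_linearMap_addHaar_eq_smul_addHaar μ hL,
    lintegral_smul_measure, abs_inv, smul_eq_mul]

theorem finite_det_add_smul_one_eq_zero (A : Matrix (Fin d) (Fin d) ℂ) :
    {t : ℝ | (A + t • (1 : Matrix (Fin d) (Fin d) ℂ)).det = 0}.Finite := by
  have h : {z : ℂ | (-A).charpoly.IsRoot z}.Finite :=
    Polynomial.finite_setOfPred_isRoot (Matrix.charpoly_monic _).ne_zero
  refine (h.preimage Complex.ofReal_injective.injOn).subset fun t ht => ?_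
  simp only [Set.mem_preimage, Set.mem_ofPred_eq, Polynomial.IsRoot, Matrix.eval_charpoly]
  rw [← Set.mem_ofPred.1 ht]
  congr 1
  ext i j
  simp [Matrix.one_apply, Matrix.diagonal_apply, Matrix.scalar_apply, add_comm]

theorem ae_det_toMat_ne_zero : ∀ᵐ x : HermCoord d, (toMat x).det ≠ 0 := by
  refine ae_mem_of_ae_add_linearMap_mem (s := {x | (toMat x).det ≠ 0})
    (LinearMap.toSpanSingleton ℝ (HermCoord d) (ofMat 1)) volume volume ?_ fun y => ?_
  · exact (continuous_toMat.matrix_det.measurable (measurableSet_singleton 0)).compl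
  · have := (finite_det_add_smul_one_eq_zero (toMat y)).measure_zero volume
    refine (measure_eq_zero_iff_ae_notMem.1 this).mono fun t ht => ?_
    simpa [toMat_ofMat isHermitian_one] using ht

variable {κ : Type*} [Fintype κ]

theorem posDef_gramMat_of_det_ne_zero (e : Fin d → κ) {W : κ → Fin d → ℂ}
    (h : (Matrix.of fun a b => W (e a) b).det ≠ 0) : (gramMat W).PosDef := by
  rw [gramMat_eq]
  refine PosDef.mul_conjTranspose_self _ ?_
  have hinj := Matrix.mulVec_injective_of_isUnit
    ((Matrix.isUnit_iff_isUnit_det _).2 (isUnit_iff_ne_zero.2 h))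
  intro v w hvw
  apply hinj
  funext a
  have := congrFun hvw (e a)
  simpa [Matrix.vecMul, Matrix.mulVec, dotProduct, mul_comm] using this

theorem ae_posDef_gramMat (hκ : d ≤ Fintype.card κ) :
    ∀ᵐ W : κ → Fin d → ℂ, (gramMat W).PosDef := by
  obtain ⟨e⟩ : Nonempty (Fin d ↪ κ) :=
    Function.Embedding.nonempty_of_card_le (by simpa using hκ)
  have key : ∀ᵐ W : κ → Fin d → ℂ, (Matrix.of fun a b => W (e a) b).det ≠ 0 := by
    refine ae_mem_of_ae_add_linearMap_mem (s := {W | (Matrix.of fun a b => W (e a) b).det ≠ 0})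
      (LinearMap.toSpanSingleton ℝ (κ → Fin d → ℂ) (fun r a => if r = e a then 1 else 0))
      volume volume ?_ fun y => ?_
    · have : Continuous fun W : κ → Fin d → ℂ => (Matrix.of fun a b => W (e a) b).det :=
        Continuous.matrix_det (continuous_matrix fun a b => by simp only [Matrix.of_apply]; fun_prop)
      exact (this.measurable (measurableSet_singleton 0)).compl
    · have := (finite_det_add_smul_one_eq_zero
        (Matrix.of fun a b => y (e a) b)).measure_zero volume
      refine (measure_eq_zero_iff_ae_notMem.1 this).mono fun t ht => ?_
      simp only [Set.mem_ofPred_eq] at ht ⊢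
      convert ht using 2
      ext a b
      simp [Matrix.one_apply]
  exact key.mono fun W hW => posDef_gramMat_of_det_ne_zero e hW

/-- The determinant of a Hermitian matrix as a function of its coordinates. -/
noncomputable def hdet (x : HermCoord d) : ℝ := (toMat x).det.re

theorem continuous_hdet : Continuous (hdet : HermCoord d → ℝ) :=
  Complex.continuous_re.comp continuous_toMat.matrix_det

theorem hdet_pos {x : HermCoord d} (hx : (toMat x).PosDef) : 0 < hdet x :=
  (Complex.pos_iff.1 hx.det_pos).1

theorem hdet_conj (g : Matrix (Fin d) (Fin d) ℂ) (x : HermCoord d) :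
    hdet (conj g x) = ‖g.det‖ ^ 2 * hdet x := by
  have : (toMat (conj g x)).det = ((‖g.det‖ ^ 2 : ℝ) : ℂ) * (toMat x).det := by
    rw [toMat_conj, det_mul, det_mul, det_conjTranspose, mul_right_comm]
    congr 1
    rw [← Complex.normSq_eq_norm_sq, ← Complex.mul_conj]
    rfl
  rw [hdet, this, Complex.re_ofReal_mul, hdet]

/-- Coordinates of positive definite matrices. -/
def pdSet (d : ℕ) : Set (HermCoord d) := {x | (toMat x).PosDef}

theorem isClosed_posSemidef : IsClosed {x : HermCoord d | (toMat x).PosSemidef} := by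
  have : {x : HermCoord d | (toMat x).PosSemidef} =
      ⋂ v : Fin d → ℂ, {x | 0 ≤ (star v ⬝ᵥ (toMat x *ᵥ v))} := by
    ext x
    simp only [Set.mem_ofPred_eq, Set.mem_iInter, posSemidef_iff_dotProduct_mulVec]
    exact ⟨fun h => h.2, fun h => ⟨isHermitian_toMat x, h⟩⟩
  rw [this]
  refine isClosed_iInter fun v => isClosed_le continuous_const ?_
  exact continuous_const.dotProduct (continuous_toMat.matrix_mulVec continuous_const)

theorem measurableSet_pdSet : MeasurableSet (pdSet d) := by
  have : pdSet d = {x | (toMat x).PosSemidef} ∩ {x | (toMat x).det ≠ 0} := by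
    ext x
    exact ⟨fun h => ⟨h.posSemidef, h.posSemidef.posDef_iff_det_ne_zero.1 h⟩,
      fun h => h.1.posDef_iff_det_ne_zero.2 h.2⟩
  rw [this]
  exact isClosed_posSemidef.measurableSet.inter
    (continuous_toMat.matrix_det.measurable (measurableSet_singleton 0)).compl

theorem conj_mem_pdSet {g : Matrix (Fin d) (Fin d) ℂ} (hg : g.det ≠ 0) (x : HermCoord d) :
    conj g x ∈ pdSet d ↔ x ∈ pdSet d := by
  simp only [pdSet, Set.mem_ofPred_eq, toMat_conj]
  exact IsUnit.posDef_star_right_conjugate_iff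
    ((Matrix.isUnit_iff_isUnit_det _).2 (isUnit_iff_ne_zero.2 hg))

theorem norm_sq_le_norm_gram (W : κ → Fin d → ℂ) : ‖W‖ ^ 2 ≤ ‖gram W‖ := by
  have h : ∀ r a, ‖W r a‖ ^ 2 ≤ ‖gram W‖ := fun r a => by
    have h1 : gram W (Sum.inl a) = ∑ r, ‖W r a‖ ^ 2 := by
      simp [gram, ofMat, gramMat, Complex.mul_conj, Complex.normSq_eq_norm_sq,
        -Complex.ofReal_pow]
    calc ‖W r a‖ ^ 2 ≤ ∑ r, ‖W r a‖ ^ 2 :=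
          Finset.single_le_sum (f := fun r => ‖W r a‖ ^ 2) (fun _ _ => by positivity) (mem_univ r)
      _ = gram W (Sum.inl a) := h1.symm
      _ ≤ ‖gram W (Sum.inl a)‖ := le_abs_self _
      _ ≤ ‖gram W‖ := norm_le_pi_norm _ _
  have : ‖W‖ ≤ √‖gram W‖ := by
    refine (pi_norm_le_iff_of_nonneg (Real.sqrt_nonneg _)).2 fun r =>
      (pi_norm_le_iff_of_nonneg (Real.sqrt_nonneg _)).2 fun a => Real.le_sqrt_of_sq_le (h r a)
  calc ‖W‖ ^ 2 ≤ √‖gram W‖ ^ 2 := by gcongr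
    _ = _ := Real.sq_sqrt (norm_nonneg _)

theorem gram_zero : gram (0 : κ → Fin d → ℂ) = 0 := by
  have : gramMat (0 : κ → Fin d → ℂ) = 0 := by ext; simp [gramMat]
  rw [gram, this, map_zero]

theorem volume_gram_preimage_lt_top (R : ℝ) :
    volume ((gram : (κ → Fin d → ℂ) → HermCoord d) ⁻¹' Metric.closedBall 0 R) < ⊤ := by
  refine lt_of_le_of_lt (measure_mono (t := Metric.closedBall 0 √R) fun W hW => ?_)
    (isCompact_closedBall _ _).measure_lt_top
  rw [Set.mem_preimage, mem_closedBall_zero_iff] at hW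
  rw [mem_closedBall_zero_iff]
  exact Real.le_sqrt_of_sq_le ((norm_sq_le_norm_gram W).trans hW)

theorem volume_gram_preimage_pos :
    0 < volume ((gram : (κ → Fin d → ℂ) → HermCoord d) ⁻¹' Metric.closedBall 0 1) := by
  refine lt_of_lt_of_le ?_ (measure_mono (Set.preimage_mono Metric.ball_subset_closedBall))
  refine (Metric.isOpen_ball.preimage continuous_gram).measure_pos _ ⟨0, ?_⟩
  simp [gram_zero]

end

section

variable {d : ℕ} {κ : Type*} [Fintype κ]

theorem measurable_conj (g : Matrix (Fin d) (Fin d) ℂ) : Measurable (conj g) :=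
  (conj g).continuous_of_finiteDimensional.measurable

theorem measurable_gram : Measurable (gram : (κ → Fin d → ℂ) → HermCoord d) :=
  continuous_gram.measurable

/-- The measure `det (W Wᴴ) ^ (-m) dW` on `d × m` matrices, invariant under left
multiplication. -/
noncomputable def invMeas (d : ℕ) (κ : Type*) [Fintype κ] : Measure (κ → Fin d → ℂ) :=
  volume.withDensity fun W => ENNReal.ofReal ((hdet (gram W)) ^ Fintype.card κ)⁻¹

theorem measurable_invMeas_density : Measurable fun W : κ → Fin d → ℂ =>
    ENNReal.ofReal ((hdet (gram W)) ^ Fintype.card κ)⁻¹ :=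
  (((continuous_hdet.comp continuous_gram).measurable.pow_const _).inv).ennreal_ofReal

instance : SFinite (invMeas d κ) := by unfold invMeas; infer_instance

theorem lintegral_invMeas_lmul {g : Matrix (Fin d) (Fin d) ℂ} (hg : g.det ≠ 0)
    {f : (κ → Fin d → ℂ) → ENNReal} (hf : Measurable f) :
    ∫⁻ W, f (lmul κ g W) ∂(invMeas d κ) = ∫⁻ W, f W ∂(invMeas d κ) := by
  have hL : Measurable (lmul κ g) := (lmul κ g).continuous_of_finiteDimensional.measurable
  have hfL : Measurable fun W => f (lmul κ g W) := hf.comp hL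
  have hg' : 0 < ‖g.det‖ := norm_pos_iff.2 hg
  rw [invMeas, lintegral_withDensity_eq_lintegral_mul _ measurable_invMeas_density hfL,
    lintegral_withDensity_eq_lintegral_mul _ measurable_invMeas_density hf]
  set F := (fun W : κ → Fin d → ℂ => ENNReal.ofReal ((hdet (gram W)) ^ Fintype.card κ)⁻¹) * f
    with hF
  have hFm : Measurable F := measurable_invMeas_density.mul hf
  have hFL : Measurable fun W => F (lmul κ g W) := hFm.comp hL
  have hL0 : LinearMap.det (lmul κ g) ≠ 0 := by rw [det_lmul]; positivity
  have h1 := lintegral_comp_linearMap volume hL0 hFm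
  have h2 : ∀ W, ((fun W : κ → Fin d → ℂ =>
        ENNReal.ofReal ((hdet (gram W)) ^ Fintype.card κ)⁻¹) * fun W => f (lmul κ g W)) W =
      ENNReal.ofReal |LinearMap.det (lmul κ g)| * F (lmul κ g W) := by
    intro W
    simp only [hF, Pi.mul_apply]
    rw [← mul_assoc, ← ENNReal.ofReal_mul (abs_nonneg _), gram_lmul, hdet_conj, det_lmul,
      abs_of_pos (by positivity), mul_pow, mul_inv, ← mul_assoc, ← pow_mul,
      mul_inv_cancel₀ (by positivity), one_mul]
  calc _ = ∫⁻ W, ENNReal.ofReal |LinearMap.det (lmul κ g)| * F (lmul κ g W) :=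
        lintegral_congr h2
    _ = _ := by
      rw [lintegral_const_mul _ hFL, h1, ← mul_assoc,
        ← ENNReal.ofReal_mul (abs_nonneg _), mul_inv_cancel₀ (abs_ne_zero.2 hL0),
        ENNReal.ofReal_one, one_mul]

theorem ae_invMeas_posDef (hκ : d ≤ Fintype.card κ) :
    ∀ᵐ W ∂(invMeas d κ), gram W ∈ pdSet d := by
  refine (withDensity_absolutelyContinuous _ _).ae_le ?_
  filter_upwards [ae_posDef_gramMat (κ := κ) hκ] with W hW
  simpa [pdSet, toMat_gram] using hW

/-- Coordinates of the inverse matrix. -/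
noncomputable def hinv (x : HermCoord d) : HermCoord d := ofMat (toMat x)⁻¹

theorem toMat_hinv (x : HermCoord d) : toMat (hinv x) = (toMat x)⁻¹ :=
  toMat_ofMat (isHermitian_toMat x).inv

theorem measurable_ofMat_comp {α : Type*} [MeasurableSpace α]
    {F : α → Matrix (Fin d) (Fin d) ℂ} (hF : ∀ a b, Measurable fun x => F x a b) :
    Measurable fun x => ofMat (F x) := by
  refine measurable_pi_iff.2 fun idx => ?_
  rcases idx with p | ⟨⟨⟨p, q⟩, h⟩, _ | _⟩
  · exact Complex.measurable_re.comp (hF p p)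
  · exact Complex.measurable_re.comp (hF p q)
  · exact Complex.measurable_im.comp (hF p q)

theorem measurable_hinv : Measurable (hinv : HermCoord d → HermCoord d) := by
  refine measurable_ofMat_comp fun a b => ?_
  have hadj : Measurable fun x : HermCoord d => (toMat x).adjugate a b :=
    (continuous_toMat.matrix_adjugate.matrix_elem a b).measurable
  have hdet : Measurable fun x : HermCoord d => (toMat x).det :=
    continuous_toMat.matrix_det.measurable
  simp only [Matrix.inv_def, Ring.inverse_eq_inv', Matrix.smul_apply, smul_eq_mul]
  exact hdet.inv.mul hadj

theorem conj_hinv {g : Matrix (Fin d) (Fin d) ℂ} (hg : g.det ≠ 0) (x : HermCoord d) :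
    conj g (hinv x) = hinv (conj (g⁻¹)ᴴ x) := by
  apply toMat_injective
  have hu : IsUnit g.det := isUnit_iff_ne_zero.2 hg
  rw [toMat_conj, toMat_hinv, toMat_hinv, toMat_conj, Matrix.mul_inv_rev, Matrix.mul_inv_rev,
    conjTranspose_conjTranspose, ← conjTranspose_nonsing_inv, Matrix.nonsing_inv_nonsing_inv _ hu,
    Matrix.mul_assoc]

theorem conj_eq_ofMat (g : Matrix (Fin d) (Fin d) ℂ) (x : HermCoord d) :
    conj g x = ofMat (g * toMat x * gᴴ) := by
  rw [← toMat_conj, ofMat_toMat]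

theorem measurable_conj_uncurry : Measurable fun p : (Fin d → Fin d → ℂ) × HermCoord d =>
    conj (Matrix.of p.1) p.2 := by
  have h1 : Continuous fun p : (Fin d → Fin d → ℂ) × HermCoord d => Matrix.of p.1 :=
    continuous_matrix fun a b => by simp only [Matrix.of_apply]; fun_prop
  have h2 : Continuous fun p : (Fin d → Fin d → ℂ) × HermCoord d => toMat p.2 :=
    continuous_toMat.comp continuous_snd
  simp only [conj_eq_ofMat]
  exact (continuous_ofMat.comp ((h1.matrix_mul h2).matrix_mul
    h1.matrix_conjTranspose)).measurable

/-- Coordinates of `W Wᴴ` for a square matrix `W` given by its rows. -/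
noncomputable def outer (W : Fin d → Fin d → ℂ) : HermCoord d := conj (Matrix.of W) (ofMat 1)

theorem toMat_outer (W : Fin d → Fin d → ℂ) :
    toMat (outer W) = Matrix.of W * (Matrix.of W)ᴴ := by
  rw [outer, toMat_conj, toMat_ofMat isHermitian_one, Matrix.mul_one]

theorem outer_eq_gram (W : Fin d → Fin d → ℂ) : outer W = gram fun r a => W a r := by
  apply toMat_injective
  rw [toMat_outer, toMat_gram]
  ext a b
  simp [gramMat, Matrix.mul_apply]

theorem continuous_outer : Continuous (outer : (Fin d → Fin d → ℂ) → HermCoord d) := by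
  have : (outer : (Fin d → Fin d → ℂ) → HermCoord d) = fun W => gram fun r a => W a r :=
    funext outer_eq_gram
  rw [this]
  exact continuous_gram.comp (by fun_prop)

theorem measurable_outer : Measurable (outer : (Fin d → Fin d → ℂ) → HermCoord d) :=
  continuous_outer.measurable

theorem hdet_outer (W : Fin d → Fin d → ℂ) : hdet (outer W) = hdet (gram W) := by
  rw [hdet, hdet, toMat_outer, toMat_gram, gramMat_eq, det_mul, det_mul, det_conjTranspose,
    det_conjTranspose, det_transpose]

theorem norm_sq_le_norm_outer (W : Fin d → Fin d → ℂ) : ‖W‖ ^ 2 ≤ ‖outer W‖ := by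
  have h : ‖W‖ ≤ ‖fun r a => W a r‖ :=
    (pi_norm_le_iff_of_nonneg (norm_nonneg _)).2 fun a =>
      (pi_norm_le_iff_of_nonneg (norm_nonneg _)).2 fun r =>
        (norm_le_pi_norm (fun a => W a r) a).trans (norm_le_pi_norm (fun r a => W a r) r)
  rw [outer_eq_gram]
  exact (pow_le_pow_left₀ (norm_nonneg _) h 2).trans (norm_sq_le_norm_gram _)

/-- A test function whose composition with `outer` has positive and finite integral. -/
noncomputable def bump (x : HermCoord d) : ENNReal :=
  ENNReal.ofReal (hdet x ^ d) * (Metric.closedBall 0 1).indicator 1 x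

theorem measurable_bump : Measurable (bump : HermCoord d → ENNReal) :=
  (continuous_hdet.measurable.pow_const _).ennreal_ofReal.mul
    (measurable_one.indicator measurableSet_closedBall)

theorem lintegral_bump : ∫⁻ W, bump (outer W) ∂(invMeas d (Fin d)) =
    volume (outer ⁻¹' Metric.closedBall (0 : HermCoord d) 1) := by
  have hb : Measurable fun W : Fin d → Fin d → ℂ => bump (outer W) :=
    measurable_bump.comp measurable_outer
  rw [invMeas, lintegral_withDensity_eq_lintegral_mul _ measurable_invMeas_density hb,
    ← lintegral_indicator_one (measurable_outer measurableSet_closedBall)]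
  refine lintegral_congr_ae ?_
  filter_upwards [ae_posDef_gramMat (κ := Fin d) (d := d) (by simp)] with W hW
  rw [← toMat_gram] at hW
  have hpos := hdet_pos hW
  simp only [Pi.mul_apply, bump, Fintype.card_fin, hdet_outer]
  rw [← mul_assoc, ← ENNReal.ofReal_mul (by positivity), inv_mul_cancel₀ (by positivity),
    ENNReal.ofReal_one, one_mul]
  rfl

theorem lintegral_bump_ne_top : ∫⁻ W, bump (outer W) ∂(invMeas d (Fin d)) ≠ ⊤ := by
  rw [lintegral_bump]
  refine (lt_of_le_of_lt (measure_mono (t := Metric.closedBall 0 1) fun W hW => ?_)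
    (isCompact_closedBall _ _).measure_lt_top).ne
  rw [Set.mem_preimage, mem_closedBall_zero_iff] at hW
  rw [mem_closedBall_zero_iff]
  have := (norm_sq_le_norm_outer W).trans hW
  exact (sq_le_one_iff₀ (norm_nonneg _)).1 this

theorem lintegral_bump_ne_zero : ∫⁻ W, bump (outer W) ∂(invMeas d (Fin d)) ≠ 0 := by
  rw [lintegral_bump]
  refine (lt_of_lt_of_le ((Metric.isOpen_ball.preimage continuous_outer).measure_pos volume
    ⟨0, ?_⟩) (measure_mono (Set.preimage_mono Metric.ball_subset_closedBall))).ne'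
  rw [Set.mem_preimage, outer_eq_gram]
  have : (fun r a => (0 : Fin d → Fin d → ℂ) a r) = 0 := rfl
  rw [this, gram_zero]
  simp

end

section

variable {d : ℕ} {κ : Type*} [Fintype κ]

open scoped MatrixOrder in
theorem exists_sqrt {A : Matrix (Fin d) (Fin d) ℂ} (hA : A.PosDef) :
    ∃ h : Matrix (Fin d) (Fin d) ℂ, h.PosDef ∧ h * h = A := by
  have h0 := CFC.sqrt_mul_sqrt_self A hA.posSemidef.nonneg
  have hps : (CFC.sqrt A).PosSemidef := Matrix.nonneg_iff_posSemidef.1 (CFC.sqrt_nonneg A)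
  refine ⟨CFC.sqrt A, hps.posDef_iff_det_ne_zero.2 fun hz => hA.det_pos.ne' ?_, h0⟩
  rw [← h0, det_mul, hz, zero_mul]

theorem of_lmul_transpose (h : Matrix (Fin d) (Fin d) ℂ) (W : Fin d → Fin d → ℂ) :
    Matrix.of (lmul (Fin d) hᵀ W) = Matrix.of W * h := by
  ext a b
  simp [lmul_apply, Matrix.mulVec, dotProduct, Matrix.mul_apply, mul_comm]

theorem ae_invMeas_det_ne_zero : ∀ᵐ W ∂(invMeas d (Fin d)), (Matrix.of W).det ≠ 0 := by
  filter_upwards [ae_invMeas_posDef (κ := Fin d) (d := d) (by simp)] with W hW h0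
  have h1 := hdet_pos hW
  rw [← hdet_outer, hdet, toMat_outer, det_mul, h0, zero_mul] at h1
  simp at h1

theorem lintegral_comp_conj {ν : Measure (HermCoord d)}
    (hν : ∀ g : Matrix (Fin d) (Fin d) ℂ, g.det ≠ 0 → ν.map (conj g) = ν)
    {g : Matrix (Fin d) (Fin d) ℂ} (hg : g.det ≠ 0) {f : HermCoord d → ENNReal}
    (hf : Measurable f) : ∫⁻ x, f (conj g x) ∂ν = ∫⁻ x, f x ∂ν := by
  conv_rhs => rw [← hν g hg, lintegral_map hf (measurable_conj g)]

theorem outer_eq_conj_mul {h : Matrix (Fin d) (Fin d) ℂ} (h0 : h.det ≠ 0) {x : HermCoord d}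
    (hx : toMat x = hᴴ * h) (W : Fin d → Fin d → ℂ) :
    outer W = conj (Matrix.of W * h) (hinv x) := by
  have hu : IsUnit h.det := isUnit_iff_ne_zero.2 h0
  have hu' : IsUnit hᴴ.det := by
    rw [det_conjTranspose]; exact isUnit_iff_ne_zero.2 (star_ne_zero.2 h0)
  have e : h * (hᴴ * h)⁻¹ * hᴴ = 1 := by
    rw [Matrix.mul_inv_rev, Matrix.mul_assoc, Matrix.mul_assoc, Matrix.nonsing_inv_mul _ hu',
      Matrix.mul_one, Matrix.mul_nonsing_inv _ hu]
  apply toMat_injective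
  rw [toMat_outer, toMat_conj, toMat_hinv, hx, conjTranspose_mul]
  calc Matrix.of W * (Matrix.of W)ᴴ
      = Matrix.of W * (h * (hᴴ * h)⁻¹ * hᴴ) * (Matrix.of W)ᴴ := by rw [e, Matrix.mul_one]
    _ = _ := by simp only [Matrix.mul_assoc]

theorem outer_lmul {h : Matrix (Fin d) (Fin d) ℂ} {x : HermCoord d}
    (hx : toMat x = h * hᴴ) (W : Fin d → Fin d → ℂ) :
    outer (lmul (Fin d) hᵀ W) = conj (Matrix.of W) x := by
  apply toMat_injective
  rw [toMat_outer, of_lmul_transpose, toMat_conj, hx, conjTranspose_mul]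
  simp only [Matrix.mul_assoc]

theorem measurable_bump_conj_hinv : Measurable fun p : (Fin d → Fin d → ℂ) × HermCoord d =>
    bump (conj (Matrix.of p.1) (hinv p.2)) := by
  have h1 : Measurable fun p : (Fin d → Fin d → ℂ) × HermCoord d => (p.1, hinv p.2) :=
    measurable_fst.prodMk (measurable_hinv.comp measurable_snd)
  have h2 := measurable_conj_uncurry.comp h1
  exact measurable_bump.comp h2

theorem measurable_bump_conj_hinv_left (x : HermCoord d) :
    Measurable fun V : Fin d → Fin d → ℂ => bump (conj (Matrix.of V) (hinv x)) := by
  have h1 : Measurable fun V : Fin d → Fin d → ℂ => (V, hinv x) := measurable_prodMk_right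
  have h2 := measurable_conj_uncurry.comp h1
  exact measurable_bump.comp h2

theorem measurable_bump_conj_hinv_right (V : Fin d → Fin d → ℂ) :
    Measurable fun x : HermCoord d => bump (conj (Matrix.of V) (hinv x)) := by
  have h2 := (measurable_conj (Matrix.of V)).comp measurable_hinv
  exact measurable_bump.comp h2

theorem lintegral_bump_mul_conj {f : HermCoord d → ENNReal} (hf : Measurable f)
    {x : HermCoord d} (hx : x ∈ pdSet d) :
    ∫⁻ W, bump (outer W) * f (conj (Matrix.of W) x) ∂(invMeas d (Fin d)) =
      ∫⁻ V, bump (conj (Matrix.of V) (hinv x)) * f (outer V) ∂(invMeas d (Fin d)) := by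
  obtain ⟨h, hh, hxh⟩ := exists_sqrt hx
  have h0 : h.det ≠ 0 := hh.det_pos.ne'
  have hxh1 : toMat x = h * hᴴ := by rw [hh.isHermitian.eq, hxh]
  have hxh2 : toMat x = hᴴ * h := by rw [hh.isHermitian.eq, hxh]
  have hm1 : Measurable fun V : Fin d → Fin d → ℂ => bump (conj (Matrix.of V) (hinv x)) :=
    measurable_bump_conj_hinv_left x
  have hm2 : Measurable fun V : Fin d → Fin d → ℂ => f (outer V) := hf.comp measurable_outer
  have hm3 : Measurable fun V : Fin d → Fin d → ℂ =>
      bump (conj (Matrix.of V) (hinv x)) * f (outer V) := hm1.mul hm2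
  rw [← lintegral_invMeas_lmul (g := hᵀ) (by rwa [det_transpose]) hm3]
  refine lintegral_congr fun W => ?_
  rw [of_lmul_transpose, ← outer_eq_conj_mul h0 hxh2, outer_lmul hxh1]

/-- Uniqueness of the invariant measure on the cone of positive definite matrices. -/
theorem eq_smul_of_conj_invariant (ν : Measure (HermCoord d)) [SFinite ν]
    (hpd : ∀ᵐ x ∂ν, x ∈ pdSet d)
    (hν : ∀ g : Matrix (Fin d) (Fin d) ℂ, g.det ≠ 0 → ν.map (conj g) = ν) :
    ∃ c : ENNReal, ν = c • (invMeas d (Fin d)).map outer := by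
  set η := invMeas d (Fin d) with hη
  set a := ∫⁻ W, bump (outer W) ∂η with ha
  set k := ∫⁻ x, bump (hinv x) ∂ν with hk
  have key : ∀ f : HermCoord d → ENNReal, Measurable f →
      a * ∫⁻ x, f x ∂ν = k * ∫⁻ W, f (outer W) ∂η := by
    intro f hf
    have hbo : Measurable fun W : Fin d → Fin d → ℂ => bump (outer W) :=
      measurable_bump.comp measurable_outer
    have hfo : Measurable fun W : Fin d → Fin d → ℂ => f (outer W) := hf.comp measurable_outer
    have hm1 : Measurable fun p : (Fin d → Fin d → ℂ) × HermCoord d =>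
        bump (outer p.1) * f (conj (Matrix.of p.1) p.2) :=
      (hbo.comp measurable_fst).mul (hf.comp measurable_conj_uncurry)
    have hm2 : Measurable fun p : (Fin d → Fin d → ℂ) × HermCoord d =>
        bump (conj (Matrix.of p.1) (hinv p.2)) * f (outer p.1) :=
      measurable_bump_conj_hinv.mul (hfo.comp measurable_fst)
    calc a * ∫⁻ x, f x ∂ν = ∫⁻ W, bump (outer W) * ∫⁻ x, f x ∂ν ∂η := by
          rw [lintegral_mul_const _ hbo]
      _ = ∫⁻ W, ∫⁻ x, bump (outer W) * f (conj (Matrix.of W) x) ∂ν ∂η := by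
          refine lintegral_congr_ae ?_
          filter_upwards [ae_invMeas_det_ne_zero] with W hW
          have hfc : Measurable fun x => f (conj (Matrix.of W) x) := 
            hf.comp (measurable_conj (Matrix.of W))
          rw [lintegral_const_mul _ hfc, lintegral_comp_conj hν hW hf]
      _ = ∫⁻ x, ∫⁻ W, bump (outer W) * f (conj (Matrix.of W) x) ∂η ∂ν :=
          lintegral_lintegral_swap hm1.aemeasurable
      _ = ∫⁻ x, ∫⁻ V, bump (conj (Matrix.of V) (hinv x)) * f (outer V) ∂η ∂ν := by
          refine lintegral_congr_ae ?_
          filter_upwards [hpd] with x hx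
          exact lintegral_bump_mul_conj hf hx
      _ = ∫⁻ V, ∫⁻ x, bump (conj (Matrix.of V) (hinv x)) * f (outer V) ∂ν ∂η :=
          (lintegral_lintegral_swap hm2.aemeasurable).symm
      _ = ∫⁻ V, k * f (outer V) ∂η := by
          refine lintegral_congr_ae ?_
          filter_upwards [ae_invMeas_det_ne_zero] with V hV
          have hm4 : Measurable fun x => bump (conj (Matrix.of V) (hinv x)) :=
            measurable_bump_conj_hinv_right V
          rw [lintegral_mul_const _ hm4]
          congr 1
          simp only [conj_hinv hV]
          refine lintegral_comp_conj hν (f := fun x => bump (hinv x)) ?_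
            (measurable_bump.comp measurable_hinv)
          rw [det_conjTranspose, Matrix.det_nonsing_inv, Ring.inverse_eq_inv']
          exact star_ne_zero.2 (inv_ne_zero hV)
      _ = k * ∫⁻ W, f (outer W) ∂η := lintegral_const_mul _ hfo
  refine ⟨a⁻¹ * k, Measure.ext fun s hs => ?_⟩
  have h := key (s.indicator 1) (measurable_one.indicator hs)
  rw [← lintegral_map (measurable_one.indicator hs) measurable_outer,
    lintegral_indicator_one hs, lintegral_indicator_one hs] at h
  rw [Measure.smul_apply, smul_eq_mul, mul_assoc, ← h, ← mul_assoc,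
    ENNReal.inv_mul_cancel lintegral_bump_ne_zero lintegral_bump_ne_top, one_mul]

/-- Two `σ`-finite measures proportional to a common one, the second being nonzero, are
proportional. -/
theorem eq_smul_of_smul_smul {α : Type*} [MeasurableSpace α] {ν₁ ν₂ ρ : Measure α}
    [SigmaFinite ν₁] [SigmaFinite ν₂] (h1 : ν₁ ≠ 0) (h2 : ν₂ ≠ 0) {c₁ c₂ : ENNReal}
    (e1 : ν₁ = c₁ • ρ) (e2 : ν₂ = c₂ • ρ) :
    ∃ c : ENNReal, c ≠ 0 ∧ c ≠ ⊤ ∧ ν₁ = c • ν₂ := by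
  have aux : ∀ (ν : Measure α) [SigmaFinite ν] (c : ENNReal), ν ≠ 0 → ν = c • ρ →
      c ≠ 0 ∧ c ≠ ⊤ := by
    intro ν _ c hν e
    refine ⟨fun h => hν (by rw [e, h, zero_smul]), fun h => hν ?_⟩
    have hr : ∀ i, ν (spanningSets ν i) = 0 := fun i => by
      have hlt := measure_spanningSets_lt_top ν i
      have h0 : ρ (spanningSets ν i) = 0 := by
        by_contra hne
        have e' := congrArg (fun m => m (spanningSets ν i)) e
        simp only [Measure.smul_apply, smul_eq_mul, h, ENNReal.top_mul hne] at e'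
        exact hlt.ne e'
      have e' := congrArg (fun m => m (spanningSets ν i)) e
      simpa [h0] using e'
    rw [← Measure.measure_univ_eq_zero, ← iUnion_spanningSets ν]
    exact measure_iUnion_null hr
  obtain ⟨h10, h1t⟩ := aux ν₁ c₁ h1 e1
  obtain ⟨h20, h2t⟩ := aux ν₂ c₂ h2 e2
  refine ⟨c₁ * c₂⁻¹, mul_ne_zero h10 (ENNReal.inv_ne_zero.2 h2t),
    ENNReal.mul_ne_top h1t (ENNReal.inv_ne_top.2 h20), ?_⟩
  rw [e1, e2, smul_smul, mul_assoc, ENNReal.inv_mul_cancel h20 h2t, mul_one]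

end

section

variable {d : ℕ} {κ : Type*} [Fintype κ]

theorem map_eq_self_of_lintegral {α : Type*} [MeasurableSpace α] {ν : Measure α} {T : α → α}
    (hT : Measurable T)
    (h : ∀ f : α → ENNReal, Measurable f → ∫⁻ x, f (T x) ∂ν = ∫⁻ x, f x ∂ν) : ν.map T = ν := by
  refine Measure.ext_of_lintegral _ fun f hf => ?_
  rw [lintegral_map hf hT, h f hf]

theorem map_conj_map_gram {g : Matrix (Fin d) (Fin d) ℂ} (hg : g.det ≠ 0) :
    ((invMeas d κ).map gram).map (conj g) = (invMeas d κ).map gram := by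
  refine map_eq_self_of_lintegral (measurable_conj g) fun f hf => ?_
  have hfc : Measurable fun x => f (conj g x) := hf.comp (measurable_conj g)
  have hfg : Measurable fun W : κ → Fin d → ℂ => f (gram W) := hf.comp measurable_gram
  rw [lintegral_map hfc measurable_gram, lintegral_map hf measurable_gram,
    ← lintegral_invMeas_lmul hg hfg]
  simp only [gram_lmul]

/-- The density `det x ^ k` on the cone of positive definite matrices. -/
noncomputable def pdDensity (k : ℤ) (x : HermCoord d) : ENNReal :=
  (pdSet d).indicator (fun x => ENNReal.ofReal (hdet x ^ k)) x

theorem measurable_pdDensity (k : ℤ) :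
    Measurable (pdDensity k : HermCoord d → ENNReal) := by
  have h : Measurable fun x : HermCoord d => ENNReal.ofReal (hdet x ^ k) :=
    (continuous_hdet.measurable.pow_const k).ennreal_ofReal
  exact h.indicator measurableSet_pdSet

theorem pdDensity_ne_top (k : ℤ) (x : HermCoord d) : pdDensity k x ≠ ⊤ := by
  rw [pdDensity, Set.indicator_apply]
  split_ifs <;> simp

theorem pdDensity_conj (k : ℤ) {g : Matrix (Fin d) (Fin d) ℂ} (hg : g.det ≠ 0)
    (x : HermCoord d) :
    pdDensity k (conj g x) = ENNReal.ofReal ((‖g.det‖ ^ 2) ^ k) * pdDensity k x := by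
  simp only [pdDensity, Set.indicator_apply, conj_mem_pdSet hg]
  split_ifs with hx
  · rw [hdet_conj, mul_zpow, ENNReal.ofReal_mul (by positivity)]
  · rw [mul_zero]

theorem map_conj_withDensity {g : Matrix (Fin d) (Fin d) ℂ} (hg : g.det ≠ 0) :
    (volume.withDensity (pdDensity (-d : ℤ))).map (conj g) =
      volume.withDensity (pdDensity (-d : ℤ)) := by
  refine map_eq_self_of_lintegral (measurable_conj g) fun f hf => ?_
  have hfc : Measurable fun x => f (conj g x) := hf.comp (measurable_conj g)
  have hg' : 0 < ‖g.det‖ := norm_pos_iff.2 hg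
  have hdet0 : LinearMap.det (conj g) ≠ 0 := by
    rw [← abs_ne_zero, abs_det_conj]; positivity
  rw [lintegral_withDensity_eq_lintegral_mul _ (measurable_pdDensity _) hfc,
    lintegral_withDensity_eq_lintegral_mul _ (measurable_pdDensity _) hf]
  have hFm : Measurable (pdDensity (-d : ℤ) * f) := (measurable_pdDensity _).mul hf
  have hFc : Measurable fun x => (pdDensity (-d : ℤ) * f : HermCoord d → ENNReal) (conj g x) :=
    hFm.comp (measurable_conj g)
  have h1 := lintegral_comp_linearMap volume hdet0 hFm
  have h2 : ∀ x, (pdDensity (-d : ℤ) * fun x => f (conj g x) : HermCoord d → ENNReal) x =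
      ENNReal.ofReal |LinearMap.det (conj g)| *
        (pdDensity (-d : ℤ) * f : HermCoord d → ENNReal) (conj g x) := by
    intro x
    simp only [Pi.mul_apply]
    rw [pdDensity_conj _ hg, ← mul_assoc, ← mul_assoc, ← ENNReal.ofReal_mul (abs_nonneg _),
      abs_det_conj, _root_.zpow_neg, zpow_natCast, ← pow_mul, mul_inv_cancel₀ (by positivity),
      ENNReal.ofReal_one, one_mul]
  rw [lintegral_congr h2, lintegral_const_mul _ hFc, h1, ← mul_assoc,
    ← ENNReal.ofReal_mul (abs_nonneg _), mul_inv_cancel₀ (abs_ne_zero.2 hdet0),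
    ENNReal.ofReal_one, one_mul]

open scoped MatrixOrder Matrix.Norms.L2Operator in
theorem exists_add_smul_one_posSemidef {A : Matrix (Fin d) (Fin d) ℂ} (hA : A.IsHermitian) :
    ∃ k : ℕ, (A + (k : ℝ) • (1 : Matrix (Fin d) (Fin d) ℂ)).PosSemidef := by
  obtain ⟨k, hk⟩ := exists_nat_ge ‖A‖
  refine ⟨k, ?_⟩
  have h1 := IsSelfAdjoint.neg_algebraMap_norm_le_self (a := A) hA
  rw [Algebra.algebraMap_eq_smul_one, Matrix.le_iff, sub_neg_eq_add] at h1
  have h2 : (((k : ℝ) - ‖A‖) • (1 : Matrix (Fin d) (Fin d) ℂ)).PosSemidef :=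
    PosSemidef.one.smul (sub_nonneg.2 hk)
  have h3 : A + (k : ℝ) • (1 : Matrix (Fin d) (Fin d) ℂ) =
      A + ‖A‖ • 1 + ((k : ℝ) - ‖A‖) • (1 : Matrix (Fin d) (Fin d) ℂ) := by
    rw [sub_smul]; abel
  rw [h3]
  exact h1.add h2

theorem ae_posSemidef_iff : ∀ᵐ x : HermCoord d, (toMat x).PosSemidef ↔ x ∈ pdSet d := by
  filter_upwards [ae_det_toMat_ne_zero] with x hx
  exact ⟨fun h => h.posDef_iff_det_ne_zero.2 hx, fun h => h.posSemidef⟩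

theorem volume_pdSet_ne_zero : volume (pdSet d) ≠ 0 := by
  intro h0
  have h1 : volume {x : HermCoord d | (toMat x).PosSemidef} = 0 := by
    rw [← h0]
    exact measure_congr (ae_posSemidef_iff.mono fun x hx => propext hx)
  have hcov : (Set.univ : Set (HermCoord d)) ⊆
      ⋃ k : ℕ, (fun x => x + (k : ℝ) • ofMat 1) ⁻¹' {x | (toMat x).PosSemidef} := by
    intro x _
    obtain ⟨k, hk⟩ := exists_add_smul_one_posSemidef (isHermitian_toMat x)
    refine Set.mem_iUnion.2 ⟨k, ?_⟩
    rw [Set.mem_preimage, Set.mem_ofPred_eq, map_add, map_smul, toMat_ofMat isHermitian_one]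
    exact hk
  have : volume (Set.univ : Set (HermCoord d)) = 0 := by
    refine measure_mono_null hcov (measure_iUnion_null fun k => ?_)
    rw [measure_preimage_add_right, h1]
  exact NeZero.ne (volume : Measure (HermCoord d)) (Measure.measure_univ_eq_zero.1 this)

instance sigmaFinite_withDensity_pdDensity (k : ℤ) :
    SigmaFinite ((volume : Measure (HermCoord d)).withDensity (pdDensity k)) :=
  SigmaFinite.withDensity_of_ne_top (Filter.Eventually.of_forall (pdDensity_ne_top k))

instance sigmaFinite_map_gram :
    SigmaFinite ((volume : Measure (κ → Fin d → ℂ)).map gram) := by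
  refine ⟨⟨⟨fun k => Metric.closedBall 0 k, fun _ => trivial, fun k => ?_, ?_⟩⟩⟩
  · rw [Measure.map_apply measurable_gram measurableSet_closedBall]
    exact volume_gram_preimage_lt_top _
  · exact Metric.iUnion_closedBall_nat 0

/-- The law of `W Wᴴ` under Lebesgue measure. -/
theorem exists_map_gram_eq (hκ : d ≤ Fintype.card κ) :
    ∃ c : ENNReal, c ≠ 0 ∧ c ≠ ⊤ ∧ (volume : Measure (κ → Fin d → ℂ)).map gram =
      c • volume.withDensity (pdDensity (Fintype.card κ - d : ℤ)) := by
  set m := Fintype.card κ with hm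
  have hq : Measurable fun x : HermCoord d => ENNReal.ofReal (hdet x ^ m) :=
    (continuous_hdet.measurable.pow_const m).ennreal_ofReal
  obtain ⟨c₁, h₁⟩ := eq_smul_of_conj_invariant ((invMeas d κ).map gram)
    ((ae_map_iff measurable_gram.aemeasurable measurableSet_pdSet).2 (ae_invMeas_posDef hκ))
    fun g hg => map_conj_map_gram hg
  obtain ⟨c₂, h₂⟩ := eq_smul_of_conj_invariant (volume.withDensity (pdDensity (-d : ℤ)))
    (by
      rw [ae_withDensity_iff (measurable_pdDensity _)]
      refine Filter.Eventually.of_forall fun x hx => ?_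
      by_contra hxn
      exact hx (Set.indicator_of_notMem hxn _))
    fun g hg => map_conj_withDensity hg
  refine eq_smul_of_smul_smul (c₁ := c₁) (c₂ := c₂)
    (ρ := ((invMeas d (Fin d)).map outer).withDensity fun x => ENNReal.ofReal (hdet x ^ m))
    ?_ ?_ ?_ ?_
  · intro h
    have := (Measure.map_eq_zero_iff measurable_gram.aemeasurable).1 h
    exact NeZero.ne _ this
  · intro h
    rw [withDensity_eq_zero_iff (measurable_pdDensity _).aemeasurable] at h
    refine volume_pdSet_ne_zero (d := d) (measure_mono_null (fun x hx => ?_) h)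
    have hx' := hdet_pos hx
    simp only [Set.mem_compl_iff, Set.mem_ofPred_eq, pdDensity, Set.indicator_of_mem hx,
      Pi.zero_apply, ENNReal.ofReal_eq_zero, not_le]
    positivity
  · rw [← withDensity_smul_measure, ← h₁]
    refine Measure.ext_of_lintegral _ fun f hf => ?_
    have hqg : Measurable fun W : κ → Fin d → ℂ =>
        ((fun x => ENNReal.ofReal (hdet x ^ m)) * f : HermCoord d → ENNReal) (gram W) :=
      (hq.mul hf).comp measurable_gram
    rw [lintegral_withDensity_eq_lintegral_mul _ hq hf, lintegral_map (hq.mul hf) measurable_gram,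
      lintegral_map hf measurable_gram, invMeas,
      lintegral_withDensity_eq_lintegral_mul _ measurable_invMeas_density hqg]
    refine lintegral_congr_ae ?_
    filter_upwards [ae_posDef_gramMat (κ := κ) hκ] with W hW
    rw [← toMat_gram] at hW
    have hpos := hdet_pos hW
    simp only [Pi.mul_apply]
    rw [← mul_assoc, ← ENNReal.ofReal_mul (by positivity), inv_mul_cancel₀ (by positivity),
      ENNReal.ofReal_one, one_mul]
  · rw [← withDensity_smul_measure, ← h₂, ← withDensity_mul _ (measurable_pdDensity _) hq]
    congr 1
    funext x
    simp only [Pi.mul_apply, pdDensity, Set.indicator_apply]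
    split_ifs with hx
    · have hpos := hdet_pos hx
      rw [← ENNReal.ofReal_mul (by positivity), sub_eq_neg_add, zpow_add₀ hpos.ne',
        zpow_natCast]
    · rw [zero_mul]

end

section

variable {d : ℕ} {κ : Type*} [Fintype κ]

open scoped MatrixOrder in
/-- Coordinates of the positive square root, on the positive definite cone. -/
noncomputable def hsqrt (x : HermCoord d) : HermCoord d :=
  (pdSet d).piecewise (fun x => ofMat (CFC.sqrt (toMat x))) (fun _ => ofMat 1) x

open scoped MatrixOrder Matrix.Norms.L2Operator in
theorem measurable_hsqrt : Measurable (hsqrt : HermCoord d → HermCoord d) := by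
  refine ContinuousOn.measurable_piecewise ?_ continuousOn_const measurableSet_pdSet
  refine continuous_ofMat.comp_continuousOn ?_
  exact CFC.continuousOn_sqrt.comp continuous_toMat.continuousOn fun x hx =>
    (PosDef.posSemidef hx).nonneg

open scoped MatrixOrder in
theorem toMat_hsqrt {x : HermCoord d} (hx : x ∈ pdSet d) :
    toMat (hsqrt x) = CFC.sqrt (toMat x) := by
  rw [hsqrt, Set.piecewise_eq_of_mem _ _ _ hx]
  exact toMat_ofMat (CFC.sqrt_nonneg (toMat x)).posSemidef.isHermitian

open scoped MatrixOrder in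
theorem hsqrt_mul_self {x : HermCoord d} (hx : x ∈ pdSet d) :
    toMat (hsqrt x) * toMat (hsqrt x) = toMat x := by
  rw [toMat_hsqrt hx]
  exact CFC.sqrt_mul_sqrt_self _ (PosDef.posSemidef hx).nonneg

theorem det_hsqrt_ne_zero (x : HermCoord d) : (toMat (hsqrt x)).det ≠ 0 := by
  by_cases hx : x ∈ pdSet d
  · intro h
    refine (PosDef.det_pos hx).ne' ?_
    rw [← hsqrt_mul_self hx, det_mul, h, zero_mul]
  · rw [hsqrt, Set.piecewise_eq_of_notMem _ _ _ hx, toMat_ofMat isHermitian_one]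
    simp

/-- The inverse of the positive square root, as a matrix. -/
noncomputable def invSqrt (x : HermCoord d) : Matrix (Fin d) (Fin d) ℂ := (toMat (hsqrt x))⁻¹

theorem det_invSqrt_ne_zero (x : HermCoord d) : (invSqrt x).det ≠ 0 := by
  rw [invSqrt, det_nonsing_inv, Ring.inverse_eq_inv']
  exact inv_ne_zero (det_hsqrt_ne_zero x)

theorem isHermitian_invSqrt (x : HermCoord d) : (invSqrt x).IsHermitian :=
  (isHermitian_toMat _).inv

theorem invSqrt_mul_mul_conjTranspose {x : HermCoord d} (hx : x ∈ pdSet d) :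
    invSqrt x * toMat x * (invSqrt x)ᴴ = 1 := by
  have hu := isUnit_iff_ne_zero.2 (det_hsqrt_ne_zero x)
  rw [(isHermitian_invSqrt x).eq, ← hsqrt_mul_self hx, invSqrt, ← Matrix.mul_assoc,
    nonsing_inv_mul _ hu, Matrix.one_mul, mul_nonsing_inv _ hu]

theorem conj_invSqrt {x : HermCoord d} (hx : x ∈ pdSet d) : conj (invSqrt x) x = ofMat 1 := by
  rw [conj_eq_ofMat, invSqrt_mul_mul_conjTranspose hx]

theorem measurable_invSqrt (a b : Fin d) : Measurable fun x : HermCoord d => invSqrt x a b := by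
  have h := (continuous_toMat.matrix_elem a b).measurable.comp
    (measurable_hinv.comp measurable_hsqrt)
  simpa only [Function.comp_def, toMat_hinv, invSqrt] using h

/-- Normalization by the inverse square root of the first variable. -/
theorem measurable_conj_invSqrt :
    Measurable fun p : HermCoord d × HermCoord d => conj (invSqrt p.1) p.2 := by
  have h1 : Measurable fun p : HermCoord d × HermCoord d =>
      ((fun a b => invSqrt p.1 a b : Fin d → Fin d → ℂ), p.2) :=
    (measurable_pi_lambda _ fun a => measurable_pi_lambda _ fun b =>
      (measurable_invSqrt a b).comp measurable_fst).prodMk measurable_snd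
  have h2 := measurable_conj_uncurry.comp h1
  have h3 : ∀ x : HermCoord d, (Matrix.of fun a b => invSqrt x a b) = invSqrt x := fun _ => rfl
  simpa only [Function.comp_def, h3] using h2

end

section

variable {d : ℕ} {κ : Type*} [Fintype κ]

theorem lintegral_fin_prod {E : Type*} [MeasureSpace E] [SigmaFinite (volume : Measure E)] :
    ∀ {n : ℕ} (f : Fin n → E → ENNReal), (∀ i, Measurable (f i)) →
      ∫⁻ x : Fin n → E, ∏ i, f i (x i) = ∏ i, ∫⁻ x, f i x
  | 0, f, _ => by simp [volume_pi]
  | n + 1, f, hf => by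
    have h : Measurable fun x : Fin n → E => ∏ i, f i.succ (x i) :=
      Finset.measurable_fun_prod _ fun i _ => (hf _).comp (measurable_pi_apply i)
    have e := (volume_preserving_piFinSuccAbove (fun _ : Fin (n + 1) => E) 0).symm
    rw [← e.lintegral_comp_emb (MeasurableEquiv.measurableEmbedding _), Fin.prod_univ_succ,
      ← lintegral_fin_prod _ fun i => hf i.succ]
    simp only [MeasurableEquiv.piFinSuccAbove_symm_apply, Fin.prod_univ_succ, Fin.insertNthEquiv,
      Equiv.coe_fn_mk, Fin.insertNth_zero, Fin.cons_zero, Fin.cons_succ]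
    exact lintegral_prod_mul (hf 0).aemeasurable h.aemeasurable

theorem pi_smul_withDensity {E : Type*} [MeasureSpace E] [SigmaFinite (volume : Measure E)]
    {n : ℕ} (c : Fin n → ENNReal) (f : Fin n → E → ENNReal) (hf : ∀ i, Measurable (f i))
    [∀ i, SigmaFinite (c i • (volume : Measure E).withDensity (f i))] :
    Measure.pi (fun i => c i • (volume : Measure E).withDensity (f i)) =
      (∏ i, c i) • (volume : Measure (Fin n → E)).withDensity fun x => ∏ i, f i (x i) := by
  refine Measure.pi_eq fun s hs => ?_
  rw [Measure.smul_apply, withDensity_apply _ (MeasurableSet.univ_pi hs), smul_eq_mul,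
    ← lintegral_indicator (MeasurableSet.univ_pi hs)]
  have h : ∀ x : Fin n → E, (Set.univ.pi s).indicator (fun x => ∏ i, f i (x i)) x =
      ∏ i, (s i).indicator (f i) (x i) := by
    intro x
    by_cases hx : x ∈ Set.univ.pi s
    · rw [Set.indicator_of_mem hx]
      exact Finset.prod_congr rfl fun i _ => (Set.indicator_of_mem (hx i trivial) _).symm
    · rw [Set.indicator_of_notMem hx]
      obtain ⟨i, hi⟩ : ∃ i, x i ∉ s i := by simpa [Set.mem_pi] using hx
      exact (Finset.prod_eq_zero (Finset.mem_univ i) (Set.indicator_of_notMem hi _)).symm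
  rw [lintegral_congr h, lintegral_fin_prod _ fun i => (hf i).indicator (hs i),
    ← Finset.prod_mul_distrib]
  refine Finset.prod_congr rfl fun i _ => ?_
  rw [Measure.smul_apply, withDensity_apply _ (hs i), lintegral_indicator (hs i), smul_eq_mul]

theorem map_blocks {ι ι' E : Type*} [Fintype ι] [Fintype ι'] [DecidableEq ι'] [MeasureSpace E]
    [SigmaFinite (volume : Measure E)] (b : ι → ι') :
    (volume : Measure (ι → E)).map (fun X i (r : {r // b r = i}) => X r) =
      Measure.pi fun i => (volume : Measure ({r // b r = i} → E)) := by
  have hg : Measurable fun (v : ∀ i, {r // b r = i} → E) (r : ι) => v (b r) ⟨r, rfl⟩ := by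
    refine measurable_pi_lambda _ fun r => ?_
    exact (measurable_pi_apply (⟨r, rfl⟩ : {r' // b r' = b r})).comp (measurable_pi_apply (b r))
  have hb : Measurable fun (X : ι → E) i (r : {r // b r = i}) => X r :=
    measurable_pi_lambda _ fun i => measurable_pi_lambda _ fun r => measurable_pi_apply _
  have h : (Measure.pi fun i => (volume : Measure ({r // b r = i} → E))).map
      (fun v (r : ι) => v (b r) ⟨r, rfl⟩) = volume := by
    refine (Measure.pi_eq fun s hs => ?_).symm
    rw [Measure.map_apply hg (MeasurableSet.univ_pi hs)]
    have hpre : (fun (v : ∀ i, {r // b r = i} → E) (r : ι) => v (b r) ⟨r, rfl⟩) ⁻¹'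
        Set.univ.pi s = Set.univ.pi fun i => Set.univ.pi fun r : {r // b r = i} => s r := by
      ext v
      simp only [Set.mem_preimage, Set.mem_pi, Set.mem_univ, true_imp_iff]
      exact ⟨fun hv i ⟨r, hr⟩ => by subst hr; exact hv r, fun hv r => hv (b r) ⟨r, rfl⟩⟩
    rw [hpre, Measure.pi_pi]
    simp only [volume_pi_pi]
    exact Fintype.prod_fiberwise b fun r => volume (s r)
  rw [← h, Measure.map_map hb hg]
  convert Measure.map_id using 2
  funext v i ⟨r, hr⟩
  subst hr
  rfl

theorem sum_gram_blocks {ι ι' : Type*} [Fintype ι] [Fintype ι'] [DecidableEq ι'] (b : ι → ι')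
    (X : ι → Fin d → ℂ) : ∑ i, gram (fun r : {r // b r = i} => X r) = gram X := by
  apply toMat_injective
  rw [map_sum, toMat_gram]
  simp only [toMat_gram]
  ext p q
  rw [Matrix.sum_apply]
  simp only [gramMat, Matrix.of_apply]
  exact Fintype.sum_fiberwise b fun r => X r p * star (X r q)

/-- The joint law of the Gram matrices of the blocks under Lebesgue measure. -/
theorem exists_map_gram_blocks {ι : Type*} [Fintype ι] {n : ℕ} (b : ι → Fin n)
    (hb : ∀ i, d ≤ Fintype.card {r // b r = i}) :
    ∃ c : ENNReal, (volume : Measure (ι → Fin d → ℂ)).map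
        (fun X i => gram (fun r : {r // b r = i} => X r)) =
      c • volume.withDensity fun A : Fin n → HermCoord d =>
        ∏ i, pdDensity (Fintype.card {r // b r = i} - d : ℤ) (A i) := by
  choose c _ _ hc using fun i => exists_map_gram_eq (hb i)
  have : ∀ i, SigmaFinite (c i • (volume : Measure (HermCoord d)).withDensity
      (pdDensity (Fintype.card {r // b r = i} - d : ℤ))) := fun i => by
    rw [← hc i]; infer_instance
  refine ⟨∏ i, c i, ?_⟩
  rw [← pi_smul_withDensity c _ fun i => measurable_pdDensity _]
  simp only [← hc]
  have hbl : Measurable fun (X : ι → Fin d → ℂ) i (r : {r // b r = i}) => X r :=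
    measurable_pi_lambda _ fun i => measurable_pi_lambda _ fun r => measurable_pi_apply _
  rw [← Measure.pi_map_pi fun i => measurable_gram.aemeasurable, ← map_blocks b,
    Measure.map_map _ hbl]
  · rfl
  · exact measurable_pi_lambda _ fun i => measurable_gram.comp (measurable_pi_apply i)

end

section

variable {d : ℕ} {n : ℕ}

/-- The unnormalized matrix Dirichlet density. -/
noncomputable def simplexDensity (k : Fin (n + 1) → ℤ) (z : Fin n → HermCoord d) : ENNReal :=
  (∏ j, pdDensity (k j.castSucc) (z j)) * pdDensity (k (Fin.last n)) (ofMat 1 - ∑ j, z j)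

theorem measurable_prod_pdDensity {n : ℕ} (k : Fin n → ℤ) :
    Measurable fun z : Fin n → HermCoord d => ∏ j, pdDensity (k j) (z j) :=
  Finset.measurable_fun_prod _ fun j _ => (measurable_pdDensity _).comp (measurable_pi_apply j)

theorem measurable_simplexDensity (k : Fin (n + 1) → ℤ) :
    Measurable (simplexDensity k : (Fin n → HermCoord d) → ENNReal) := by
  have h : Measurable fun z : Fin n → HermCoord d => ofMat 1 - ∑ j, z j :=
    measurable_const.sub (Finset.measurable_fun_sum _ fun j _ => measurable_pi_apply j)
  exact (measurable_prod_pdDensity _).mul ((measurable_pdDensity _).comp h)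

theorem pdDensity_of_notMem (k : ℤ) {x : HermCoord d} (hx : x ∉ pdSet d) : pdDensity k x = 0 :=
  Set.indicator_of_notMem hx _

theorem hdet_ofMat_one : hdet (ofMat 1 : HermCoord d) = 1 := by
  rw [hdet, toMat_ofMat isHermitian_one, det_one, Complex.one_re]

theorem norm_det_invSqrt_sq {s : HermCoord d} (hs : s ∈ pdSet d) :
    ‖(invSqrt s).det‖ ^ 2 = (hdet s)⁻¹ := by
  have h := hdet_conj (invSqrt s) s
  rw [conj_invSqrt hs, hdet_ofMat_one] at h
  exact eq_inv_of_mul_eq_one_left h.symm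

theorem pdDensity_eq_conj_invSqrt (k : ℤ) {s : HermCoord d} (hs : s ∈ pdSet d)
    (x : HermCoord d) :
    pdDensity k x = ENNReal.ofReal (hdet s ^ k) * pdDensity k (conj (invSqrt s) x) := by
  have hpos := hdet_pos hs
  rw [pdDensity_conj k (det_invSqrt_ne_zero s), norm_det_invSqrt_sq hs, ← mul_assoc,
    ← ENNReal.ofReal_mul (by positivity), ← mul_zpow, mul_inv_cancel₀ hpos.ne', _root_.one_zpow,
    ENNReal.ofReal_one, one_mul]

theorem mem_pdSet_of_sub_sum {s : HermCoord d} {y : Fin n → HermCoord d}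
    (hy : ∀ j, y j ∈ pdSet d) (h : s - ∑ j, y j ∈ pdSet d) : s ∈ pdSet d := by
  have h1 : (∑ j, toMat (y j)).PosSemidef :=
    posSemidef_sum _ fun j _ => PosDef.posSemidef (hy j)
  have h2 := PosDef.add_posSemidef (show (toMat (s - ∑ j, y j)).PosDef from h) h1
  rw [map_sub, map_sum, sub_add_cancel] at h2
  exact h2

/-- The exponent of the determinant of the sum in the joint density of the sum and the
normalized summands. -/
def sumExponent (d : ℕ) (k : Fin (n + 1) → ℤ) : ℤ := ∑ i, k i + d * n

theorem lintegral_normalize (k : Fin (n + 1) → ℤ) {Φ : (Fin n → HermCoord d) → ENNReal}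
    (hΦ : Measurable Φ) (s : HermCoord d) :
    ∫⁻ y : Fin n → HermCoord d, Φ (fun j => conj (invSqrt s) (y j)) *
        ((∏ j, pdDensity (k j.castSucc) (y j)) * pdDensity (k (Fin.last n)) (s - ∑ j, y j)) =
      pdDensity (sumExponent d k) s * ∫⁻ z, Φ z * simplexDensity k z := by
  by_cases hs : s ∈ pdSet d
  · have hpos := hdet_pos hs
    set L : (Fin n → HermCoord d) →ₗ[ℝ] (Fin n → HermCoord d) :=
      LinearMap.pi fun j => conj (invSqrt s) ∘ₗ LinearMap.proj j with hL
    have hLa : ∀ y : Fin n → HermCoord d, L y = fun j => conj (invSqrt s) (y j) :=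
      fun y => funext fun j => by simp [hL]
    have hLdet : |LinearMap.det L| = (hdet s ^ (d * n))⁻¹ := by
      rw [hL, LinearMap.det_pi, Finset.prod_const, abs_pow, abs_det_conj, pow_mul,
        norm_det_invSqrt_sq hs, Finset.card_univ, Fintype.card_fin, ← pow_mul, inv_pow]
    have hL0 : LinearMap.det L ≠ 0 := by
      rw [← abs_ne_zero, hLdet]; positivity
    have hG : Measurable fun z => Φ z * simplexDensity k z :=
      hΦ.mul (measurable_simplexDensity k)
    have hGL : Measurable fun z => Φ (L z) * simplexDensity k (L z) :=
      hG.comp L.continuous_of_finiteDimensional.measurable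
    have h1 := lintegral_comp_linearMap volume hL0 hG
    have h2 : ∀ y : Fin n → HermCoord d, Φ (fun j => conj (invSqrt s) (y j)) *
        ((∏ j, pdDensity (k j.castSucc) (y j)) * pdDensity (k (Fin.last n)) (s - ∑ j, y j)) =
        ENNReal.ofReal (hdet s ^ (∑ i, k i)) * (Φ (L y) * simplexDensity k (L y)) := by
      intro y
      rw [← hLa, simplexDensity]
      simp only [pdDensity_eq_conj_invSqrt _ hs (y _), pdDensity_eq_conj_invSqrt _ hs (s - _)]
      rw [Finset.prod_mul_distrib, map_sub, map_sum, conj_invSqrt hs, Fin.sum_univ_castSucc,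
        zpow_add₀ hpos.ne', ENNReal.ofReal_mul (by positivity),
        ← ENNReal.ofReal_prod_of_nonneg fun j _ => by positivity]
      have h3 : ∏ j : Fin n, hdet s ^ k j.castSucc = hdet s ^ ∑ j : Fin n, k j.castSucc := by
        induction (Finset.univ : Finset (Fin n)) using Finset.induction_on with
        | empty => simp
        | insert a t ha ih => rw [prod_insert ha, sum_insert ha, ih, zpow_add₀ hpos.ne']
      rw [h3, hLa]
      ring
    rw [lintegral_congr h2, lintegral_const_mul _ hGL, h1, ← mul_assoc,
      ← ENNReal.ofReal_mul (by positivity), ← abs_inv, abs_inv, hLdet, inv_inv, pdDensity,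
      Set.indicator_of_mem hs, sumExponent, zpow_add₀ hpos.ne', ← zpow_natCast]
    push_cast
    rfl
  · rw [pdDensity_of_notMem _ hs, zero_mul]
    refine (lintegral_congr fun y => ?_).trans lintegral_zero
    by_cases h : s - ∑ j, y j ∈ pdSet d
    · obtain ⟨j, hj⟩ : ∃ j, y j ∉ pdSet d := by
        by_contra! hy
        exact hs (mem_pdSet_of_sub_sum hy h)
      rw [Finset.prod_eq_zero (Finset.mem_univ j) (pdDensity_of_notMem _ hj), zero_mul, mul_zero]
    · rw [pdDensity_of_notMem _ h, mul_zero, mul_zero]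

/-- The first `n` of `n + 1` matrices, normalized by the inverse square root of the sum. -/
noncomputable def normalize (A : Fin (n + 1) → HermCoord d) : Fin n → HermCoord d :=
  fun j => conj (invSqrt (∑ i, A i)) (A j.castSucc)

theorem measurable_normalize_prod :
    Measurable fun p : HermCoord d × (Fin n → HermCoord d) =>
      (fun j => conj (invSqrt p.1) (p.2 j) : Fin n → HermCoord d) := by
  refine measurable_pi_lambda _ fun j => ?_
  have h : Measurable fun p : HermCoord d × (Fin n → HermCoord d) => (p.1, p.2 j) :=
    measurable_fst.prodMk ((measurable_pi_apply j).comp measurable_snd)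
  have h2 := measurable_conj_invSqrt.comp h
  exact h2

theorem measurable_normalize :
    Measurable (normalize : (Fin (n + 1) → HermCoord d) → Fin n → HermCoord d) := by
  refine measurable_pi_lambda _ fun j => ?_
  have h : Measurable fun A : Fin (n + 1) → HermCoord d => (∑ i, A i, A j.castSucc) :=
    (Finset.measurable_fun_sum _ fun j _ => measurable_pi_apply j).prodMk (measurable_pi_apply _)
  have h2 := measurable_conj_invSqrt.comp h
  exact h2

/-- Change of variables to the sum and the normalized summands. -/
theorem exists_lintegral_normalize_eq (k : Fin (n + 1) → ℤ) {h : HermCoord d → ENNReal}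
    (hh : Measurable h) :
    ∃ c : ENNReal, ∀ Φ : (Fin n → HermCoord d) → ENNReal, Measurable Φ →
      ∫⁻ A : Fin (n + 1) → HermCoord d,
        (∏ i, pdDensity (k i) (A i)) * (Φ (normalize A) * h (∑ i, A i)) =
      c * ∫⁻ z, Φ z * simplexDensity k z := by
  refine ⟨∫⁻ s, h s * pdDensity (sumExponent d k) s, fun Φ hΦ => ?_⟩
  have e := (volume_preserving_piFinSuccAbove (fun _ : Fin (n + 1) => HermCoord d)
    (Fin.last n)).symm
  rw [← e.lintegral_comp_emb (MeasurableEquiv.measurableEmbedding _)]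
  set F : HermCoord d × (Fin n → HermCoord d) → ENNReal := fun p =>
    h p.1 * (Φ (fun j => conj (invSqrt p.1) (p.2 j)) *
      ((∏ j, pdDensity (k j.castSucc) (p.2 j)) *
        pdDensity (k (Fin.last n)) (p.1 - ∑ j, p.2 j))) with hF
  have hFm : Measurable F := by
    have m1 : Measurable fun p : HermCoord d × (Fin n → HermCoord d) => h p.1 :=
      hh.comp measurable_fst
    have m2 : Measurable fun p : HermCoord d × (Fin n → HermCoord d) =>
        Φ (fun j => conj (invSqrt p.1) (p.2 j)) := hΦ.comp measurable_normalize_prod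
    have m3 : Measurable fun p : HermCoord d × (Fin n → HermCoord d) =>
        ∏ j, pdDensity (k j.castSucc) (p.2 j) :=
      (measurable_prod_pdDensity fun j => k j.castSucc).comp measurable_snd
    have m4 : Measurable fun p : HermCoord d × (Fin n → HermCoord d) => p.1 - ∑ j, p.2 j :=
      measurable_fst.sub (Finset.measurable_fun_sum _ fun j _ =>
        (measurable_pi_apply j).comp measurable_snd)
    exact m1.mul (m2.mul (m3.mul ((measurable_pdDensity _).comp m4)))
  have m5 : Measurable fun p : HermCoord d × (Fin n → HermCoord d) =>
      (p.1 + ∑ j, p.2 j, p.2) :=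
    (measurable_fst.add (Finset.measurable_fun_sum _ fun j _ =>
      (measurable_pi_apply j).comp measurable_snd)).prodMk measurable_snd
  have hFm' : Measurable fun p : HermCoord d × (Fin n → HermCoord d) =>
      F (p.1 + ∑ j, p.2 j, p.2) := hFm.comp m5
  have hrew : ∀ p : HermCoord d × (Fin n → HermCoord d),
      (∏ i, pdDensity (k i)
        ((MeasurableEquiv.piFinSuccAbove (fun _ => HermCoord d) (Fin.last n)).symm p i)) *
      (Φ (normalize ((MeasurableEquiv.piFinSuccAbove (fun _ => HermCoord d)
          (Fin.last n)).symm p)) *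
        h (∑ i, (MeasurableEquiv.piFinSuccAbove (fun _ => HermCoord d) (Fin.last n)).symm p i)) =
      F (p.1 + ∑ j, p.2 j, p.2) := by
    rintro ⟨a, y⟩
    have h1 : ∀ j : Fin n, (MeasurableEquiv.piFinSuccAbove (fun _ => HermCoord d)
        (Fin.last n)).symm (a, y) j.castSucc = y j := fun j => by
      simp [MeasurableEquiv.piFinSuccAbove_symm_apply, Fin.insertNthEquiv]
    have h2 : (MeasurableEquiv.piFinSuccAbove (fun _ => HermCoord d)
        (Fin.last n)).symm (a, y) (Fin.last n) = a := by
      simp [MeasurableEquiv.piFinSuccAbove_symm_apply, Fin.insertNthEquiv]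
    unfold normalize
    simp only [Fin.sum_univ_castSucc, Fin.prod_univ_castSucc, h1, h2, hF,
      add_comm (∑ j, y j) a, add_sub_cancel_right]
    ring
  rw [lintegral_congr hrew, Measure.volume_eq_prod, lintegral_prod_symm _ hFm'.aemeasurable]
  have htr : ∀ y : Fin n → HermCoord d,
      ∫⁻ a, F (a + ∑ j, y j, y) = ∫⁻ s, F (s, y) := fun y =>
    lintegral_add_right_eq_self (fun s => F (s, y)) (∑ j, y j)
  rw [lintegral_congr htr, lintegral_lintegral_swap (f := fun y s => F (s, y))
    (hFm.comp measurable_swap).aemeasurable]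
  have hin : ∀ s : HermCoord d, ∫⁻ y, F (s, y) =
      h s * pdDensity (sumExponent d k) s * ∫⁻ z, Φ z * simplexDensity k z := by
    intro s
    have m2 : Measurable fun y : Fin n → HermCoord d =>
        Φ (fun j => conj (invSqrt s) (y j)) *
        ((∏ j, pdDensity (k j.castSucc) (y j)) *
          pdDensity (k (Fin.last n)) (s - ∑ j, y j)) := by
      have n1 : Measurable fun y : Fin n → HermCoord d =>
          (fun j => conj (invSqrt s) (y j) : Fin n → HermCoord d) :=
        measurable_pi_lambda _ fun j => (measurable_conj _).comp (measurable_pi_apply j)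
      have n2 : Measurable fun y : Fin n → HermCoord d => s - ∑ j, y j :=
        measurable_const.sub (Finset.measurable_fun_sum _ fun j _ => measurable_pi_apply j)
      exact (hΦ.comp n1).mul ((measurable_prod_pdDensity fun j => k j.castSucc).mul
        ((measurable_pdDensity _).comp n2))
    simp only [hF]
    rw [lintegral_const_mul _ m2, lintegral_normalize k hΦ, mul_assoc]
  have m6 : Measurable fun s => h s * pdDensity (sumExponent d k) s :=
    hh.mul (measurable_pdDensity _)
  rw [lintegral_congr hin, lintegral_mul_const _ m6]

end

section

variable {d : ℕ} {n : ℕ} {N : ℕ}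

/-- Right multiplication `W ↦ W u` of a matrix given by its columns. -/
noncomputable def rmul (u : Matrix (Fin N) (Fin N) ℂ) :
    (Fin N → Fin d → ℂ) →ₗ[ℝ] (Fin N → Fin d → ℂ) where
  toFun X r a := ∑ s, X s a * u s r
  map_add' X Y := by
    funext r a
    simp [add_mul, sum_add_distrib]
  map_smul' c X := by
    funext r a
    simp [mul_sum, mul_assoc]

theorem rmul_apply (u : Matrix (Fin N) (Fin N) ℂ) (X : Fin N → Fin d → ℂ) (r : Fin N)
    (a : Fin d) : rmul u X r a = ∑ s, X s a * u s r := rfl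

theorem of_rmul_transpose (u : Matrix (Fin N) (Fin N) ℂ) (X : Fin N → Fin d → ℂ) :
    (Matrix.of (rmul u X))ᵀ = (Matrix.of X)ᵀ * u := by
  ext a r
  simp [rmul_apply, Matrix.mul_apply]

theorem rmul_mul (u v : Matrix (Fin N) (Fin N) ℂ) (X : Fin N → Fin d → ℂ) :
    rmul (u * v) X = rmul v (rmul u X) := by
  have h : (Matrix.of (rmul (u * v) X))ᵀ = (Matrix.of (rmul v (rmul u X)))ᵀ := by
    simp only [of_rmul_transpose, Matrix.mul_assoc]
  exact Matrix.of.injective (transpose_injective h)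

theorem rmul_one (X : Fin N → Fin d → ℂ) : rmul 1 X = X := by
  funext r a
  simp [rmul_apply, Matrix.one_apply]

theorem rmul_lmul (u : Matrix (Fin N) (Fin N) ℂ) (g : Matrix (Fin d) (Fin d) ℂ)
    (X : Fin N → Fin d → ℂ) : rmul u (lmul _ g X) = lmul _ g (rmul u X) := by
  funext r a
  simp only [rmul_apply, lmul_apply, mulVec, dotProduct, sum_mul, mul_sum, mul_assoc]
  exact sum_comm

theorem gram_rmul {u : Matrix (Fin N) (Fin N) ℂ} (hu : u * uᴴ = 1) (X : Fin N → Fin d → ℂ) :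
    gram (rmul u X) = gram X := by
  apply toMat_injective
  rw [toMat_gram, toMat_gram, gramMat_eq, gramMat_eq, of_rmul_transpose, conjTranspose_mul,
    Matrix.mul_assoc, ← Matrix.mul_assoc u, hu, Matrix.one_mul]

theorem lintegral_comp_rmul {u : Matrix (Fin N) (Fin N) ℂ} (hu : u * uᴴ = 1)
    {f : (Fin N → Fin d → ℂ) → ENNReal} (hf : Measurable f) :
    ∫⁻ X, f (rmul u X) = ∫⁻ X, f X := by
  have hdet : LinearMap.det (rmul u : (Fin N → Fin d → ℂ) →ₗ[ℝ] _) ≠ 0 := by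
    have h : (rmul uᴴ ∘ₗ rmul u : (Fin N → Fin d → ℂ) →ₗ[ℝ] _) = LinearMap.id := by
      refine LinearMap.ext fun X => ?_
      rw [LinearMap.comp_apply, ← rmul_mul, hu, rmul_one, LinearMap.id_apply]
    have h2 := congrArg LinearMap.det h
    rw [LinearMap.det_comp, LinearMap.det_id] at h2
    exact right_ne_zero_of_mul_eq_one h2
  set S := (gram : (Fin N → Fin d → ℂ) → HermCoord d) ⁻¹' Metric.closedBall 0 1 with hS
  have hSm : MeasurableSet S := measurable_gram measurableSet_closedBall
  have h1 := lintegral_comp_linearMap volume hdet (measurable_one.indicator hSm)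
  have h2 : ∀ X, S.indicator (1 : (Fin N → Fin d → ℂ) → ENNReal) (rmul u X) = S.indicator 1 X := fun X => by
    simp only [Set.indicator, hS, Set.mem_preimage, gram_rmul hu]
    rfl
  rw [lintegral_congr h2, lintegral_indicator_one hSm] at h1
  have h3 : ENNReal.ofReal |LinearMap.det (rmul u : (Fin N → Fin d → ℂ) →ₗ[ℝ] _)|⁻¹ = 1 := by
    have hp : volume S ≠ 0 := volume_gram_preimage_pos.ne'
    have ht : volume S ≠ ⊤ := (volume_gram_preimage_lt_top 1).ne
    rw [← ENNReal.mul_left_inj hp ht, ← h1, one_mul]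
  rw [lintegral_comp_linearMap volume hdet hf, h3, one_mul]

/-- The first `d` rows of a square matrix, given by columns. -/
def rows (hdN : d ≤ N) (u : Matrix (Fin N) (Fin N) ℂ) : Fin N → Fin d → ℂ :=
  fun r a => u (Fin.castLE hdN a) r

theorem rows_mul (hdN : d ≤ N) (g u : Matrix (Fin N) (Fin N) ℂ) :
    rows hdN (g * u) = rmul u (rows hdN g) := by
  funext r a
  simp [rows, rmul_apply, Matrix.mul_apply]

theorem exists_unitary_rows (hdN : d ≤ N) {V : Fin N → Fin d → ℂ} (hV : gramMat V = 1) :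
    ∃ g : Matrix (Fin N) (Fin N) ℂ, g * gᴴ = 1 ∧ rows hdN g = V := by
  set v : Fin N → EuclideanSpace ℂ (Fin N) := fun i =>
    if h : (i : ℕ) < d then WithLp.toLp 2 fun r => V r ⟨i, h⟩ else 0 with hv
  have ho : Orthonormal ℂ (({i : Fin N | (i : ℕ) < d} : Set (Fin N)).domRestrict v) := by
    rw [orthonormal_iff_ite]
    rintro ⟨i, hi⟩ ⟨j, hj⟩
    replace hi : (i : ℕ) < d := hi
    replace hj : (j : ℕ) < d := hj
    have h := congrFun (congrFun hV ⟨j, hj⟩) ⟨i, hi⟩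
    have hvi : v i = WithLp.toLp 2 fun r => V r ⟨i, hi⟩ := dif_pos hi
    have hvj : v j = WithLp.toLp 2 fun r => V r ⟨j, hj⟩ := dif_pos hj
    rw [Set.domRestrict_apply, Set.domRestrict_apply, hvi, hvj, PiLp.inner_apply]
    simp only [gramMat, Matrix.of_apply, Matrix.one_apply, Fin.mk.injEq] at h
    refine Eq.trans (by simp) (h.trans ?_)
    simp only [Subtype.mk.injEq, Fin.ext_iff, eq_comm]
  obtain ⟨b, hb⟩ := ho.exists_orthonormalBasis_extension_of_card_eq (by simp)
  refine ⟨Matrix.of fun i r => b i r, ?_, ?_⟩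
  · ext i j
    have h := orthonormal_iff_ite.1 b.orthonormal j i
    rw [PiLp.inner_apply] at h
    rw [Matrix.mul_apply, Matrix.one_apply]
    refine Eq.trans (by simp) (h.trans ?_)
    simp only [eq_comm]
  · funext r a
    have h := hb (Fin.castLE hdN a) a.2
    simp [rows, h, hv]

theorem exists_specialUnitary_rows (hdN : d < N) {V : Fin N → Fin d → ℂ} (hV : gramMat V = 1) :
    ∃ g ∈ Matrix.specialUnitaryGroup (Fin N) ℂ, rows hdN.le g = V := by
  obtain ⟨g, hg, hr⟩ := exists_unitary_rows hdN.le hV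
  have hdet : star g.det * g.det = 1 := by
    have h := congrArg Matrix.det hg
    rwa [det_mul, det_conjTranspose, det_one, mul_comm] at h
  set w : Fin N → ℂ := Function.update 1 ⟨d, hdN⟩ (star g.det) with hw
  have hww : Matrix.diagonal w * (Matrix.diagonal w)ᴴ = 1 := by
    rw [diagonal_conjTranspose, diagonal_mul_diagonal, ← diagonal_one]
    congr 1
    funext i
    by_cases hi : i = ⟨d, hdN⟩
    · subst hi
      simpa [hw] using hdet
    · simp [hw, hi]
  refine ⟨Matrix.diagonal w * g, ?_, ?_⟩
  · rw [mem_specialUnitaryGroup_iff, mem_unitaryGroup_iff, star_eq_conjTranspose]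
    constructor
    · rw [conjTranspose_mul, Matrix.mul_assoc, ← Matrix.mul_assoc g, hg, Matrix.one_mul, hww]
    · rw [det_mul, det_diagonal, hw, Finset.prod_update_of_mem (Finset.mem_univ _)]
      simpa using hdet
  · rw [← hr]
    funext r a
    have ha : Fin.castLE hdN.le a ≠ ⟨d, hdN⟩ := fun h => a.2.ne (congrArg Fin.val h)
    simp [rows, diagonal_mul, hw, ha]

theorem exists_specialUnitary_rows_eq (hdN : d < N) {X : Fin N → Fin d → ℂ}
    (hX : gram X ∈ pdSet d) :
    ∃ g ∈ Matrix.specialUnitaryGroup (Fin N) ℂ,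
      rows hdN.le g = lmul _ (invSqrt (gram X)) X := by
  refine exists_specialUnitary_rows hdN ?_
  rw [gramMat_lmul, ← toMat_gram, invSqrt_mul_mul_conjTranspose hX]

/-- The Gram matrices of the blocks of columns. -/
noncomputable def blockGram (b : Fin N → Fin n) (X : Fin N → Fin d → ℂ) : Fin n → HermCoord d :=
  fun i => gram (fun r : {r // b r = i} => X r)

theorem measurable_blockGram (b : Fin N → Fin n) :
    Measurable (blockGram b : (Fin N → Fin d → ℂ) → _) := by
  refine measurable_pi_lambda _ fun i => ?_
  have h : Measurable fun (X : Fin N → Fin d → ℂ) (r : {r // b r = i}) => X r :=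
    measurable_pi_lambda _ fun r => measurable_pi_apply _
  exact measurable_gram.comp h

theorem normalize_blockGram (b : Fin N → Fin (n + 1)) (X : Fin N → Fin d → ℂ) (j : Fin n) :
    normalize (blockGram b X) j =
      blockGram b (lmul _ (invSqrt (gram X)) X) j.castSucc := by
  have h : ∑ i, blockGram b X i = gram X := sum_gram_blocks b X
  rw [normalize, h]
  exact (gram_lmul _ _).symm

theorem measurable_rows (hdN : d ≤ N) : Measurable (rows hdN) := by
  refine measurable_pi_lambda _ fun r => measurable_pi_lambda _ fun a => ?_
  have h : Measurable fun u : Fin N → Fin N → ℂ => u (Fin.castLE hdN a) r :=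
    (measurable_pi_apply r).comp (measurable_pi_apply (Fin.castLE hdN a))
  exact h

theorem measurable_rmul_uncurry :
    Measurable fun p : (Fin N → Fin d → ℂ) × Matrix (Fin N) (Fin N) ℂ => rmul p.2 p.1 := by
  refine measurable_pi_lambda _ fun r => measurable_pi_lambda _ fun a => ?_
  have h1 (s : Fin N) : Measurable fun p : (Fin N → Fin d → ℂ) × Matrix (Fin N) (Fin N) ℂ => p.1 s a :=
    (measurable_pi_apply a).comp ((measurable_pi_apply s).comp measurable_fst)
  have h2 (s : Fin N) : Measurable fun u : Matrix (Fin N) (Fin N) ℂ => u s r :=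
    (measurable_pi_apply r).comp (measurable_pi_apply s)
  have h3 (s : Fin N) : Measurable fun p : (Fin N → Fin d → ℂ) × Matrix (Fin N) (Fin N) ℂ => p.2 s r :=
    (h2 s).comp measurable_snd
  have h4 := Finset.measurable_fun_sum Finset.univ fun s _ => (h1 s).mul (h3 s)
  exact h4

theorem measurable_mul_left_matrix (g : Matrix (Fin N) (Fin N) ℂ) :
    Measurable fun u : Matrix (Fin N) (Fin N) ℂ => g * u := by
  refine measurable_pi_lambda _ fun r => measurable_pi_lambda _ fun a => ?_
  have h : ∀ s, Measurable fun u : Matrix (Fin N) (Fin N) ℂ => u s a := fun s =>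
    (measurable_pi_apply a).comp (measurable_pi_apply s)
  have h2 : Measurable fun u : Matrix (Fin N) (Fin N) ℂ => ∑ s, g r s * u s a :=
    Finset.measurable_fun_sum _ fun s _ => (h s).const_mul _
  simpa only [Matrix.mul_apply] using h2

theorem measurable_blockGram_rows (hdN : d ≤ N) (b : Fin N → Fin (n + 1)) :
    Measurable fun u (j : Fin n) => blockGram b (rows hdN u) j.castSucc := by
  refine measurable_pi_lambda _ fun j => ?_
  have h := (measurable_blockGram (d := d) b).comp (measurable_rows hdN)
  exact (measurable_pi_apply j.castSucc).comp h

/-- Averaging over the group: the law of the block Gram matrices of the first rows of a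
random special unitary matrix is a constant multiple of the law of the normalized block Gram
matrices under a restriction of Lebesgue measure. -/
theorem lintegral_rows_mul (hdN : d < N) (b : Fin N → Fin (n + 1))
    (μ : Measure (Matrix (Fin N) (Fin N) ℂ)) [IsProbabilityMeasure μ]
    (hsupp : μ {u | u ∉ Matrix.specialUnitaryGroup (Fin N) ℂ} = 0)
    (hinv : ∀ g ∈ Matrix.specialUnitaryGroup (Fin N) ℂ, Measure.map (fun u => g * u) μ = μ)
    {Φ : (Fin n → HermCoord d) → ENNReal} (hΦ : Measurable Φ)
    {h : HermCoord d → ENNReal} (hh : Measurable h) :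
    (∫⁻ X : Fin N → Fin d → ℂ, h (gram X)) *
        ∫⁻ u, Φ (fun j => blockGram b (rows hdN.le u) j.castSucc) ∂μ =
      ∫⁻ X : Fin N → Fin d → ℂ, Φ (normalize (blockGram b X)) * h (gram X) := by
  have hU : ∀ᵐ u ∂μ, u * uᴴ = 1 := by
    filter_upwards [show ∀ᵐ u ∂μ, u ∈ Matrix.specialUnitaryGroup (Fin N) ℂ from hsupp] with u hu
    exact mem_unitaryGroup_iff.1 (mem_specialUnitaryGroup_iff.1 hu).1
  set F : (Fin N → Fin d → ℂ) → ENNReal :=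
    fun X => Φ (normalize (blockGram b X)) * h (gram X) with hF
  have hFm : Measurable F := by
    have m1 := measurable_normalize.comp (measurable_blockGram (d := d) b)
    have m2 := hΦ.comp m1
    exact m2.mul (hh.comp measurable_gram)
  set Ψ : (Fin N → Fin d → ℂ) → ENNReal :=
    fun X => Φ (fun j => blockGram b X j.castSucc) with hΨ
  have hΨm : Measurable Ψ := by
    refine hΦ.comp (measurable_pi_lambda _ fun j => ?_)
    exact (measurable_pi_apply j.castSucc).comp (measurable_blockGram b)
  have hkey : ∀ X : Fin N → Fin d → ℂ, gram X ∈ pdSet d →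
      ∫⁻ u, F (rmul u X) ∂μ = h (gram X) * ∫⁻ u, Ψ (rows hdN.le u) ∂μ := by
    intro X hX
    obtain ⟨g, hg, hgr⟩ := exists_specialUnitary_rows_eq hdN hX
    have hΨr : Measurable fun u => Ψ (rows hdN.le u) := hΨm.comp (measurable_rows hdN.le)
    have hΨg : Measurable fun u => Ψ (rows hdN.le (g * u)) :=
      hΨr.comp (measurable_mul_left_matrix g)
    have h1 : ∫⁻ u, Ψ (rows hdN.le u) ∂μ = ∫⁻ u, Ψ (rows hdN.le (g * u)) ∂μ := by
      conv_lhs => rw [← hinv g hg]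
      exact lintegral_map hΨr (measurable_mul_left_matrix g)
    rw [h1, ← lintegral_const_mul _ hΨg]
    refine lintegral_congr_ae ?_
    filter_upwards [hU] with u hu
    simp only [hF, hΨ]
    rw [gram_rmul hu, mul_comm]
    congr 2
    funext j
    rw [normalize_blockGram, gram_rmul hu, rows_mul, hgr, rmul_lmul]
  have hpd : ∀ᵐ X : Fin N → Fin d → ℂ, gram X ∈ pdSet d := by
    filter_upwards [ae_posDef_gramMat (d := d) (κ := Fin N) (by simpa using hdN.le)] with X hX
    rw [pdSet, Set.mem_ofPred_eq, toMat_gram]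
    exact hX
  have hhg : Measurable fun X : Fin N → Fin d → ℂ => h (gram X) := hh.comp measurable_gram
  calc (∫⁻ X : Fin N → Fin d → ℂ, h (gram X)) * ∫⁻ u, Ψ (rows hdN.le u) ∂μ
      = ∫⁻ X : Fin N → Fin d → ℂ, ∫⁻ u, F (rmul u X) ∂μ := by
        rw [← lintegral_mul_const _ hhg]
        refine lintegral_congr_ae ?_
        filter_upwards [hpd] with X hX
        exact (hkey X hX).symm
    _ = ∫⁻ u, (∫⁻ X : Fin N → Fin d → ℂ, F (rmul u X)) ∂μ := by
        refine lintegral_lintegral_swap (Measurable.aemeasurable ?_)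
        exact hFm.comp measurable_rmul_uncurry
    _ = ∫⁻ _, (∫⁻ X : Fin N → Fin d → ℂ, F X) ∂μ := by
        refine lintegral_congr_ae ?_
        filter_upwards [hU] with u hu
        exact lintegral_comp_rmul hu hFm
    _ = ∫⁻ X, F X := by simp

end

section

variable {d : ℕ} {n : ℕ} {N : ℕ}

/-- The law of the block Gram matrices of the first `d` rows of a Haar distributed special
unitary matrix. -/
theorem exists_map_blockGram_rows_eq (hdN : d < N) (b : Fin N → Fin (n + 1))
    (k : Fin (n + 1) → ℤ) (hk : ∀ i, k i = Fintype.card {r // b r = i} - d) (hk0 : ∀ i, 0 ≤ k i)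
    (μ : Measure (Matrix (Fin N) (Fin N) ℂ)) [IsProbabilityMeasure μ]
    (hsupp : μ {u | u ∉ Matrix.specialUnitaryGroup (Fin N) ℂ} = 0)
    (hinv : ∀ g ∈ Matrix.specialUnitaryGroup (Fin N) ℂ, Measure.map (fun u => g * u) μ = μ) :
    ∃ C : ENNReal, C ≠ 0 ∧ C ≠ ⊤ ∧
      μ.map (fun u (j : Fin n) => blockGram b (rows hdN.le u) j.castSucc) =
        C • (volume : Measure (Fin n → HermCoord d)).withDensity (simplexDensity k) := by
  obtain ⟨c, hc⟩ := exists_map_gram_blocks (d := d) b fun i => by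
    have := hk i; have := hk0 i; omega
  simp only [← hk] at hc
  have hBm : MeasurableSet (Metric.closedBall (0 : HermCoord d) 1) := measurableSet_closedBall
  set h : HermCoord d → ENNReal := (Metric.closedBall 0 1).indicator 1 with hh
  have hhm : Measurable h := measurable_one.indicator hBm
  obtain ⟨c', hc'⟩ := exists_lintegral_normalize_eq (n := n) k hhm
  set V : ENNReal := ∫⁻ X : Fin N → Fin d → ℂ, h (gram X) with hV
  have hVeq : V = volume ((gram : (Fin N → Fin d → ℂ) → HermCoord d) ⁻¹'
      Metric.closedBall 0 1) := by
    rw [← lintegral_indicator_one (measurable_gram hBm)]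
    rfl
  have hV0 : V ≠ 0 := hVeq ▸ volume_gram_preimage_pos.ne'
  have hVt : V ≠ ⊤ := hVeq ▸ (volume_gram_preimage_lt_top 1).ne
  have hint : ∀ Φ : (Fin n → HermCoord d) → ENNReal, Measurable Φ →
      ∫⁻ u, Φ (fun j => blockGram b (rows hdN.le u) j.castSucc) ∂μ =
        V⁻¹ * (c * c') * ∫⁻ z, Φ z * simplexDensity k z := by
    intro Φ hΦ
    have h1 := lintegral_rows_mul hdN b μ hsupp hinv hΦ hhm
    have hG : Measurable fun A : Fin (n + 1) → HermCoord d =>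
        Φ (normalize A) * h (∑ i, A i) := by
      have m1 : Measurable fun A : Fin (n + 1) → HermCoord d => ∑ i, A i :=
        Finset.measurable_fun_sum _ fun j _ => measurable_pi_apply j
      exact (hΦ.comp measurable_normalize).mul (hhm.comp m1)
    have h2 : ∫⁻ X : Fin N → Fin d → ℂ, Φ (normalize (blockGram b X)) * h (gram X) =
        ∫⁻ A, Φ (normalize A) * h (∑ i, A i)
          ∂((volume : Measure (Fin N → Fin d → ℂ)).map (blockGram b)) := by
      rw [lintegral_map hG (measurable_blockGram b)]
      refine lintegral_congr fun X => ?_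
      rw [show ∑ i, blockGram b X i = gram X from sum_gram_blocks b X]
    have hc2 : (volume : Measure (Fin N → Fin d → ℂ)).map (blockGram b) =
      c • volume.withDensity fun A : Fin (n + 1) → HermCoord d => ∏ i, pdDensity (k i) (A i) := hc
    rw [h2, hc2, lintegral_smul_measure,
      lintegral_withDensity_eq_lintegral_mul _ (measurable_prod_pdDensity k) hG] at h1
    have h3 := hc' Φ hΦ
    simp only [Pi.mul_apply] at h1
    rw [h3, smul_eq_mul, ← hV] at h1
    rw [mul_assoc, mul_assoc, ← h1, ← mul_assoc, ENNReal.inv_mul_cancel hV0 hVt, one_mul]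
  have hone : 1 = V⁻¹ * (c * c') * ∫⁻ z : Fin n → HermCoord d, simplexDensity k z := by
    have := hint (fun _ => 1) measurable_const
    simpa only [lintegral_const, measure_univ, one_mul] using this
  have hZ := measurable_blockGram_rows (d := d) hdN.le b
  refine ⟨V⁻¹ * (c * c'), ?_, ?_, ?_⟩
  · intro h0
    rw [h0, zero_mul] at hone
    exact one_ne_zero hone
  · intro ht
    rw [ht] at hone
    by_cases hs : ∫⁻ z : Fin n → HermCoord d, simplexDensity k z = 0
    · rw [hs, mul_zero] at hone
      exact one_ne_zero hone
    · rw [ENNReal.top_mul hs] at hone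
      exact ENNReal.one_ne_top hone
  · refine Measure.ext fun s hs => ?_
    rw [← lintegral_indicator_one hs, lintegral_map (measurable_one.indicator hs) hZ,
      hint _ (measurable_one.indicator hs), Measure.smul_apply, withDensity_apply _ hs,
      smul_eq_mul, ← lintegral_indicator hs]
    congr 1
    refine lintegral_congr fun z => ?_
    by_cases hz : z ∈ s <;> simp [hz]

theorem ae_one_sub_sum_posSemidef_iff (hn : 1 ≤ n) : ∀ᵐ z : Fin n → HermCoord d,
    (toMat (ofMat 1 - ∑ j, z j)).PosSemidef ↔ ofMat 1 - ∑ j, z j ∈ pdSet d := by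
  set L : (Fin n → HermCoord d) →ₗ[ℝ] HermCoord d := ∑ j, LinearMap.proj j with hL
  have hLa : ∀ z, L z = ∑ j, z j := fun z => by simp [hL]
  have hs : Function.Surjective L := fun y =>
    ⟨Pi.single ⟨0, hn⟩ y, by rw [hLa, Finset.sum_pi_single']; simp⟩
  set s : Set (HermCoord d) :=
    {y | (toMat (ofMat 1 - y)).PosSemidef ↔ ofMat 1 - y ∈ pdSet d} with hsdef
  have hpsd : MeasurableSet {x : HermCoord d | (toMat x).PosSemidef} :=
    isClosed_posSemidef.measurableSet
  have hsub : Measurable fun y : HermCoord d => ofMat 1 - y := measurable_const.sub measurable_id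
  have hsm : MeasurableSet s := (hsub hpsd).iff (hsub measurableSet_pdSet)
  have h1 : ∀ᵐ y : HermCoord d, y ∈ s :=
    (Measure.measurePreserving_sub_left volume (ofMat 1 : HermCoord d)).quasiMeasurePreserving.ae
      ae_posSemidef_iff
  have h2 := (ae_comp_linearMap_mem_iff L volume volume hs hsm).2 h1
  filter_upwards [h2] with z hz
  rw [hLa] at hz
  exact hz

theorem ae_posSemidef_iff_pi : ∀ᵐ z : Fin n → HermCoord d,
    ∀ j, (toMat (z j)).PosSemidef ↔ z j ∈ pdSet d :=
  ae_all_iff.2 fun j => (Measure.quasiMeasurePreserving_eval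
    (μ := fun _ : Fin n => (volume : Measure (HermCoord d))) j).ae ae_posSemidef_iff

theorem ae_const_mul_simplexDensity_eq (hn : 1 ≤ n) {C : ENNReal} (hC : C ≠ ⊤)
    (k : Fin (n + 1) → ℕ) : ∀ᵐ z : Fin n → HermCoord d,
    C * simplexDensity (fun i => (k i : ℤ)) z = ENNReal.ofReal
      (if (∀ j, (toMat (z j)).PosSemidef) ∧ (1 - ∑ j, toMat (z j)).PosSemidef then
        C.toReal * (∏ j : Fin n, (toMat (z j)).det.re ^ k j.castSucc) *
          (1 - ∑ j, toMat (z j)).det.re ^ k (Fin.last n)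
      else 0) := by
  filter_upwards [ae_posSemidef_iff_pi, ae_one_sub_sum_posSemidef_iff hn] with z hz hz'
  have hsub : toMat (ofMat 1 - ∑ j, z j) = 1 - ∑ j, toMat (z j) := by
    rw [map_sub, map_sum, toMat_ofMat isHermitian_one]
  rw [← hsub]
  simp only [hz, hz', simplexDensity]
  split_ifs with h
  · obtain ⟨h1, h2⟩ := h
    have e : ∀ (m : ℕ) {x : HermCoord d}, x ∈ pdSet d →
        pdDensity m x = ENNReal.ofReal ((toMat x).det.re ^ m) := fun m x hx => by
      rw [pdDensity, Set.indicator_of_mem hx, zpow_natCast, hdet]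
    have hnn : ∀ j, 0 ≤ (toMat (z j)).det.re := fun j => (hdet_pos (h1 j)).le
    rw [e _ h2, Finset.prod_congr rfl fun j _ => e _ (h1 j),
      ENNReal.ofReal_mul (mul_nonneg ENNReal.toReal_nonneg
        (Finset.prod_nonneg fun j _ => pow_nonneg (hnn j) _)),
      ENNReal.ofReal_mul ENNReal.toReal_nonneg, ENNReal.ofReal_toReal hC,
      ENNReal.ofReal_prod_of_nonneg fun j _ => pow_nonneg (hnn j) _, mul_assoc]
  · rw [ENNReal.ofReal_zero]
    by_cases h2 : ofMat 1 - ∑ j, z j ∈ pdSet d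
    · obtain ⟨j, hj⟩ : ∃ j, z j ∉ pdSet d := by
        by_contra! h1
        exact h ⟨h1, h2⟩
      rw [Finset.prod_eq_zero (Finset.mem_univ j) (pdDensity_of_notMem _ hj), zero_mul, mul_zero]
    · rw [pdDensity_of_notMem _ h2, mul_zero, mul_zero]

/-- Joining the coordinates of the matrices of a tuple into one vector. -/
def joinCoord (z : Fin n → HermCoord d) : herdIdx15 n d → ℝ := fun p => z p.1 p.2

theorem measurePreserving_joinCoord :
    MeasurePreserving (joinCoord : (Fin n → HermCoord d) → herdIdx15 n d → ℝ) := by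
  have hm : Measurable (joinCoord : (Fin n → HermCoord d) → herdIdx15 n d → ℝ) :=
    measurable_pi_lambda _ fun p => (measurable_pi_apply p.2).comp (measurable_pi_apply p.1)
  refine ⟨hm, (Measure.pi_eq fun s hs => ?_).symm⟩
  rw [Measure.map_apply hm (MeasurableSet.univ_pi hs)]
  have hpre : (joinCoord : (Fin n → HermCoord d) → herdIdx15 n d → ℝ) ⁻¹' Set.univ.pi s =
      Set.univ.pi fun i => Set.univ.pi fun j => s (i, j) := by
    ext z
    simp only [Set.mem_preimage, Set.mem_pi, Set.mem_univ, true_imp_iff]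
    exact ⟨fun h i j => h (i, j), fun h p => h p.1 p.2⟩
  rw [hpre, volume_pi_pi]
  simp only [volume_pi_pi]
  exact (Fintype.prod_prod_type fun p : Fin n × HermIdx d => volume (s p)).symm

/-- `joinCoord` as a measurable equivalence. -/
def joinCoordEquiv : (Fin n → HermCoord d) ≃ᵐ (herdIdx15 n d → ℝ) where
  toFun := joinCoord
  invFun x i j := x (i, j)
  left_inv _ := rfl
  right_inv _ := rfl
  measurable_toFun := measurePreserving_joinCoord.measurable
  measurable_invFun := measurable_pi_lambda _ fun i => measurable_pi_lambda _ fun j =>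
    measurable_pi_apply (i, j)

theorem coordMap15_eq_joinCoord (Z : Fin n → Matrix (Fin d) (Fin d) ℂ) :
    coordMap15 Z = joinCoord fun k => ofMat (Z k) := by
  funext ⟨k, idx⟩
  rcases idx with p | ⟨⟨⟨p, q⟩, h⟩, _ | _⟩ <;> rfl

theorem extractZ15_eq_gramMat {ι : Type*} [DecidableEq ι] (hdN : d ≤ N) (b : Fin N → ι)
    (I : Finset (Fin N)) (i : ι) (hI : ∀ r, r ∈ I ↔ b r = i) (u : Matrix (Fin N) (Fin N) ℂ) :
    extractZ15 d hdN I u = gramMat fun r : {r // b r = i} => rows hdN u r := by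
  ext p q
  simp only [extractZ15, gramMat, Matrix.of_apply, rows]
  rw [← Finset.sum_subtype I hI fun r => u (Fin.castLE hdN p) r * star (u (Fin.castLE hdN q) r)]

end

end MatrixDirichlet

open MatrixDirichlet

/-- The pushforward of the Haar probability measure on `SU(N)` under the
matrix-extracting procedure is the matrix Dirichlet measure
`D_{(d_1-d+1,…,d_{n+1}-d+1)}` on the complex matrix simplex `Δ_{n,d}`. -/
theorem stmt_15 (n d : ℕ) (hn : 1 ≤ n) (hd : 1 ≤ d)
    (dd : Fin (n + 1) → ℕ) (hdd : ∀ i, d ≤ dd i)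
    (N : ℕ) (hN : N = ∑ i, dd i) (hdN : d ≤ N)
    (I : Fin (n + 1) → Finset (Fin N))
    (hdisj : ∀ i j, i ≠ j → Disjoint (I i) (I j))
    (hcover : ∀ r, ∃ i, r ∈ I i)
    (hcard : ∀ i, (I i).card = dd i)
    (μ : Measure (Matrix (Fin N) (Fin N) ℂ)) [IsProbabilityMeasure μ]
    (hsupp : μ {u | u ∉ Matrix.specialUnitaryGroup (Fin N) ℂ} = 0)
    (hinv : ∀ g ∈ Matrix.specialUnitaryGroup (Fin N) ℂ,
      Measure.map (fun u => g * u) μ = μ ∧ Measure.map (fun u => u * g) μ = μ) :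
    ∃ C : ℝ, 0 < C ∧
      Measure.map (fun u => coordMap15 (fun k => extractZ15 d hdN (I k.castSucc) u)) μ
        = volume.withDensity (fun x : herdIdx15 n d → ℝ =>
            ENNReal.ofReal
              (if (∀ k : Fin n, (recon15 x k).PosSemidef)
                  ∧ (1 - ∑ k : Fin n, recon15 x k).PosSemidef then
                C * (∏ k : Fin n, (recon15 x k).det.re ^ (dd k.castSucc - d))
                  * (1 - ∑ k : Fin n, recon15 x k).det.re ^ (dd (Fin.last n) - d)
              else 0)) := by
  choose b hb using hcover
  have hI : ∀ i r, r ∈ I i ↔ b r = i := fun i r =>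
    ⟨fun hr => by_contra fun hne =>
      Finset.disjoint_left.1 (hdisj _ _ hne) (hb r) hr, fun h => h ▸ hb r⟩
  have hbcard : ∀ i, Fintype.card {r // b r = i} = dd i := fun i => by
    rw [← hcard i, Fintype.card_of_subtype (I i) (hI i)]
  have hdltN : d < N := by
    have h0 : dd 0 + dd (Fin.last n) ≤ ∑ i, dd i := by
      rw [Fin.sum_univ_castSucc]
      exact Nat.add_le_add_right (Finset.single_le_sum
        (f := fun i : Fin n => dd i.castSucc) (fun _ _ => Nat.zero_le _)
        (Finset.mem_univ ⟨0, hn⟩)) _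
    have h1 := hdd 0
    have h2 := hdd (Fin.last n)
    omega
  obtain ⟨C, hC0, hCt, hmap⟩ := exists_map_blockGram_rows_eq (n := n) hdltN b
    (fun i => ((dd i - d : ℕ) : ℤ)) (fun i => by rw [hbcard, Nat.cast_sub (hdd i)])
    (fun i => Int.natCast_nonneg _) μ hsupp fun g hg => (hinv g hg).1
  refine ⟨C.toReal, ENNReal.toReal_pos hC0 hCt, ?_⟩
  have hfun : (fun u => coordMap15 (fun k => extractZ15 d hdN (I k.castSucc) u)) =
      joinCoord ∘ fun u (j : Fin n) => blockGram b (rows hdltN.le u) j.castSucc := by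
    funext u
    rw [coordMap15_eq_joinCoord, Function.comp_apply]
    congr 1
    funext k
    rw [extractZ15_eq_gramMat hdN b _ k.castSucc (hI k.castSucc)]
    rfl
  have hZ := measurable_blockGram_rows (d := d) hdltN.le b
  have hdens := ae_const_mul_simplexDensity_eq (d := d) hn hCt fun i => dd i - d
  change C • simplexDensity (fun i => ((dd i - d : ℕ) : ℤ)) =ᵐ[volume] _ at hdens
  rw [hfun, ← Measure.map_map measurePreserving_joinCoord.measurable hZ, hmap,
    ← withDensity_smul _ (measurable_simplexDensity _), withDensity_congr_ae hdens]
  refine Measure.ext fun s hs => ?_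
  have hs' := measurePreserving_joinCoord.measurable hs
  rw [Measure.map_apply measurePreserving_joinCoord.measurable hs, withDensity_apply _ hs,
    withDensity_apply _ hs', ← measurePreserving_joinCoord.setLIntegral_comp_preimage_emb
      joinCoordEquiv.measurableEmbedding]
  rfl
end

section
/- Let d ≥ 1 and let a be a real number with a > d − 1. Parametrize d×d Hermitian complex matrices by their real diagonal entries x ∈ ℝ^d and their strictly upper-triangular entries z ∈ ℂ^{d(d−1)/2}, writing H(x,z) for the Hermitian matrix with H_{pp} = x_p and H_{pq} = z_{pq}, H_{qp} = conj(z_{pq}) for p < q. Then ∫ over the set {(x,z) : H(x,z) is positive definite} of det(H(x,z))^{a−1} · e^{−trace(H(x,z))} with respect to Lebesgue measure on ℝ^d × ℂ^{d(d−1)/2} ≅ ℝ^{d²} equals π^{d(d−1)/2} · Π_{i=1}^d Γ(a + d − i), where det(H) and trace(H) are real and positive on positive definite Hermitian matrices. -/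
open Finset Matrix MeasureTheory ComplexOrder

/-- The Hermitian matrix with diagonal `x` and above-diagonal entries `z`. -/
noncomputable def Hmat19 (d : ℕ) (x : Fin d → ℝ)
    (z : {pq : Fin d × Fin d // pq.1 < pq.2} → ℂ) : Matrix (Fin d) (Fin d) ℂ :=
  Matrix.of fun p q =>
    if h : p < q then z ⟨(p, q), h⟩
    else if h' : q < p then star (z ⟨(q, p), h'⟩)
    else (x p : ℂ)

open scoped ENNReal

namespace MatrixGamma

/-- Index pairs strictly above the diagonal. -/
abbrev UpperIndex (d : ℕ) : Type := {pq : Fin d × Fin d // pq.1 < pq.2}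

/-- Real coordinates of Hermitian `d × d` matrices: diagonal and strictly upper part. -/
abbrev Coord (d : ℕ) : Type := (Fin d → ℝ) × (UpperIndex d → ℂ)

/-- The gamma integrand, extended by zero outside the positive definite cone. -/
noncomputable def integrand (d : ℕ) (a : ℝ) : Coord d → ℝ≥0∞ :=
  {y : Coord d | (Hmat19 d y.1 y.2).PosDef}.indicator fun y =>
    ENNReal.ofReal ((Hmat19 d y.1 y.2).det.re ^ (a - 1)
      * Real.exp (-(Hmat19 d y.1 y.2).trace.re))

lemma posDef_iff_posSemidef_and_det_ne_zero {n : Type*} [Fintype n] [DecidableEq n]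
    {A : Matrix n n ℂ} : A.PosDef ↔ A.PosSemidef ∧ A.det ≠ 0 :=
  ⟨fun h => ⟨h.posSemidef, h.posSemidef.posDef_iff_det_ne_zero.1 h⟩,
    fun h => h.1.posDef_iff_det_ne_zero.2 h.2⟩

lemma posDef_submatrix_equiv {m n : Type*} {A : Matrix n n ℂ} (e : m ≃ n) :
    (A.submatrix e e).PosDef ↔ A.PosDef :=
  ⟨fun h => by simpa using h.submatrix e.symm.injective, fun h => h.submatrix e.injective⟩

lemma continuous_Hmat19 (d : ℕ) : Continuous fun y : Coord d => Hmat19 d y.1 y.2 := by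
  refine continuous_matrix fun p q => ?_
  simp only [Hmat19, Matrix.of_apply]
  split_ifs <;> fun_prop

lemma isHermitian_Hmat19 {d : ℕ} (y : Coord d) : (Hmat19 d y.1 y.2).IsHermitian := by
  ext p q
  rcases lt_trichotomy p q with h | rfl | h <;>
    simp [Hmat19, Matrix.conjTranspose_apply, *, not_lt_of_gt]

lemma measurableSet_posDef (d : ℕ) :
    MeasurableSet {y : Coord d | (Hmat19 d y.1 y.2).PosDef} := by
  have hH := continuous_Hmat19 d
  have hpsd : IsClosed {y : Coord d | (Hmat19 d y.1 y.2).PosSemidef} := by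
    simp only [Matrix.posSemidef_iff_dotProduct_mulVec, isHermitian_Hmat19, true_and,
      Set.ofPred_forall]
    exact isClosed_iInter fun v => isClosed_le continuous_const
      (continuous_const.dotProduct (hH.matrix_mulVec continuous_const))
  have hdet : IsOpen {y : Coord d | (Hmat19 d y.1 y.2).det ≠ 0} :=
    isOpen_ne_fun hH.matrix_det continuous_const
  simp only [posDef_iff_posSemidef_and_det_ne_zero]
  exact hpsd.measurableSet.inter hdet.measurableSet

lemma measurable_density (d : ℕ) (a : ℝ) : Measurable fun y : Coord d =>
    (Hmat19 d y.1 y.2).det.re ^ (a - 1) * Real.exp (-(Hmat19 d y.1 y.2).trace.re) := by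
  have hdet := (Complex.continuous_re.comp (continuous_Hmat19 d).matrix_det).measurable
  have htr := (Complex.continuous_re.comp (continuous_Hmat19 d).matrix_trace).measurable
  exact (hdet.pow_const _).mul htr.neg.exp

lemma measurable_integrand (d : ℕ) (a : ℝ) : Measurable (integrand d a) :=
  (measurable_density d a).ennreal_ofReal.indicator (measurableSet_posDef d)

/-- Splitting off the first row of the strictly upper triangular index pairs. -/
def upperIndexMap (d : ℕ) : Fin d ⊕ UpperIndex d → UpperIndex (d + 1) :=
  Sum.elim (fun j => ⟨(0, j.succ), Fin.succ_pos j⟩)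
    fun pq => ⟨(pq.1.1.succ, pq.1.2.succ), Fin.succ_lt_succ_iff.2 pq.2⟩

lemma bijective_upperIndexMap (d : ℕ) : Function.Bijective (upperIndexMap d) := by
  constructor
  · rintro (i | ⟨⟨i, j⟩, h⟩) (k | ⟨⟨k, l⟩, h'⟩) <;>
      simp [upperIndexMap, Fin.succ_ne_zero, (Fin.succ_ne_zero _).symm]
  · rintro ⟨⟨p, q⟩, h⟩
    obtain ⟨q, rfl⟩ := Fin.exists_succ_eq.2 (Fin.ne_zero_of_lt h)
    cases p using Fin.cases with
    | zero => exact ⟨.inl q, rfl⟩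
    | succ p => exact ⟨.inr ⟨(p, q), Fin.succ_lt_succ_iff.1 h⟩, rfl⟩

/-- Index pairs for size `d + 1` are those of the first row and those of the lower block. -/
noncomputable def upperIndexEquiv (d : ℕ) : Fin d ⊕ UpperIndex d ≃ UpperIndex (d + 1) :=
  Equiv.ofBijective _ (bijective_upperIndexMap d)

/-- Assemble the strictly upper part from its first row and the lower block. -/
noncomputable def glueUpper (d : ℕ) (wz : (Fin d → ℂ) × (UpperIndex d → ℂ)) :
    UpperIndex (d + 1) → ℂ :=
  fun pq => Sum.elim wz.1 wz.2 ((upperIndexEquiv d).symm pq)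

@[simp]
lemma glueUpper_zero_succ {d : ℕ} (wz : (Fin d → ℂ) × (UpperIndex d → ℂ)) (j : Fin d)
    (h : 0 < j.succ) : glueUpper d wz ⟨(0, j.succ), h⟩ = wz.1 j := by
  have : (upperIndexEquiv d).symm ⟨(0, j.succ), h⟩ = .inl j :=
    (Equiv.symm_apply_eq _).2 rfl
  simp [glueUpper, this]

@[simp]
lemma glueUpper_succ_succ {d : ℕ} (wz : (Fin d → ℂ) × (UpperIndex d → ℂ)) (i j : Fin d)
    (h : i.succ < j.succ) :
    glueUpper d wz ⟨(i.succ, j.succ), h⟩ = wz.2 ⟨(i, j), Fin.succ_lt_succ_iff.1 h⟩ := by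
  have : (upperIndexEquiv d).symm ⟨(i.succ, j.succ), h⟩
      = .inr ⟨(i, j), Fin.succ_lt_succ_iff.1 h⟩ :=
    (Equiv.symm_apply_eq _).2 rfl
  simp [glueUpper, this]

lemma measurePreserving_glueUpper (d : ℕ) : MeasurePreserving (glueUpper d) := by
  have h := (volume_measurePreserving_piCongrLeft (fun _ => ℂ) (upperIndexEquiv d)).comp
    (volume_measurePreserving_sumPiEquivProdPi_symm fun _ : Fin d ⊕ UpperIndex d => ℂ)
  convert! h using 1
  funext wz pq
  obtain ⟨i, rfl⟩ := (upperIndexEquiv d).surjective pq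
  rw [Function.comp_apply, MeasurableEquiv.coe_piCongrLeft, Equiv.piCongrLeft_apply_apply]
  rcases i with i | i <;> simp [glueUpper] <;> rfl

lemma measurePreserving_cons (d : ℕ) : MeasurePreserving
    (fun tx : ℝ × (Fin d → ℝ) => (Fin.cons tx.1 tx.2 : Fin (d + 1) → ℝ)) := by
  convert! (volume_preserving_piFinSuccAbove (fun _ : Fin (d + 1) => ℝ) 0).symm using 1
  funext tx
  simp [MeasurableEquiv.piFinSuccAbove_symm_apply, Fin.insertNthEquiv]

/-- Coordinates of the `(d + 1) × (d + 1)` matrix with corner `t`, first row `w` and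
lower block `y`. -/
noncomputable def glue {d : ℕ} (t : ℝ) (w : Fin d → ℂ) (y : Coord d) : Coord (d + 1) :=
  (Fin.cons t y.1, glueUpper d (w, y.2))

/-- Coordinates of the rank one matrix `wᴴ w / t`. -/
noncomputable def rankOne {d : ℕ} (t : ℝ) (w : Fin d → ℂ) : Coord d :=
  (fun i => ‖w i‖ ^ 2 / t, fun pq => star (w pq.1.1) * w pq.1.2 / t)

/-- The index splitting `Unit ⊕ Fin d ≃ Fin (d + 1)`. -/
def blockEquiv (d : ℕ) : Unit ⊕ Fin d ≃ Fin (d + 1) :=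
  (Equiv.sumComm _ _).trans ((Equiv.optionEquivSumPUnit _).symm.trans (finSuccEquiv d).symm)

@[simp]
lemma blockEquiv_inl {d : ℕ} (u : Unit) : blockEquiv d (.inl u) = 0 := by
  simp [blockEquiv]

@[simp]
lemma blockEquiv_inr {d : ℕ} (i : Fin d) : blockEquiv d (.inr i) = i.succ := by
  simp [blockEquiv]

lemma Hmat19_glue {d : ℕ} (t : ℝ) (w : Fin d → ℂ) (y : Coord d) :
    (Hmat19 (d + 1) (glue t w y).1 (glue t w y).2).submatrix (blockEquiv d) (blockEquiv d)
      = fromBlocks (diagonal fun _ : Unit => (t : ℂ)) (replicateRow Unit w)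
          (replicateRow Unit w)ᴴ (Hmat19 d y.1 y.2) := by
  ext (i | i) (j | j)
  · simp [Hmat19, glue]
  · simp [Hmat19, glue]
  · simp [Hmat19, glue]
  · simp [Hmat19, glue]

lemma Hmat19_sub_rankOne {d : ℕ} (t : ℝ) (w : Fin d → ℂ) (y : Coord d) :
    Hmat19 d (y - rankOne t w).1 (y - rankOne t w).2 = Hmat19 d y.1 y.2
      - (replicateRow Unit w)ᴴ * (diagonal fun _ : Unit => (t : ℂ))⁻¹ * replicateRow Unit w := by
  ext i j
  have key : ((replicateRow Unit w)ᴴ * (diagonal fun _ : Unit => (t : ℂ))⁻¹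
      * replicateRow Unit w) i j = star (w i) * w j / t := by
    simp [Matrix.mul_apply, Ring.inverse_eq_inv', div_eq_mul_inv]
    ring
  rw [Matrix.sub_apply, key]
  rcases lt_trichotomy i j with h | rfl | h
  · simp [Hmat19, rankOne, h]
  · simp [Hmat19, rankOne, Complex.conj_mul']
  · simp [Hmat19, rankOne, h, not_lt_of_gt h, mul_comm]

lemma det_glue {d : ℕ} {t : ℝ} (ht : t ≠ 0) (w : Fin d → ℂ) (y : Coord d) :
    (Hmat19 (d + 1) (glue t w y).1 (glue t w y).2).det
      = t * (Hmat19 d (y - rankOne t w).1 (y - rankOne t w).2).det := by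
  have hdet : (diagonal fun _ : Unit => (t : ℂ)).det = t := by simp
  let _ : Invertible (diagonal fun _ : Unit => (t : ℂ)) :=
    invertibleOfIsUnitDet _ (by rw [hdet]; simpa using ht)
  rw [← det_submatrix_equiv_self (blockEquiv d), Hmat19_glue, det_fromBlocks₁₁, hdet,
    Hmat19_sub_rankOne, invOf_eq_nonsing_inv]

lemma posDef_glue {d : ℕ} (t : ℝ) (w : Fin d → ℂ) (y : Coord d) :
    (Hmat19 (d + 1) (glue t w y).1 (glue t w y).2).PosDef
      ↔ 0 < t ∧ (Hmat19 d (y - rankOne t w).1 (y - rankOne t w).2).PosDef := by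
  by_cases ht : 0 < t
  · have hD : (diagonal fun _ : Unit => (t : ℂ)).PosDef :=
      posDef_diagonal_iff.2 fun _ => by simpa using ht
    let _ := hD.isUnit.invertible
    rw [posDef_iff_posSemidef_and_det_ne_zero, posDef_iff_posSemidef_and_det_ne_zero,
      det_glue ht.ne', ← posSemidef_submatrix_equiv (blockEquiv d), Hmat19_glue,
      PosDef.fromBlocks₁₁ _ _ hD, Hmat19_sub_rankOne]
    simp [ht, ht.ne']
  · refine iff_of_false (fun h => ht ?_) fun h => ht h.1
    simpa [Hmat19, glue] using h.diag_pos (i := 0)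

lemma trace_Hmat19_re {d : ℕ} (y : Coord d) : (Hmat19 d y.1 y.2).trace.re = ∑ i, y.1 i := by
  simp [Matrix.trace, Hmat19]

lemma trace_glue_re {d : ℕ} (t : ℝ) (w : Fin d → ℂ) (y : Coord d) :
    (Hmat19 (d + 1) (glue t w y).1 (glue t w y).2).trace.re
      = t + (∑ i, ‖w i‖ ^ 2 / t)
        + (Hmat19 d (y - rankOne t w).1 (y - rankOne t w).2).trace.re := by
  rw [trace_Hmat19_re, trace_Hmat19_re]
  simp [glue, rankOne, Fin.sum_univ_succ]

lemma integrand_glue {d : ℕ} (a t : ℝ) (w : Fin d → ℂ) (y : Coord d) :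
    integrand (d + 1) a (glue t w y) = (Set.Ioi (0 : ℝ)).indicator
        (fun t => ENNReal.ofReal (t ^ (a - 1) * Real.exp (-t))) t
      * ENNReal.ofReal (∏ i, Real.exp (-(1 / t) * ‖w i‖ ^ 2))
      * integrand d a (y - rankOne t w) := by
  by_cases ht : 0 < t
  swap
  · simp [integrand, posDef_glue, ht]
  by_cases hy : (Hmat19 d (y - rankOne t w).1 (y - rankOne t w).2).PosDef
  swap
  · simp only [integrand, Set.indicator, Set.mem_ofPred_eq, posDef_glue, hy, and_false, if_false,
      mul_zero]
  have hdet : 0 ≤ (Hmat19 d (y - rankOne t w).1 (y - rankOne t w).2).det.re :=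
    (Complex.le_def.1 hy.posSemidef.det_nonneg).1
  simp only [integrand, Set.indicator, Set.mem_ofPred_eq, posDef_glue, hy, and_true, ht, if_true,
    Set.mem_Ioi, det_glue ht.ne', trace_glue_re]
  rw [← ENNReal.ofReal_mul (by positivity), ← ENNReal.ofReal_mul (by positivity),
    Complex.re_ofReal_mul, Real.mul_rpow ht.le hdet, ← Real.exp_sum]
  congr 1
  rw [neg_add, neg_add, Real.exp_add, Real.exp_add]
  have : ∑ i, -(1 / t) * ‖w i‖ ^ 2 = -∑ i, ‖w i‖ ^ 2 / t := by
    rw [← Finset.sum_neg_distrib]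
    exact Finset.sum_congr rfl fun i _ => by ring
  rw [this]
  ring

lemma lintegral_prod_exp_neg_norm_sq (d : ℕ) {t : ℝ} (ht : 0 < t) :
    ∫⁻ w : Fin d → ℂ, ENNReal.ofReal (∏ i, Real.exp (-(1 / t) * ‖w i‖ ^ 2))
      = ENNReal.ofReal ((Real.pi * t) ^ d) := by
  have hI : ∫ z : ℂ, Real.exp (-(1 / t) * ‖z‖ ^ 2) = Real.pi * t := by
    have h := Complex.integral_exp_neg_mul_rpow (p := 2) (b := 1 / t) (by norm_num) (by positivity)
    norm_num [Real.rpow_neg, ht.le, Real.rpow_neg_one] at h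
    simpa using h
  have hint : Integrable fun z : ℂ => Real.exp (-(1 / t) * ‖z‖ ^ 2) :=
    Integrable.of_integral_ne_zero (by rw [hI]; positivity)
  have hprod : Integrable fun w : Fin d → ℂ => ∏ i, Real.exp (-(1 / t) * ‖w i‖ ^ 2) :=
    Integrable.fintype_prod fun _ => hint
  rw [← ofReal_integral_eq_lintegral_ofReal hprod
    (.of_forall fun w => by positivity)]
  congr 1
  rw [← hI]
  rw [integral_fintype_prod_volume_eq_pow (fun z : ℂ => Real.exp (-(1 / t) * ‖z‖ ^ 2)),
    Fintype.card_fin]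

lemma lintegral_rpow_mul_exp_neg (d : ℕ) {a : ℝ} (ha : 0 < a) :
    ∫⁻ t in Set.Ioi (0 : ℝ), ENNReal.ofReal (t ^ (a - 1) * Real.exp (-t))
        * ENNReal.ofReal ((Real.pi * t) ^ d)
      = ENNReal.ofReal (Real.pi ^ d * Real.Gamma (a + d)) := by
  have hs : 0 < a + d := by positivity
  rw [Real.Gamma_eq_integral hs, ← integral_const_mul, ofReal_integral_eq_lintegral_ofReal
    ((Real.GammaIntegral_convergent hs).const_mul _)]
  · refine setLIntegral_congr_fun measurableSet_Ioi fun t (ht : 0 < t) => ?_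
    rw [← ENNReal.ofReal_mul (by positivity), add_sub_right_comm, Real.rpow_add ht,
      Real.rpow_natCast]
    ring_nf
  · filter_upwards [ae_restrict_mem measurableSet_Ioi] with t (ht : 0 < t)
    simp only [Pi.zero_apply]
    positivity

lemma measurable_glue (d : ℕ) :
    Measurable fun p : (ℝ × (Fin d → ℝ)) × ((Fin d → ℂ) × (UpperIndex d → ℂ)) =>
      glue p.1.1 p.2.1 (p.1.2, p.2.2) :=
  ((measurePreserving_cons d).measurable.comp measurable_fst).prodMk
    ((measurePreserving_glueUpper d).measurable.comp measurable_snd)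

lemma lintegral_glue (d : ℕ) {F : Coord (d + 1) → ℝ≥0∞} (hF : Measurable F) :
    ∫⁻ y, F y = ∫⁻ t : ℝ, ∫⁻ w : Fin d → ℂ, ∫⁻ y : Coord d, F (glue t w y) := by
  have hG : Measurable fun p : (ℝ × (Fin d → ℝ)) × ((Fin d → ℂ) × (UpperIndex d → ℂ)) =>
      F (glue p.1.1 p.2.1 (p.1.2, p.2.2)) := hF.comp (measurable_glue d)
  have h1 : ∫⁻ y, F y = ∫⁻ p : (ℝ × (Fin d → ℝ)) × ((Fin d → ℂ) × (UpperIndex d → ℂ)),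
      F (glue p.1.1 p.2.1 (p.1.2, p.2.2)) :=
    (((measurePreserving_cons d).prod (measurePreserving_glueUpper d)).lintegral_comp hF).symm
  rw [h1, Measure.volume_eq_prod, lintegral_prod _ hG.aemeasurable, Measure.volume_eq_prod,
    lintegral_prod _ (Measurable.lintegral_prod_right hG).aemeasurable]
  refine lintegral_congr fun t => ?_
  have hx (x : Fin d → ℝ) : ∫⁻ q : (Fin d → ℂ) × (UpperIndex d → ℂ), F (glue t q.1 (x, q.2))
      = ∫⁻ w, ∫⁻ z, F (glue t w (x, z)) := by
    rw [Measure.volume_eq_prod, lintegral_prod]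
    exact (hG.comp (measurable_prodMk_left (x := (t, x)))).aemeasurable
  simp only [hx]
  have h3 : Measurable fun q : ((Fin d → ℝ) × (Fin d → ℂ)) × (UpperIndex d → ℂ) =>
      F (glue t q.1.2 (q.1.1, q.2)) :=
    hG.comp (f := fun q : ((Fin d → ℝ) × (Fin d → ℂ)) × (UpperIndex d → ℂ) =>
      ((t, q.1.1), (q.1.2, q.2))) (by fun_prop)
  rw [lintegral_lintegral_swap (Measurable.lintegral_prod_right h3).aemeasurable]
  refine lintegral_congr fun w => ?_
  rw [Measure.volume_eq_prod, lintegral_prod]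
  exact (h3.comp (f := fun q : (Fin d → ℝ) × (UpperIndex d → ℂ) => ((q.1, w), q.2))
    (by fun_prop)).aemeasurable

lemma lintegral_integrand_succ (d : ℕ) {a : ℝ} (ha : 0 < a) :
    ∫⁻ y, integrand (d + 1) a y
      = ENNReal.ofReal (Real.pi ^ d * Real.Gamma (a + d)) * ∫⁻ y, integrand d a y := by
  rw [lintegral_glue d (measurable_integrand _ a), ← lintegral_rpow_mul_exp_neg d ha,
    ← lintegral_indicator measurableSet_Ioi, ← lintegral_mul_const _ (by
      refine Measurable.indicator ?_ measurableSet_Ioi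
      fun_prop)]
  refine lintegral_congr fun t => ?_
  have hw (w : Fin d → ℂ) : ∫⁻ y : Coord d, integrand (d + 1) a (glue t w y)
      = (Set.Ioi (0 : ℝ)).indicator
          (fun t => ENNReal.ofReal (t ^ (a - 1) * Real.exp (-t))) t
        * ENNReal.ofReal (∏ i, Real.exp (-(1 / t) * ‖w i‖ ^ 2)) * ∫⁻ y, integrand d a y := by
    simp only [integrand_glue]
    have hm : Measurable fun y : Coord d => integrand d a (y - rankOne t w) :=
      (measurable_integrand d a).comp (measurable_id.sub_const _)
    have : (volume : Measure (Coord d)).IsAddLeftInvariant :=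
      Measure.prod.instIsAddLeftInvariant
    rw [lintegral_const_mul _ hm, lintegral_sub_right_eq_self]
  simp only [hw]
  rw [lintegral_mul_const _ (by fun_prop), lintegral_const_mul _ (by fun_prop)]
  by_cases ht : 0 < t
  · rw [lintegral_prod_exp_neg_norm_sq d ht]
    simp [ht]
  · simp [ht]

lemma lintegral_integrand (d : ℕ) {a : ℝ} (ha : 0 < a) :
    ∫⁻ y, integrand d a y = ENNReal.ofReal (Real.pi ^ (d * (d - 1) / 2)
      * ∏ i : Fin d, Real.Gamma (a + d - ((i : ℕ) + 1))) := by
  induction d with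
  | zero =>
    have h (y : Coord 0) : integrand 0 a y = 1 := by
      have : (Hmat19 0 y.1 y.2).PosDef := by
        rw [Subsingleton.elim (Hmat19 0 y.1 y.2) 1]
        exact .one
      simp [integrand, this]
    have : IsEmpty (UpperIndex 0) := ⟨fun pq => pq.1.1.elim0⟩
    simp [h, Measure.volume_eq_prod, ← Set.univ_prod_univ, Measure.prod_prod, volume_pi]
  | succ d ih =>
    rw [lintegral_integrand_succ d ha, ih, ← ENNReal.ofReal_mul (by positivity)]
    congr 1
    rw [Nat.triangle_succ, pow_add, Fin.prod_univ_succ]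
    have h0 : a + ((d + 1 : ℕ) : ℝ) - (((0 : Fin (d + 1)) : ℕ) + 1) = a + d := by
      push_cast; simp; ring
    have hs (i : Fin d) : a + ((d + 1 : ℕ) : ℝ) - ((i.succ : ℕ) + 1) = a + d - ((i : ℕ) + 1) := by
      push_cast [Fin.val_succ]; ring
    simp only [h0, hs]
    ring

end MatrixGamma

open MatrixGamma in
/-- The complex matrix gamma function identity:
`∫_{H > 0} det(H)^{a-1} e^{-trace H} dH = π^{d(d-1)/2} Π_{i=1}^d Γ(a + d - i)`,
where the integral is over positive definite Hermitian matrices parametrized by their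
real diagonal and strictly upper-triangular entries. -/
theorem stmt_19 (d : ℕ) (hd : 1 ≤ d) (a : ℝ) (ha : (d : ℝ) - 1 < a) :
    ∫ xz in {xz : (Fin d → ℝ) × ({pq : Fin d × Fin d // pq.1 < pq.2} → ℂ) |
        (Hmat19 d xz.1 xz.2).PosDef},
      (Hmat19 d xz.1 xz.2).det.re ^ (a - 1)
        * Real.exp (-(Hmat19 d xz.1 xz.2).trace.re)
      = Real.pi ^ (d * (d - 1) / 2)
        * ∏ i : Fin d, Real.Gamma (a + d - ((i : ℕ) + 1)) := by
  have ha0 : 0 < a := by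
    have : (1 : ℝ) ≤ d := by exact_mod_cast hd
    linarith
  have hnonneg : 0 ≤ Real.pi ^ (d * (d - 1) / 2)
      * ∏ i : Fin d, Real.Gamma (a + d - ((i : ℕ) + 1)) := by
    refine mul_nonneg (by positivity) (Finset.prod_nonneg fun i _ => Real.Gamma_nonneg_of_nonneg ?_)
    have : ((i : ℕ) : ℝ) + 1 ≤ d := by exact_mod_cast i.2
    linarith
  rw [integral_eq_lintegral_of_nonneg_ae _ (measurable_density d a).aestronglyMeasurable,
    ← lintegral_indicator (measurableSet_posDef d)]
  · rw [← ENNReal.toReal_ofReal hnonneg, ← lintegral_integrand d ha0]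
    rfl
  · filter_upwards [ae_restrict_mem (measurableSet_posDef d)] with y hy
    exact mul_nonneg (Real.rpow_nonneg (Complex.le_def.1 hy.posSemidef.det_nonneg).1 _)
      (Real.exp_pos _).le
end
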